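/- arXiv:1904.05051 — 4 statements merged into one kernel-verified Lean document; each statement's English description precedes it below -/
import Mathlib

section
/- Let r be an even positive integer. For H ≥ 1 let 𝒫₂(2,r,H) denote the set of separable polynomials in ℤ[T] of degree exactly r, with squarefree content and height at most H, and similarly 𝒫₂(2,r−1,H) in degree r−1. Then there exists a constant α(r) > 0 such that, as H → ∞: (i) |𝒫₂(2,r,H)| ∼ α(r)·H^{r+1}; (ii) |𝒫₂(2,r,H)| + |𝒫₂(2,r−1,H)| ∼ α(r)·H^{r+1}; and (iii) |𝒫₂(2,r−1,H)| / (|𝒫₂(2,r,H)| + |𝒫₂(2,r−1,H)|) = O(1/H). -/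
/-!
An integer polynomial of degree at most `r` is a vector in `ℤ^(r+1)`, and its content is the gcd of
the entries. Since `∑_{d² ∣ c} μ(d)` is the indicator of squarefree `c`, the number of vectors of
length `n`, height at most `H` and squarefree gcd is `∑_d μ(d) ((2⌊H/d²⌋ + 1)^n - 1)`. Divided by
`H^n` this tends, by dominated convergence, to `∑_d μ(d) (2/d²)^n = 2^n/ζ(2n)`.

For `n = r + 1`, all but `O(H^r)` of these vectors give separable polynomials of degree exactly
`r`: few have vanishing leading coefficient, and once the coefficients other than the constant one
are fixed, `c + Q` is inseparable only if `-c` is one of the boundedly many critical values of `Q`.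
There are also only `O(H^r)` polynomials of degree `r - 1`.
-/

open Polynomial Filter Asymptotics

/-- `𝒫₂(2,N,H)`: separable integer polynomials of degree exactly `N`, with squarefree
content and height at most `H`. -/
def P2Exact (N H : ℕ) : Set (Polynomial ℤ) :=
  {P | P.natDegree = N ∧ P ≠ 0 ∧ (P.map (Int.castRingHom ℚ)).Separable ∧
    Squarefree P.content ∧ ∀ i, |P.coeff i| ≤ (H : ℤ)}

open scoped ArithmeticFunction.Moebius Topology

/-! ### Möbius sums -/

theorem sq_dvd_sq_mul_iff_of_squarefree {a b d : ℕ} (ha : Squarefree a) :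
    d ^ 2 ∣ b ^ 2 * a ↔ d ∣ b := by
  refine ⟨fun h => ?_, fun h => (pow_dvd_pow_of_dvd h 2).mul_right a⟩
  obtain ⟨d', b', hcoprime, hd, hb⟩ := Nat.exists_coprime d b
  generalize Nat.gcd d b = g at hd hb
  subst hd hb
  rcases g.eq_zero_or_pos with rfl | hg
  · simp only [mul_zero, dvd_refl]
  have h' : d' ^ 2 ∣ b' ^ 2 * a := by
    rw [mul_pow, mul_pow, mul_right_comm] at h
    exact Nat.dvd_of_mul_dvd_mul_right (pow_pos hg 2) h
  have hunit : IsUnit d' := ha d' (sq d' ▸ (hcoprime.pow 2 2).dvd_of_dvd_mul_left h')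
  rw [Nat.isUnit_iff.1 hunit, one_mul]
  exact dvd_mul_left g b'

theorem sum_moebius_sq_dvd {c : ℕ} (hc : c ≠ 0) {s : Finset ℕ} (hs : ∀ d, d ^ 2 ∣ c → d ∈ s) :
    ∑ d ∈ s with d ^ 2 ∣ c, μ d = if Squarefree c then 1 else 0 := by
  obtain ⟨a, b, rfl, ha⟩ := Nat.sq_mul_squarefree c
  have hb : b ≠ 0 := by
    rintro rfl
    simp at hc
  have hdivisors : {d ∈ s | d ^ 2 ∣ b ^ 2 * a} = b.divisors := by
    ext d
    rw [Finset.mem_filter, and_iff_right_of_imp (hs d), sq_dvd_sq_mul_iff_of_squarefree ha,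
      Nat.mem_divisors, and_iff_left hb]
  have hsquarefree : b = 1 ↔ Squarefree (b ^ 2 * a) := by
    refine ⟨by rintro rfl; simpa using ha, fun h => ?_⟩
    exact Nat.isUnit_iff.1 (h b (sq b ▸ dvd_mul_right _ a))
  rw [hdivisors, ← ArithmeticFunction.coe_mul_zeta_apply, ArithmeticFunction.moebius_mul_coe_zeta,
    ArithmeticFunction.one_apply]
  exact if_congr hsquarefree rfl rfl

theorem tsum_moebius_div_pow {k : ℕ} (hk : 1 < k) :
    ∑' d : ℕ, (μ d : ℝ) / (d : ℝ) ^ k = 1 / (riemannZeta k).re := by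
  have hk' : 1 < (k : ℂ).re := by simpa using hk
  have hzeta : riemannZeta k = ((riemannZeta k).re : ℂ) :=
    Complex.ext rfl (riemannZeta_im_eq_zero_of_one_lt (x := k) (by exact_mod_cast hk))
  have hLSeries : LSeries (fun d => μ d) k = ∑' d : ℕ, (μ d : ℂ) / (d : ℂ) ^ k := by
    refine tsum_congr fun d => ?_
    rcases eq_or_ne d 0 with rfl | hd
    · simp
    · rw [LSeries.term_of_ne_zero hd, Complex.cpow_natCast]
  have hinv := ArithmeticFunction.LSeries_zeta_mul_Lseries_moebius hk'
  rw [ArithmeticFunction.LSeries_zeta_eq_riemannZeta hk', hLSeries] at hinv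
  rw [← Complex.ofReal_inj]
  push_cast
  rw [← hzeta, eq_one_div_of_mul_eq_one_right hinv]

/-! ### Vectors with squarefree gcd -/

theorem natCast_dvd_natAbs_gcd_iff {ι : Type*} [Fintype ι] {v : ι → ℤ} {m : ℕ} :
    m ∣ (Finset.univ.gcd v).natAbs ↔ ∀ i, (m : ℤ) ∣ v i := by
  simp only [← Int.natCast_dvd, Finset.dvd_gcd_iff, Finset.mem_univ, true_imp_iff]

theorem gcd_univ_eq_zero_iff {ι : Type*} [Fintype ι] {v : ι → ℤ} :
    Finset.univ.gcd v = 0 ↔ v = 0 := by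
  simp only [Finset.gcd_eq_zero_iff, Finset.mem_univ, true_imp_iff, funext_iff, Pi.zero_apply]

/-- The integer vectors indexed by `ι` of height at most `H`, over which all counts are made. -/
noncomputable def heightBox (ι : Type*) [Fintype ι] [DecidableEq ι] (H : ℕ) : Finset (ι → ℤ) :=
  Fintype.piFinset fun _ => Finset.Icc (-(H : ℤ)) H

open scoped Classical in
/-- The vectors of height at most `H` whose entries have squarefree greatest common divisor;
for coefficient vectors this is the content. The zero vector, of gcd `0`, is not among them. -/
noncomputable def squarefreeGcdBox (ι : Type*) [Fintype ι] [DecidableEq ι] (H : ℕ) :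
    Finset (ι → ℤ) :=
  {v ∈ heightBox ι H | Squarefree (Finset.univ.gcd v)}

section Box

variable {ι : Type*} [Fintype ι] [DecidableEq ι]

theorem mem_heightBox {H : ℕ} {v : ι → ℤ} : v ∈ heightBox ι H ↔ ∀ i, |v i| ≤ (H : ℤ) := by
  simp only [heightBox, Fintype.mem_piFinset, Finset.mem_Icc, abs_le]

theorem mem_squarefreeGcdBox {H : ℕ} {v : ι → ℤ} :
    v ∈ squarefreeGcdBox ι H ↔ v ∈ heightBox ι H ∧ Squarefree (Finset.univ.gcd v) := by
  classical
  exact Finset.mem_filter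

theorem zero_mem_heightBox (H : ℕ) : (0 : ι → ℤ) ∈ heightBox ι H := by
  simp [mem_heightBox]

theorem card_Icc_neg_self (H : ℕ) : (Finset.Icc (-(H : ℤ)) H).card = 2 * H + 1 := by
  rw [Int.card_Icc]
  lia

variable (ι) in
theorem card_heightBox (H : ℕ) : (heightBox ι H).card = (2 * H + 1) ^ Fintype.card ι := by
  rw [heightBox, Fintype.card_piFinset, Finset.prod_const, Finset.card_univ, card_Icc_neg_self]

theorem card_filter_heightBox_eq_zero (H : ℕ) (i : ι) :
    {v ∈ heightBox ι H | v i = 0}.card = (2 * H + 1) ^ (Fintype.card ι - 1) := by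
  rw [heightBox, Fintype.card_filter_piFinset_const_eq_of_mem _ _ (by simp), card_Icc_neg_self]

theorem card_filter_dvd_Icc_neg_self (H m : ℕ) :
    {x ∈ Finset.Icc (-(H : ℤ)) H | (m : ℤ) ∣ x}.card = 2 * (H / m) + 1 := by
  rcases m.eq_zero_or_pos with rfl | hm
  · simp [Finset.filter_eq']
  have hm' : (0 : ℤ) < m := by exact_mod_cast hm
  have himage : {x ∈ Finset.Icc (-(H : ℤ)) H | (m : ℤ) ∣ x} =
      (Finset.Icc (-((H / m : ℕ) : ℤ)) (H / m : ℕ)).image ((m : ℤ) * ·) := by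
    ext x
    simp only [Finset.mem_filter, Finset.mem_image, Finset.mem_Icc, ← abs_le]
    constructor
    · rintro ⟨hx, y, rfl⟩
      refine ⟨y, ?_, rfl⟩
      rw [abs_mul, Nat.abs_cast, mul_comm] at hx
      exact (Int.le_ediv_iff_mul_le hm').2 hx
    · rintro ⟨y, hy, rfl⟩
      refine ⟨?_, dvd_mul_right _ y⟩
      rw [abs_mul, Nat.abs_cast, mul_comm]
      exact (Int.le_ediv_iff_mul_le hm').1 hy
  rw [himage, Finset.card_image_of_injective _ (mul_right_injective₀ hm'.ne'), card_Icc_neg_self]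

variable (ι) in
theorem card_filter_dvd_heightBox (H m : ℕ) :
    {v ∈ heightBox ι H | ∀ i, (m : ℤ) ∣ v i}.card = (2 * (H / m) + 1) ^ Fintype.card ι := by
  have hpi : {v ∈ heightBox ι H | ∀ i, (m : ℤ) ∣ v i} =
      Fintype.piFinset fun _ => {x ∈ Finset.Icc (-(H : ℤ)) H | (m : ℤ) ∣ x} := by
    ext v
    simp only [heightBox, Finset.mem_filter, Fintype.mem_piFinset, forall_and]
  rw [hpi, Fintype.card_piFinset, Finset.prod_const, Finset.card_univ, card_filter_dvd_Icc_neg_self]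

theorem natAbs_gcd_le_of_mem_heightBox {H : ℕ} {v : ι → ℤ} (hv : v ∈ heightBox ι H) (hv0 : v ≠ 0) :
    (Finset.univ.gcd v).natAbs ≤ H := by
  obtain ⟨i, hi⟩ := Function.ne_iff.1 hv0
  calc (Finset.univ.gcd v).natAbs
      ≤ (v i).natAbs := Int.natAbs_le_of_dvd_ne_zero (Finset.gcd_dvd (Finset.mem_univ i)) hi
    _ ≤ H := by exact_mod_cast Int.abs_eq_natAbs (v i) ▸ mem_heightBox.1 hv i

theorem ne_zero_of_mem_squarefreeGcdBox {H : ℕ} {v : ι → ℤ} (hv : v ∈ squarefreeGcdBox ι H) :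
    v ≠ 0 := by
  rw [Ne, ← gcd_univ_eq_zero_iff]
  exact (mem_squarefreeGcdBox.1 hv).2.ne_zero

open scoped Classical in
theorem sum_moebius_sq_dvd_of_mem_heightBox {H : ℕ} {v : ι → ℤ} (hv : v ∈ heightBox ι H)
    (hv0 : v ≠ 0) :
    ∑ d ∈ Finset.range (H + 1) with ∀ i, ((d ^ 2 : ℕ) : ℤ) ∣ v i, μ d =
      if Squarefree (Finset.univ.gcd v) then 1 else 0 := by
  have hgcd : (Finset.univ.gcd v).natAbs ≠ 0 := by
    rwa [Int.natAbs_ne_zero, Ne, gcd_univ_eq_zero_iff]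
  have hrange : ∀ d, d ^ 2 ∣ (Finset.univ.gcd v).natAbs → d ∈ Finset.range (H + 1) := fun d hd =>
    Finset.mem_range_succ_iff.2 <| (Nat.le_self_pow two_ne_zero d).trans <|
      (Nat.le_of_dvd (Nat.pos_of_ne_zero hgcd) hd).trans (natAbs_gcd_le_of_mem_heightBox hv hv0)
  simpa only [natCast_dvd_natAbs_gcd_iff, Int.squarefree_natAbs] using
    sum_moebius_sq_dvd hgcd hrange

variable (ι) in
theorem card_squarefreeGcdBox (H : ℕ) :
    ((squarefreeGcdBox ι H).card : ℤ) = ∑ d ∈ Finset.range (H + 1),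
      μ d * ((2 * ((H / d ^ 2 : ℕ) : ℤ) + 1) ^ Fintype.card ι - 1) := by
  classical
  have herase : squarefreeGcdBox ι H =
      {v ∈ (heightBox ι H).erase 0 | Squarefree (Finset.univ.gcd v)} := by
    ext v
    have h0 := ne_zero_of_mem_squarefreeGcdBox (H := H) (v := v)
    simp only [mem_squarefreeGcdBox, Finset.mem_filter, Finset.mem_erase] at h0 ⊢
    tauto
  calc ((squarefreeGcdBox ι H).card : ℤ)
      = ∑ v ∈ (heightBox ι H).erase 0, if Squarefree (Finset.univ.gcd v) then 1 else 0 := by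
        rw [herase, Finset.card_filter, Nat.cast_sum]
        simp only [Nat.cast_ite, Nat.cast_one, Nat.cast_zero]
    _ = ∑ v ∈ (heightBox ι H).erase 0,
          ∑ d ∈ Finset.range (H + 1) with ∀ i, ((d ^ 2 : ℕ) : ℤ) ∣ v i, μ d :=
        Finset.sum_congr rfl fun v hv => (sum_moebius_sq_dvd_of_mem_heightBox
          (Finset.mem_of_mem_erase hv) (Finset.ne_of_mem_erase hv)).symm
    _ = ∑ d ∈ Finset.range (H + 1),
          μ d * {v ∈ (heightBox ι H).erase 0 | ∀ i, ((d ^ 2 : ℕ) : ℤ) ∣ v i}.card := by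
        simp only [Finset.sum_filter]
        rw [Finset.sum_comm]
        simp only [← Finset.sum_filter, Finset.sum_const, nsmul_eq_mul, mul_comm]
    _ = _ := by
        refine Finset.sum_congr rfl fun d _ => ?_
        rw [Finset.filter_erase, Finset.cast_card_erase_of_mem
          (Finset.mem_filter.2 ⟨zero_mem_heightBox H, fun _ => dvd_zero _⟩),
          card_filter_dvd_heightBox]
        push_cast
        rfl

end Box

/-- The number of integer vectors of length `n`, height at most `H` and squarefree gcd is
asymptotic to this multiple of `H ^ n`; the `α(r)` of the paper is its value at `n = r + 1`. -/
noncomputable def squarefreeGcdConstant (n : ℕ) : ℝ :=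
  2 ^ n / (riemannZeta (2 * n : ℕ)).re

theorem squarefreeGcdConstant_pos {n : ℕ} (hn : n ≠ 0) : 0 < squarefreeGcdConstant n := by
  have hzeta := riemannZeta_re_pos_of_one_lt (x := (2 * n : ℕ)) (by norm_cast; lia)
  rw [Complex.ofReal_natCast] at hzeta
  exact div_pos (by positivity) hzeta

theorem tendsto_card_multiples_div_pow {n : ℕ} (hn : n ≠ 0) (m : ℕ) :
    Tendsto (fun H : ℕ => ((2 * ((H / m : ℕ) : ℝ) + 1) ^ n - 1) / (H : ℝ) ^ n) atTop
      (𝓝 ((2 / (m : ℝ)) ^ n)) := by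
  have hdiv : Tendsto (fun H : ℕ => ((H / m : ℕ) : ℝ) / (H : ℝ)) atTop (𝓝 (1 / m)) := by
    refine ((tendsto_nat_floor_mul_div_atTop (R := ℝ) (a := 1 / m) (by positivity)).comp
      tendsto_natCast_atTop_atTop).congr fun H => ?_
    rw [Function.comp_apply, one_div_mul_eq_div, Nat.floor_div_eq_div]
  have hinv : Tendsto (fun H : ℕ => 1 / (H : ℝ)) atTop (𝓝 0) :=
    tendsto_one_div_atTop_nhds_zero_nat
  have hlim := (((hdiv.const_mul 2).add hinv).pow n).sub (hinv.pow n)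
  rw [zero_pow hn, add_zero, sub_zero, mul_one_div] at hlim
  refine hlim.congr fun H => ?_
  rw [← mul_div_assoc, ← add_div, div_pow, div_pow, one_pow, ← sub_div]

theorem card_multiples_div_pow_le (n m H : ℕ) :
    ((2 * ((H / m : ℕ) : ℝ) + 1) ^ n - 1) / (H : ℝ) ^ n ≤ (3 / (m : ℝ)) ^ n := by
  rcases (H / m).eq_zero_or_pos with hq | hq
  · simp only [hq, Nat.cast_zero, mul_zero, zero_add, one_pow, sub_self, zero_div]
    positivity
  have hq1 : (1 : ℝ) ≤ (H / m : ℕ) := by exact_mod_cast hq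
  have hq2 : ((H / m : ℕ) : ℝ) ≤ H / m := Nat.cast_div_le
  refine div_le_of_le_mul₀ (by positivity) (by positivity) ?_
  calc (2 * ((H / m : ℕ) : ℝ) + 1) ^ n - 1
      ≤ (2 * ((H / m : ℕ) : ℝ) + 1) ^ n := sub_le_self _ zero_le_one
    _ ≤ (3 * (H / m)) ^ n := by gcongr; linarith
    _ = (3 / m) ^ n * H ^ n := by rw [← mul_pow]; ring

theorem tsum_moebius_mul_two_div_sq_pow {n : ℕ} (hn : n ≠ 0) :
    ∑' d : ℕ, (μ d : ℝ) * (2 / ((d ^ 2 : ℕ) : ℝ)) ^ n = squarefreeGcdConstant n :=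
  calc ∑' d : ℕ, (μ d : ℝ) * (2 / ((d ^ 2 : ℕ) : ℝ)) ^ n
      = ∑' d : ℕ, 2 ^ n * ((μ d : ℝ) / (d : ℝ) ^ (2 * n)) :=
        tsum_congr fun d => by rw [Nat.cast_pow, div_pow, ← pow_mul, mul_div_left_comm]
    _ = squarefreeGcdConstant n := by
        rw [tsum_mul_left, tsum_moebius_div_pow (by lia), mul_one_div, squarefreeGcdConstant]

theorem summable_div_sq_pow (a : ℝ) {n : ℕ} (hn : n ≠ 0) :
    Summable fun d : ℕ => (a / ((d ^ 2 : ℕ) : ℝ)) ^ n := by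
  refine ((Real.summable_one_div_nat_pow.2 (by lia : 1 < 2 * n)).mul_left (a ^ n)).congr fun d => ?_
  rw [Nat.cast_pow, div_pow, ← pow_mul, mul_one_div]

theorem tendsto_tsum_moebius_mul_card_multiples {n : ℕ} (hn : n ≠ 0) :
    Tendsto (fun H : ℕ => ∑' d : ℕ,
        (μ d : ℝ) * (((2 * ((H / d ^ 2 : ℕ) : ℝ) + 1) ^ n - 1) / (H : ℝ) ^ n)) atTop
      (𝓝 (squarefreeGcdConstant n)) := by
  rw [← tsum_moebius_mul_two_div_sq_pow hn]
  refine tendsto_tsum_of_dominated_convergence (summable_div_sq_pow 3 hn)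
    (fun d => (tendsto_card_multiples_div_pow hn (d ^ 2)).const_mul _)
    (.of_forall fun H d => ?_)
  have hmoebius : ‖((μ d : ℤ) : ℝ)‖ ≤ 1 := by
    rw [Real.norm_eq_abs]
    exact_mod_cast ArithmeticFunction.abs_moebius_le_one (n := d)
  have hnonneg : 0 ≤ ((2 * ((H / d ^ 2 : ℕ) : ℝ) + 1) ^ n - 1) / (H : ℝ) ^ n :=
    div_nonneg (sub_nonneg.2 (one_le_pow₀ (le_add_of_nonneg_left (by positivity))))
      (by positivity)
  rw [norm_mul, Real.norm_of_nonneg hnonneg]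
  exact (mul_le_of_le_one_left hnonneg hmoebius).trans (card_multiples_div_pow_le n (d ^ 2) H)

section

variable (ι : Type*) [Fintype ι] [DecidableEq ι]

theorem card_squarefreeGcdBox_div_pow (H : ℕ) :
    ((squarefreeGcdBox ι H).card : ℝ) / (H : ℝ) ^ Fintype.card ι =
      ∑' d : ℕ, (μ d : ℝ) * (((2 * ((H / d ^ 2 : ℕ) : ℝ) + 1) ^ Fintype.card ι - 1) /
        (H : ℝ) ^ Fintype.card ι) := by
  have hcard : ((squarefreeGcdBox ι H).card : ℝ) = ∑ d ∈ Finset.range (H + 1),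
      (μ d : ℝ) * ((2 * ((H / d ^ 2 : ℕ) : ℝ) + 1) ^ Fintype.card ι - 1) := by
    exact_mod_cast congrArg (Int.cast : ℤ → ℝ) (card_squarefreeGcdBox ι H)
  rw [hcard, Finset.sum_div, tsum_eq_sum (s := Finset.range (H + 1))]
  · simp only [mul_div_assoc]
  · intro d hd
    have hlt : H < d ^ 2 :=
      (not_le.1 fun h => hd (Finset.mem_range_succ_iff.2 h)).trans_le
        (Nat.le_self_pow two_ne_zero d)
    simp [Nat.div_eq_of_lt hlt]

theorem isEquivalent_card_squarefreeGcdBox [Nonempty ι] :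
    (fun H : ℕ => ((squarefreeGcdBox ι H).card : ℝ)) ~[atTop]
      fun H : ℕ => squarefreeGcdConstant (Fintype.card ι) * (H : ℝ) ^ Fintype.card ι := by
  have hn : Fintype.card ι ≠ 0 := Fintype.card_ne_zero
  refine isEquivalent_of_tendsto_one ?_
  rw [← div_self (squarefreeGcdConstant_pos hn).ne']
  refine ((tendsto_tsum_moebius_mul_card_multiples hn).div_const _).congr fun H => ?_
  rw [← card_squarefreeGcdBox_div_pow, Pi.div_apply, div_div, mul_comm]

end

/-! ### Inseparable polynomials -/

theorem encard_not_separable_C_add_le {K : Type*} [Field K] {Q : K[X]} (hQ : derivative Q ≠ 0) :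
    {c : K | ¬ (C c + Q).Separable}.encard ≤ (derivative Q).natDegree := by
  let L := AlgebraicClosure K
  have hcritical : algebraMap K L '' {c : K | ¬ (C c + Q).Separable} ⊆
      (fun z => -aeval z Q) '' (derivative Q).rootSet L := by
    rintro _ ⟨c, hc, rfl⟩
    rw [Set.mem_ofPred_eq, Separable, isCoprime_iff_aeval_ne_zero_of_isAlgClosed (k := K) L] at hc
    push Not at hc
    obtain ⟨z, hz, hz'⟩ := hc
    rw [map_add, aeval_C] at hz
    rw [derivative_add, derivative_C, zero_add] at hz'
    exact ⟨z, (mem_rootSet_of_ne hQ).2 hz', neg_eq_of_add_eq_zero_left hz⟩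
  calc {c : K | ¬ (C c + Q).Separable}.encard
      = (algebraMap K L '' {c : K | ¬ (C c + Q).Separable}).encard :=
        ((algebraMap K L).injective.encard_image _).symm
    _ ≤ ((derivative Q).rootSet L).encard :=
        (Set.encard_le_encard hcritical).trans (Set.encard_image_le _ _)
    _ ≤ (derivative Q).natDegree := by
        rw [← (rootSet_finite _ L).cast_ncard_eq]
        exact_mod_cast ncard_rootSet_le _ L

theorem content_ofFn {n : ℕ} (v : Fin n → ℤ) : (ofFn n v).content = Finset.univ.gcd v := by
  refine dvd_antisymm_of_normalize_eq normalize_content Finset.normalize_gcd ?_ ?_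
  · refine Finset.dvd_gcd fun i _ => ?_
    simpa only [ofFn_coeff_eq_val_of_lt v i.isLt] using content_dvd_coeff (p := ofFn n v) i
  · rw [dvd_content_iff_C_dvd, C_dvd_iff_dvd_coeff]
    intro i
    rcases lt_or_ge i n with hi | hi
    · rw [ofFn_coeff_eq_val_of_lt v hi]
      exact Finset.gcd_dvd (Finset.mem_univ _)
    · rw [ofFn_coeff_eq_zero_of_ge v hi]
      exact dvd_zero _

theorem ofFn_succ_eq_C_add_X_mul {R : Type*} [Semiring R] [DecidableEq R] {n : ℕ}
    (v : Fin (n + 1) → R) : ofFn (n + 1) v = C (v 0) + X * ofFn n (Fin.tail v) := by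
  ext i
  rcases i with _ | i
  · simp
  rw [coeff_add, coeff_C_succ, coeff_X_mul, zero_add]
  rcases lt_or_ge i n with hi | hi
  · rw [ofFn_coeff_eq_val_of_lt _ hi, ofFn_coeff_eq_val_of_lt _ (Nat.succ_lt_succ hi)]
    rfl
  · rw [ofFn_coeff_eq_zero_of_ge _ hi, ofFn_coeff_eq_zero_of_ge _ (Nat.succ_le_succ hi)]

theorem natDegree_ofFn_succ {R : Type*} [Semiring R] [DecidableEq R] {n : ℕ}
    {v : Fin (n + 1) → R} (hv : v (Fin.last n) ≠ 0) : (ofFn (n + 1) v).natDegree = n := by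
  refine natDegree_eq_of_le_of_coeff_ne_zero
    (Nat.le_of_lt_succ (ofFn_natDegree_lt n.succ_pos v)) ?_
  rwa [ofFn_coeff_eq_val_of_lt v n.lt_succ_self]

theorem encard_not_separable_ofFn_of_tail_eq_le {n : ℕ} {w : Fin n → ℤ} (hw : w ≠ 0) :
    {v : Fin (n + 1) → ℤ | Fin.tail v = w ∧
      ¬ ((ofFn (n + 1) v).map (Int.castRingHom ℚ)).Separable}.encard ≤ n := by
  set Q : ℚ[X] := (X * ofFn n w).map (Int.castRingHom ℚ) with hQ
  have hdegree : Q.natDegree = (ofFn n w).natDegree + 1 := by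
    rw [hQ, natDegree_map_eq_of_injective Int.cast_injective, natDegree_X_mul]
    exact fun h => hw (injective_ofFn n (h.trans (map_zero _).symm))
  have hn : 1 ≤ n := Nat.one_le_iff_ne_zero.2 fun h => by subst h; exact hw (Subsingleton.elim _ _)
  have hlt := ofFn_natDegree_lt hn w
  have hderivative : derivative Q ≠ 0 := by
    rw [derivative_ne_zero]
    lia
  have hmaps : ∀ v : Fin (n + 1) → ℤ, Fin.tail v = w →
      (ofFn (n + 1) v).map (Int.castRingHom ℚ) = C (v 0 : ℚ) + Q := fun v hv => by
    rw [ofFn_succ_eq_C_add_X_mul, hv, Polynomial.map_add, map_C, eq_intCast]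
  calc _ ≤ {c : ℚ | ¬ (C c + Q).Separable}.encard := by
        refine Set.encard_le_encard_of_injOn (f := fun v => (v 0 : ℚ)) ?_ ?_
        · rintro v ⟨hv, hsep⟩
          rwa [hmaps v hv] at hsep
        · rintro v ⟨hv, -⟩ v' ⟨hv', -⟩ h
          rw [← Fin.cons_self_tail v, ← Fin.cons_self_tail v', hv, hv', Int.cast_injective h]
    _ ≤ (derivative Q).natDegree := encard_not_separable_C_add_le hderivative
    _ ≤ n := by
        have := natDegree_derivative_le Q
        exact_mod_cast (by lia : (derivative Q).natDegree ≤ n)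

open scoped Classical in
theorem card_filter_not_separable_le (n H : ℕ) :
    {v ∈ heightBox (Fin (n + 1)) H | v ≠ 0 ∧
      ¬ ((ofFn (n + 1) v).map (Int.castRingHom ℚ)).Separable}.card ≤ n * (2 * H + 1) ^ n := by
  have htail : ∀ v ∈ heightBox (Fin (n + 1)) H, v ≠ 0 →
      ¬ ((ofFn (n + 1) v).map (Int.castRingHom ℚ)).Separable →
      Fin.tail v ∈ (heightBox (Fin n) H).erase 0 := by
    intro v hv hv0 hsep
    refine Finset.mem_erase.2 ⟨fun h => hsep ?_, mem_heightBox.2 fun i => mem_heightBox.1 hv i.succ⟩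
    have hconst : v 0 ≠ 0 := fun h0 => hv0 (funext (Fin.cases h0 (congrFun h)))
    rw [ofFn_succ_eq_C_add_X_mul, h, map_zero, mul_zero, add_zero, map_C, separable_C]
    exact (Int.cast_ne_zero.2 hconst).isUnit
  calc _ ≤ n * ((heightBox (Fin n) H).erase 0).card := by
        refine Finset.card_le_mul_card_image_of_maps_to (f := Fin.tail)
          (fun v hv => ?_) n fun w hw => ?_
        · obtain ⟨hbox, hv0, hsep⟩ := Finset.mem_filter.1 hv
          exact htail v hbox hv0 hsep
        · rw [← Nat.cast_le (α := ℕ∞), ← Set.encard_coe_eq_coe_finsetCard]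
          refine (Set.encard_le_encard fun v hv => ?_).trans
            (encard_not_separable_ofFn_of_tail_eq_le (Finset.ne_of_mem_erase hw))
          simp only [Finset.coe_filter, Finset.mem_filter] at hv
          exact ⟨hv.2, hv.1.2.2⟩
    _ ≤ n * (heightBox (Fin n) H).card := by
        gcongr
        exact Finset.erase_subset _ _
    _ = n * (2 * H + 1) ^ n := by rw [card_heightBox, Fintype.card_fin]

/-! ### Separable polynomials with squarefree content -/

theorem p2Exact_eq_image (N H : ℕ) :
    P2Exact N H = ofFn (N + 1) '' {v | v ∈ squarefreeGcdBox (Fin (N + 1)) H ∧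
      v (Fin.last N) ≠ 0 ∧ ((ofFn (N + 1) v).map (Int.castRingHom ℚ)).Separable} := by
  ext P
  constructor
  · rintro ⟨hdeg, hP0, hsep, hsq, hH⟩
    have hP : ofFn (N + 1) (toFn (N + 1) P) = P :=
      ofFn_comp_toFn_eq_id_of_natDegree_lt (Nat.lt_succ_of_le hdeg.le)
    have hlast : P.coeff N ≠ 0 := hdeg ▸ leadingCoeff_ne_zero.2 hP0
    refine ⟨toFn (N + 1) P, ⟨mem_squarefreeGcdBox.2 ⟨mem_heightBox.2 fun i => hH i, ?_⟩,
      hlast, hP.symm ▸ hsep⟩, hP⟩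
    rwa [← content_ofFn, hP]
  · rintro ⟨v, ⟨hv, hlast, hsep⟩, rfl⟩
    obtain ⟨hbox, hsq⟩ := mem_squarefreeGcdBox.1 hv
    rw [← content_ofFn] at hsq
    refine ⟨natDegree_ofFn_succ hlast, fun h => ?_, hsep, hsq, fun i => ?_⟩
    · exact hsq.ne_zero (content_eq_zero_iff.2 h)
    rcases lt_or_ge i (N + 1) with hi | hi
    · rw [ofFn_coeff_eq_val_of_lt v hi]
      exact mem_heightBox.1 hbox _
    · rw [ofFn_coeff_eq_zero_of_ge v hi, abs_zero]
      exact Int.natCast_nonneg H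

open scoped Classical in
theorem ncard_p2Exact (N H : ℕ) :
    (P2Exact N H).ncard = {v ∈ squarefreeGcdBox (Fin (N + 1)) H |
      v (Fin.last N) ≠ 0 ∧ ((ofFn (N + 1) v).map (Int.castRingHom ℚ)).Separable}.card := by
  rw [p2Exact_eq_image, Set.ncard_image_of_injective _ (injective_ofFn _),
    ← Set.ncard_coe_finset, Finset.coe_filter]

theorem ncard_p2Exact_le_card_squarefreeGcdBox (N H : ℕ) :
    (P2Exact N H).ncard ≤ (squarefreeGcdBox (Fin (N + 1)) H).card := by
  classical
  rw [ncard_p2Exact]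
  exact Finset.card_filter_le _ _

theorem card_squarefreeGcdBox_le_ncard_p2Exact_add (N H : ℕ) :
    (squarefreeGcdBox (Fin (N + 1)) H).card ≤
      (P2Exact N H).ncard + (N + 1) * (2 * H + 1) ^ N := by
  classical
  set good := {v ∈ squarefreeGcdBox (Fin (N + 1)) H | v (Fin.last N) ≠ 0 ∧
    ((ofFn (N + 1) v).map (Int.castRingHom ℚ)).Separable}
  set inseparable := {v ∈ heightBox (Fin (N + 1)) H | v ≠ 0 ∧
    ¬ ((ofFn (N + 1) v).map (Int.castRingHom ℚ)).Separable}
  set lowDegree := {v ∈ heightBox (Fin (N + 1)) H | v (Fin.last N) = 0}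
  have hcover : squarefreeGcdBox (Fin (N + 1)) H ⊆ good ∪ (inseparable ∪ lowDegree) := by
    intro v hv
    have hbox := (mem_squarefreeGcdBox.1 hv).1
    have hv0 := ne_zero_of_mem_squarefreeGcdBox hv
    simp only [good, inseparable, lowDegree, Finset.mem_union, Finset.mem_filter]
    tauto
  have hlow : lowDegree.card = (2 * H + 1) ^ N := by
    rw [card_filter_heightBox_eq_zero, Fintype.card_fin, Nat.add_sub_cancel]
  calc (squarefreeGcdBox (Fin (N + 1)) H).card
      ≤ good.card + (inseparable.card + lowDegree.card) :=
        (Finset.card_le_card hcover).trans <| (Finset.card_union_le _ _).trans <|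
          Nat.add_le_add_left (Finset.card_union_le _ _) _
    _ ≤ (P2Exact N H).ncard + (N * (2 * H + 1) ^ N + (2 * H + 1) ^ N) := by
        rw [ncard_p2Exact, hlow]
        gcongr
        exact card_filter_not_separable_le N H
    _ = (P2Exact N H).ncard + (N + 1) * (2 * H + 1) ^ N := by ring

theorem isBigO_two_mul_add_one_pow (n : ℕ) :
    (fun H : ℕ => (2 * (H : ℝ) + 1) ^ n) =O[atTop] fun H : ℕ => (H : ℝ) ^ n := by
  refine IsBigO.pow (IsBigO.of_bound 3 ?_) n
  filter_upwards [eventually_ge_atTop 1] with H hH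
  have hH' : (1 : ℝ) ≤ H := by exact_mod_cast hH
  rw [Real.norm_of_nonneg (by positivity), Real.norm_of_nonneg (by positivity)]
  linarith

theorem isLittleO_natCast_pow_pow {m n : ℕ} (hmn : m < n) :
    (fun H : ℕ => (H : ℝ) ^ m) =o[atTop] fun H : ℕ => (H : ℝ) ^ n :=
  (isLittleO_pow_pow_atTop_of_lt hmn).comp_tendsto tendsto_natCast_atTop_atTop

theorem isBigO_ncard_p2Exact (N : ℕ) :
    (fun H : ℕ => ((P2Exact N H).ncard : ℝ)) =O[atTop] fun H : ℕ => (H : ℝ) ^ (N + 1) := by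
  refine IsBigO.trans (.of_norm_le fun H => ?_) (isBigO_two_mul_add_one_pow (N + 1))
  have hcard : (P2Exact N H).ncard ≤ (2 * H + 1) ^ (N + 1) := by
    classical
    calc (P2Exact N H).ncard ≤ (squarefreeGcdBox (Fin (N + 1)) H).card :=
          ncard_p2Exact_le_card_squarefreeGcdBox N H
      _ ≤ (heightBox (Fin (N + 1)) H).card := Finset.card_filter_le _ _
      _ = (2 * H + 1) ^ (N + 1) := by rw [card_heightBox, Fintype.card_fin]
  rw [Real.norm_natCast]
  exact_mod_cast hcard

theorem isBigO_card_squarefreeGcdBox_sub_ncard_p2Exact (N : ℕ) :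
    (fun H : ℕ => ((squarefreeGcdBox (Fin (N + 1)) H).card : ℝ) - (P2Exact N H).ncard)
      =O[atTop] fun H : ℕ => (H : ℝ) ^ N := by
  refine IsBigO.trans (.of_norm_le fun H => ?_)
    ((isBigO_two_mul_add_one_pow N).const_mul_left (N + 1))
  have hlower : ((P2Exact N H).ncard : ℝ) ≤ (squarefreeGcdBox (Fin (N + 1)) H).card := by
    exact_mod_cast ncard_p2Exact_le_card_squarefreeGcdBox N H
  have hupper : ((squarefreeGcdBox (Fin (N + 1)) H).card : ℝ) ≤
      (P2Exact N H).ncard + (N + 1) * (2 * H + 1) ^ N := by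
    exact_mod_cast card_squarefreeGcdBox_le_ncard_p2Exact_add N H
  rw [Real.norm_of_nonneg (sub_nonneg.2 hlower)]
  linarith

theorem isLittleO_squarefreeGcdConstant_mul_pow {m n : ℕ} (hmn : m < n) :
    (fun H : ℕ => (H : ℝ) ^ m) =o[atTop] fun H : ℕ => squarefreeGcdConstant n * (H : ℝ) ^ n :=
  (isLittleO_natCast_pow_pow hmn).const_mul_right (squarefreeGcdConstant_pos (by lia)).ne'

theorem isEquivalent_ncard_p2Exact (N : ℕ) :
    (fun H : ℕ => ((P2Exact N H).ncard : ℝ)) ~[atTop]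
      fun H : ℕ => squarefreeGcdConstant (N + 1) * (H : ℝ) ^ (N + 1) := by
  have hbox := isEquivalent_card_squarefreeGcdBox (Fin (N + 1))
  rw [Fintype.card_fin] at hbox
  refine (hbox.sub_isLittleO ((isBigO_card_squarefreeGcdBox_sub_ncard_p2Exact N).trans_isLittleO
    (isLittleO_squarefreeGcdConstant_mul_pow N.lt_succ_self))).congr_left (.of_forall fun H => ?_)
  exact sub_sub_cancel _ _

theorem stmt7_general (r : ℕ) (hr : 0 < r) :
    ((fun H : ℕ => ((P2Exact r H).ncard : ℝ)) ~[atTop]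
      fun H : ℕ => squarefreeGcdConstant (r + 1) * (H : ℝ) ^ (r + 1)) ∧
    ((fun H : ℕ => (((P2Exact r H).ncard : ℝ) + ((P2Exact (r - 1) H).ncard : ℝ))) ~[atTop]
      fun H : ℕ => squarefreeGcdConstant (r + 1) * (H : ℝ) ^ (r + 1)) ∧
    ((fun H : ℕ => ((P2Exact (r - 1) H).ncard : ℝ) /
        (((P2Exact r H).ncard : ℝ) + ((P2Exact (r - 1) H).ncard : ℝ))) =O[atTop]
      fun H : ℕ => 1 / (H : ℝ)) := by
  have hr_count := isEquivalent_ncard_p2Exact r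
  have hpred : (fun H : ℕ => ((P2Exact (r - 1) H).ncard : ℝ)) =O[atTop]
      fun H : ℕ => (H : ℝ) ^ r := by
    simpa only [Nat.sub_add_cancel hr] using isBigO_ncard_p2Exact (r - 1)
  have hsum := hr_count.add_isLittleO <|
    hpred.trans_isLittleO (isLittleO_squarefreeGcdConstant_mul_pow r.lt_succ_self)
  refine ⟨hr_count, hsum, (hpred.mul hsum.inv.isBigO).trans ?_⟩
  have hratio : ∀ᶠ H : ℕ in atTop, (squarefreeGcdConstant (r + 1))⁻¹ * (1 / (H : ℝ)) =
      (H : ℝ) ^ r * (squarefreeGcdConstant (r + 1) * (H : ℝ) ^ (r + 1))⁻¹ := by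
    filter_upwards [eventually_ne_atTop 0] with H hH
    have hH' : (H : ℝ) ≠ 0 := Nat.cast_ne_zero.2 hH
    rw [pow_succ]
    field_simp
  exact ((isBigO_refl _ _).const_mul_left _).congr' hratio .rfl

theorem stmt7 (r : ℕ) (hr : 0 < r) (hre : Even r) :
    ∃ α : ℝ, 0 < α ∧
      ((fun H : ℕ => ((P2Exact r H).ncard : ℝ)) ~[atTop]
        fun H : ℕ => α * (H : ℝ) ^ (r + 1)) ∧
      ((fun H : ℕ => (((P2Exact r H).ncard : ℝ) + ((P2Exact (r - 1) H).ncard : ℝ))) ~[atTop]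
        fun H : ℕ => α * (H : ℝ) ^ (r + 1)) ∧
      ((fun H : ℕ => ((P2Exact (r - 1) H).ncard : ℝ) /
          (((P2Exact r H).ncard : ℝ) + ((P2Exact (r - 1) H).ncard : ℝ))) =O[atTop]
        fun H : ℕ => 1 / (H : ℝ)) :=
  ⟨squarefreeGcdConstant (r + 1), squarefreeGcdConstant_pos r.succ_ne_zero, stmt7_general r hr⟩
end

section
/- Let n ≥ 2 be an integer and P(T,Y) ∈ ℤ[T][Y] be monic of degree n in Y. Suppose that the Galois group of the splitting field of P over the rational function field ℚ(T) is isomorphic to S_n, and that the discriminant of P with respect to Y, an element of ℤ[T], is irreducible over ℚ. Then the Galois group of the splitting field of P over ℚ̄(T), the rational function field over an algebraic closure ℚ̄ of ℚ, is also isomorphic to S_n (equivalently, has order n!). -/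
/-!
Let `L` be a splitting field of `P` over `ℚ̄(T)`. Restricting automorphisms to the roots embeds the
geometric group `Gal(L/ℚ̄(T))` into the group of `P` over `ℚ(T)`, which is all of `S_n`, and the
image is a normal subgroup because `ℚ̄(T)/ℚ(T)` is normal. If it consisted of even permutations, it
would fix the Vandermonde determinant `δ` of the roots, so that `δ ∈ ℚ̄(T)`; but `δ²` is the
discriminant, which is irreducible over `ℚ`, hence squarefree and nonconstant over `ℚ̄` and not a
square in `ℚ̄(T)`. A normal subgroup of `S_n` containing an odd permutation is `S_n`.
-/

open Polynomial

noncomputable section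

/-- The Sylvester matrix of `p` and `q`, viewed as polynomials of degrees `m` and `n`
respectively: the first `n` rows carry the coefficients of `p`, the last `m` rows those
of `q`. Its determinant is the resultant `Res(p,q)`. -/
def sylvesterMatrix {R : Type*} [CommRing R] (p q : Polynomial R) (m n : ℕ) :
    Matrix (Fin (m + n)) (Fin (m + n)) R :=
  Matrix.of fun i j =>
    if (i : ℕ) < n then
      if (i : ℕ) ≤ (j : ℕ) ∧ (j : ℕ) ≤ (i : ℕ) + m then
        p.coeff (m - ((j : ℕ) - (i : ℕ))) else 0
    else
      if (i : ℕ) - n ≤ (j : ℕ) ∧ (j : ℕ) ≤ ((i : ℕ) - n) + n then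
        q.coeff (n - ((j : ℕ) - ((i : ℕ) - n))) else 0

/-- The resultant of `p` (of degree `m`) and `q` (of degree `n`). -/
def resultantOf {R : Type*} [CommRing R] (p q : Polynomial R) (m n : ℕ) : R :=
  (sylvesterMatrix p q m n).det

/-- The discriminant of a monic polynomial `p` of degree `n`:
`(-1)^(n(n-1)/2)` times the resultant of `p` and its derivative. -/
def discOf {R : Type*} [CommRing R] (p : Polynomial R) (n : ℕ) : R :=
  (-1) ^ (n * (n - 1) / 2) * resultantOf p (Polynomial.derivative p) n (n - 1)

/-- `P(T,Y)` viewed as a polynomial in `Y` over `ℚ(T)`. -/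
def toQT (P : Polynomial (Polynomial ℤ)) : Polynomial (RatFunc ℚ) :=
  P.map ((algebraMap (Polynomial ℚ) (RatFunc ℚ)).comp
    (Polynomial.mapRingHom (Int.castRingHom ℚ)))

/-- `P(T,Y)` viewed as a polynomial in `Y` over `ℚ̄(T)`. -/
def toQbarT (P : Polynomial (Polynomial ℤ)) : Polynomial (RatFunc (AlgebraicClosure ℚ)) :=
  P.map ((algebraMap (Polynomial (AlgebraicClosure ℚ)) (RatFunc (AlgebraicClosure ℚ))).comp
    (Polynomial.mapRingHom (Int.castRingHom (AlgebraicClosure ℚ))))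

section Discriminant

variable {R S : Type*} [CommRing R] [CommRing S]

theorem sylvesterMatrix_eq_submatrix_transpose (p q : R[X]) (m n : ℕ) :
    sylvesterMatrix p q m n = (sylvester p q m n).transpose.submatrix Fin.revPerm Fin.revPerm := by
  ext ⟨i, hi⟩ ⟨j, hj⟩
  simp only [sylvesterMatrix, sylvester, Matrix.of_apply, Matrix.submatrix_apply,
    Matrix.transpose_apply, Fin.revPerm_apply, Fin.addCases, Set.mem_Icc, Fin.val_rev,
    Fin.val_castLT, Fin.val_subNat, Fin.val_cast, eq_rec_constant]
  by_cases hin : i < n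
  · rw [if_pos hin, dif_neg (by omega)]
    by_cases hij : i ≤ j ∧ j ≤ i + m
    · rw [if_pos hij, if_pos (by omega)]
      congr 1
      omega
    · rw [if_neg hij, if_neg (by omega)]
  · rw [if_neg hin, dif_pos (by omega)]
    by_cases hij : i - n ≤ j ∧ j ≤ i - n + n
    · rw [if_pos hij, if_pos (by omega)]
      congr 1
      omega
    · rw [if_neg hij, if_neg (by omega)]

theorem resultantOf_eq_resultant (p q : R[X]) (m n : ℕ) :
    resultantOf p q m n = resultant p q m n := by
  rw [resultantOf, sylvesterMatrix_eq_submatrix_transpose, Matrix.det_submatrix_equiv_self,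
    Matrix.det_transpose, resultant]

theorem discOf_map (φ : R →+* S) (p : R[X]) (n : ℕ) : discOf (p.map φ) n = φ (discOf p n) := by
  simp only [discOf, resultantOf_eq_resultant, derivative_map, resultant_map_map, map_mul, map_pow,
    map_neg, map_one]

theorem separable_of_isUnit_discOf {p : R[X]} {n : ℕ} (hm : p.Monic) (hdeg : p.natDegree = n)
    (hu : IsUnit (discOf p n)) : p.Separable := by
  rcases eq_or_ne n 0 with rfl | hn
  · rw [hm.natDegree_eq_zero.1 hdeg]
    exact separable_one
  rw [discOf, resultantOf_eq_resultant] at hu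
  obtain ⟨r, hr⟩ := (isUnit_of_mul_isUnit_right hu).exists_left_inv
  obtain ⟨a, b, -, -, hab⟩ := exists_mul_add_mul_eq_C_resultant p (derivative p) hdeg.le
    (hdeg ▸ natDegree_derivative_le p) (.inl hn)
  refine ⟨C r * a, C r * b, ?_⟩
  calc C r * a * p + C r * b * derivative p = C r * (p * a + derivative p * b) := by ring
    _ = 1 := by rw [hab, ← C_mul, hr, C_1]

theorem prod_prod_erase_sub_eq {n : ℕ} (α : Fin n → R) :
    ∏ i, ∏ j ∈ Finset.univ.erase i, (α i - α j) =
      (-1) ^ (n * (n - 1) / 2) * (Matrix.vandermonde α).det ^ 2 := by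
  have hsplit (i : Fin n) : ∏ j ∈ Finset.univ.erase i, (α i - α j) =
      (∏ j ∈ Finset.Iio i, (α i - α j)) *
        ((-1) ^ (Finset.Ioi i).card * ∏ j ∈ Finset.Ioi i, (α j - α i)) := by
    have hunion : Finset.univ.erase i = Finset.Iio i ∪ Finset.Ioi i := by
      ext j
      simp [lt_or_lt_iff_ne]
    have hdisj : Disjoint (Finset.Iio i) (Finset.Ioi i) :=
      Finset.disjoint_left.2 fun j h h' => lt_asymm (Finset.mem_Iio.1 h) (Finset.mem_Ioi.1 h')
    rw [hunion, Finset.prod_union hdisj, ← Finset.prod_const, ← Finset.prod_mul_distrib]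
    simp only [neg_mul, one_mul, neg_sub]
  have hlower : ∏ i : Fin n, ∏ j ∈ Finset.Iio i, (α i - α j) = (Matrix.vandermonde α).det := by
    rw [Matrix.det_vandermonde]
    exact Finset.prod_comm' (by simp)
  have hcard : ∑ i : Fin n, (Finset.Ioi i).card = n * (n - 1) / 2 := by
    simp only [Fin.card_Ioi]
    rw [← Finset.sum_range fun i => n - 1 - i, Finset.sum_range_reflect fun i => i,
      Finset.sum_range_id]
  simp_rw [hsplit]
  rw [Finset.prod_mul_distrib, Finset.prod_mul_distrib, hlower, Finset.prod_pow_eq_pow_sum, hcard,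
    ← Matrix.det_vandermonde]
  ring

theorem eval_derivative_prod_X_sub_C {n : ℕ} (α : Fin n → R) (i : Fin n) :
    (derivative (∏ i, (X - C (α i)))).eval (α i) = ∏ j ∈ Finset.univ.erase i, (α i - α j) := by
  rw [← Lagrange.nodal_eq, Lagrange.eval_nodal_derivative_eval_node_eq (Finset.mem_univ i),
    Lagrange.eval_nodal]

theorem discOf_prod_X_sub_C {n : ℕ} (α : Fin n → R) :
    discOf (∏ i, (X - C (α i))) n = (Matrix.vandermonde α).det ^ 2 := by
  nontriviality R
  have hdeg : (∏ i, (X - C (α i))).natDegree = n := by simp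
  have hdeg' : (derivative (∏ i, (X - C (α i)))).natDegree ≤ n - 1 :=
    (natDegree_derivative_le _).trans_eq (by rw [hdeg])
  have hres := resultant_prod_left Finset.univ (fun i => X - C (α i)) _ (n - 1)
    (by simp only [leadingCoeff_X_sub_C, Finset.prod_const_one, ne_eq, one_ne_zero,
      not_false_eq_true]) hdeg'
  simp only [hdeg, natDegree_X_sub_C, resultant_X_sub_C_left _ _ _ hdeg',
    eval_derivative_prod_X_sub_C, prod_prod_erase_sub_eq] at hres
  rw [discOf, resultantOf_eq_resultant, hres, ← mul_assoc, ← mul_pow, neg_one_mul, neg_neg,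
    one_pow, one_mul]

theorem map_det_vandermonde_of_comp {n : ℕ} {α : Fin n → R}
    (φ : R →+* R) (π : Equiv.Perm (Fin n)) (h : ∀ i, φ (α i) = α (π i)) :
    φ (Matrix.vandermonde α).det = Equiv.Perm.sign π * (Matrix.vandermonde α).det := by
  rw [RingHom.map_det, ← Matrix.det_permute]
  congr 1
  ext i j
  simp [Matrix.vandermonde_apply, h]

theorem isSquare_discOf_of_forall_even {E L : Type*} [Field E] [Field L] [Algebra E L]
    [FiniteDimensional E L] [IsGalois E L] {q : E[X]} {n : ℕ} {α : Fin n → L}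
    (hq : q.map (algebraMap E L) = ∏ i, (X - C (α i)))
    (h : ∀ σ : Gal(L/E), ∃ π ∈ alternatingGroup (Fin n), ∀ i, σ (α i) = α (π i)) :
    IsSquare (discOf q n) := by
  obtain ⟨d, hd⟩ : (Matrix.vandermonde α).det ∈ Set.range (algebraMap E L) := by
    refine (IsGalois.mem_range_algebraMap_iff_fixed _).2 fun σ => ?_
    obtain ⟨π, hπ, hσ⟩ := h σ
    have := map_det_vandermonde_of_comp (σ : L →+* L) π hσ
    rwa [Equiv.Perm.mem_alternatingGroup.1 hπ, Units.val_one, Int.cast_one, one_mul] at this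
  refine ⟨d, (algebraMap E L).injective ?_⟩
  rw [← discOf_map, hq, discOf_prod_X_sub_C, map_mul, hd, sq]

end Discriminant

section Perm

open Equiv Equiv.Perm

variable {α : Type*} [DecidableEq α]

theorem eq_top_of_isSwap_mem [Finite α] {N : Subgroup (Perm α)} [N.Normal] {s : Perm α}
    (hs : s.IsSwap) (hsN : s ∈ N) : N = ⊤ := by
  rw [eq_top_iff, ← closure_isSwap, Subgroup.closure_le]
  obtain ⟨a, b, hab, rfl⟩ := hs
  rintro _ ⟨c, d, hcd, rfl⟩
  obtain ⟨g, hg⟩ := isConj_iff.1 (isConj_swap hab hcd)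
  exact hg ▸ Subgroup.Normal.conj_mem inferInstance _ hsN g

theorem commutator_swap_eq (s : Perm α) (a : α) :
    s * (swap a (s a) * s⁻¹ * (swap a (s a))⁻¹) = swap (s a) (s (s a)) * swap a (s a) := by
  rw [swap_apply_apply s, swap_inv]
  simp only [mul_assoc]

variable [Fintype α]

theorem alternatingGroup_le_of_isThreeCycle_mem {N : Subgroup (Perm α)} [N.Normal] {s : Perm α}
    (hs : s.IsThreeCycle) (hsN : s ∈ N) : alternatingGroup α ≤ N := by
  rw [← closure_three_cycles_eq_alternating, Subgroup.closure_le]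
  intro t ht
  obtain ⟨g, rfl⟩ := isConj_iff.1 (isConj_iff_cycleType_eq.2 (hs.trans ht.symm))
  exact Subgroup.Normal.conj_mem inferInstance _ hsN g

theorem alternatingGroup_le_of_mul_self_ne_one {N : Subgroup (Perm α)} [N.Normal] {s : Perm α}
    (hsN : s ∈ N) (hs : s * s ≠ 1) : alternatingGroup α ≤ N := by
  obtain ⟨a, ha⟩ : ∃ a, s (s a) ≠ a := by
    by_contra! h
    exact hs (Perm.ext h)
  have hsa : s a ≠ a := fun h => ha (by rw [h, h])
  refine alternatingGroup_le_of_isThreeCycle_mem ?_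
    (N.mul_mem hsN (Subgroup.Normal.conj_mem inferInstance _ (N.inv_mem hsN) (swap a (s a))))
  rw [commutator_swap_eq, swap_comm a]
  exact isThreeCycle_swap_mul_swap_same (fun h => hsa (s.injective h).symm) hsa ha

theorem isSwap_of_mul_self_eq_one {s : Perm α} (hsq : s * s = 1) (hodd : sign s = -1)
    (hcard : Fintype.card α ≤ 5) : s.IsSwap := by
  have hord : orderOf s = 2 :=
    orderOf_eq_prime (by rw [sq, hsq]) (by rintro rfl; simp at hodd)
  obtain ⟨k, hk⟩ := cycleType_prime_order (hord ▸ Nat.prime_two)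
  have hsupp : s.support.card = (k + 1) * 2 := by
    rw [← sum_cycleType, hk, hord, Multiset.sum_replicate, smul_eq_mul]
  have hk2 : k < 2 := by
    have := s.support.card_le_univ
    omega
  rw [← Equiv.Perm.card_support_eq_two, hsupp]
  interval_cases k
  · rfl
  · rw [sign_of_cycleType, hk, hord] at hodd
    exact absurd hodd (by decide)

theorem eq_top_of_alternatingGroup_le {N : Subgroup (Perm α)} (hA : alternatingGroup α ≤ N)
    {s : Perm α} (hsN : s ∈ N) (hs : sign s = -1) : N = ⊤ := by
  rw [eq_top_iff]
  rintro t -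
  rcases Int.units_eq_one_or (sign t) with ht | ht
  · exact hA ht
  · have hts : t * s ∈ N := hA (by rw [mem_alternatingGroup, Perm.sign_mul, ht, hs]; rfl)
    simpa using N.mul_mem hts (N.inv_mem hsN)

theorem eq_top_of_normal_of_not_le_alternatingGroup {N : Subgroup (Perm α)} [N.Normal]
    (hN : ¬ N ≤ alternatingGroup α) : N = ⊤ := by
  obtain ⟨s, hsN, hs⟩ := SetLike.not_le_iff_exists.1 hN
  replace hs : sign s = -1 := (Int.units_eq_one_or _).resolve_left hs
  by_cases hsq : s * s = 1
  · rcases le_total (Fintype.card α) 5 with hα | hα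
    · exact eq_top_of_isSwap_mem (isSwap_of_mul_self_eq_one hsq hs hα) hsN
    · have hne : s ≠ 1 := by
        rintro rfl
        simp at hs
      exact eq_top_of_alternatingGroup_le (alternatingGroup_le_of_normal
        (Nat.card_eq_fintype_card (α := α) ▸ hα) (N.nontrivial_iff_exists_ne_one.2 ⟨s, hsN, hne⟩))
        hsN hs
  · exact eq_top_of_alternatingGroup_le (alternatingGroup_le_of_mul_self_ne_one hsN hsq) hsN hs

end Perm

section Normal

variable {F E L : Type*} [Field F] [Field E] [Field L] [Algebra F L]

theorem normal_of_adjoin_eq_top {S : Set L} (hS : IntermediateField.adjoin F S = ⊤)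
    (hroot : ∀ x ∈ S, ∃ r : F[X], r ≠ 0 ∧ aeval x r = 0 ∧ (r.map (algebraMap F L)).Splits) :
    Normal F L := by
  have hminpoly : ∀ x ∈ S, IsIntegral F x ∧ ((minpoly F x).map (algebraMap F L)).Splits := by
    intro x hx
    obtain ⟨r, hr, hxr, hsplit⟩ := hroot x hx
    exact ⟨IsAlgebraic.isIntegral ⟨r, hr, hxr⟩, hsplit.of_dvd (Polynomial.map_ne_zero hr)
      (Polynomial.map_dvd _ (minpoly.dvd F x hxr))⟩
  have halg := IntermediateField.isAlgebraic_adjoin fun x hx => (hminpoly x hx).1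
  rw [normal_iff]
  intro x
  have hx : x ∈ IntermediateField.adjoin F S := hS ▸ IntermediateField.mem_top
  exact ⟨(IntermediateField.isAlgebraic_iff.1 (halg.isAlgebraic ⟨x, hx⟩)).isIntegral,
    IntermediateField.splits_of_mem_adjoin F L hminpoly hx⟩

variable [Algebra E L]

theorem adjoin_range_algebraMap_union_eq_top {S : Set L} (hS : Algebra.adjoin E S = ⊤) :
    IntermediateField.adjoin F (Set.range (algebraMap E L) ∪ S) = ⊤ := by
  rw [eq_top_iff]
  rintro x -
  have hx : x ∈ Algebra.adjoin E S := hS ▸ Algebra.mem_top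
  induction hx using Algebra.adjoin_induction with
  | mem x hx => exact IntermediateField.subset_adjoin _ _ (.inr hx)
  | algebraMap r => exact IntermediateField.subset_adjoin _ _ (.inl ⟨r, rfl⟩)
  | add x y _ _ hx hy => exact add_mem hx hy
  | mul x y _ _ hx hy => exact mul_mem hx hy

variable [Algebra F E] [IsScalarTower F E L]

theorem rootSet_map_algebraMap (p : F[X]) :
    (p.map (algebraMap F E)).rootSet L = p.rootSet L := by
  rw [rootSet, rootSet, aroots_def, aroots_def, Polynomial.map_map, ← IsScalarTower.algebraMap_eq]

theorem normal_of_isSplittingField [Normal F E] (p : F[X])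
    [IsSplittingField E L (p.map (algebraMap F E))] : Normal F L := by
  refine normal_of_adjoin_eq_top (adjoin_range_algebraMap_union_eq_top (E := E)
    (IsSplittingField.adjoin_rootSet L (p.map (algebraMap F E)))) ?_
  simp only [IsScalarTower.algebraMap_eq F E L, ← Polynomial.map_map, rootSet_map_algebraMap]
  rintro _ (⟨y, rfl⟩ | hx)
  · have hy : IsIntegral F y := Normal.isIntegral inferInstance y
    refine ⟨minpoly F y, minpoly.ne_zero hy, ?_, (Normal.splits inferInstance y).map _⟩
    rw [aeval_algebraMap_apply, minpoly.aeval, map_zero]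
  · exact ⟨p, (mem_rootSet.1 hx).1, aeval_eq_zero_of_mem_rootSet hx, IsSplittingField.splits L _⟩

end Normal

section Restriction

variable {F : Type*} [Field F] (p : F[X]) (E L : Type*) [Field E] [Field L] [Algebra F E]
  [Algebra E L] [Algebra F L] [IsScalarTower F E L]

theorem normal_range_restrictScalarsHom [Normal F E] :
    (AlgEquiv.restrictScalarsHom F : Gal(L/E) →* Gal(L/F)).range.Normal := by
  suffices h : (AlgEquiv.restrictScalarsHom F : Gal(L/E) →* Gal(L/F)).range =
      (AlgEquiv.restrictNormalHom (F := F) (K₁ := L) E).ker by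
    rw [h]
    infer_instance
  ext σ
  have h (x : E) := AlgEquiv.restrictNormal_commutes σ E x
  refine ⟨?_, fun hσ => ?_⟩
  · rintro ⟨τ, rfl⟩
    exact AlgEquiv.ext fun x => (algebraMap E L).injective ((h x).trans (τ.commutes x))
  · rw [MonoidHom.mem_ker] at hσ
    refine ⟨AlgEquiv.ofRingEquiv (f := σ.toRingEquiv) fun x => (h x).symm.trans ?_, rfl⟩
    exact congrArg (algebraMap E L) (DFunLike.congr_fun hσ x)

theorem fact_splits_of_isSplittingField [IsSplittingField E L (p.map (algebraMap F E))] :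
    Fact ((p.map (algebraMap F L)).Splits) where
  out := by
    rw [IsScalarTower.algebraMap_eq F E L, ← Polynomial.map_map]
    exact IsSplittingField.splits L _

variable [Fact ((p.map (algebraMap F L)).Splits)]

/-- The action of `Gal(L/E)` on the splitting field over `F` of a polynomial `p` over `F` that
splits in `L`. When `L` is a splitting field of `p` over `E`, this compares the Galois groups of `p`
over `E` and over `F`. -/
def galTowerRestrict : Gal(L/E) →* p.Gal :=
  (Gal.restrict p L).comp (AlgEquiv.restrictScalarsHom F)

theorem coe_galActionHom_galTowerRestrict (σ : Gal(L/E)) (x : p.rootSet L) :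
    (Gal.galActionHom p L (galTowerRestrict p E L σ) x : L) = σ x := by
  rw [galTowerRestrict, MonoidHom.comp_apply, Gal.galActionHom_restrict]
  rfl

theorem galTowerRestrict_injective [IsSplittingField E L (p.map (algebraMap F E))] :
    Function.Injective (galTowerRestrict p E L) := by
  intro σ τ h
  have hroots : Set.EqOn (σ : L →ₐ[E] L) (τ : L →ₐ[E] L) ((p.map (algebraMap F E)).rootSet L) := by
    intro x hx
    rw [rootSet_map_algebraMap] at hx
    have := coe_galActionHom_galTowerRestrict p E L σ ⟨x, hx⟩
    rw [h, coe_galActionHom_galTowerRestrict] at this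
    exact this.symm
  exact AlgEquiv.coe_toAlgHom_injective (AlgHom.ext_of_adjoin_eq_top
    (IsSplittingField.adjoin_rootSet L (p.map (algebraMap F E))) hroots)

theorem normal_range_galTowerRestrict [Normal F E] [Normal F L] :
    (galTowerRestrict p E L).range.Normal := by
  rw [galTowerRestrict, MonoidHom.range_comp]
  exact (normal_range_restrictScalarsHom E L).map _ (Gal.restrict_surjective p _)

end Restriction

section BaseChange

variable {F : Type*} [Field F] {p : F[X]} {L : Type*} [Field L] [Algebra F L]

theorem map_eq_prod_X_sub_C {n : ℕ} (hm : p.Monic) (hsep : p.Separable)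
    (hsplit : (p.map (algebraMap F L)).Splits) (e : Fin n ≃ p.rootSet L) :
    p.map (algebraMap F L) = ∏ i, (X - C (e i : L)) := by
  classical
  calc p.map (algebraMap F L) = ((p.aroots L).map (X - C ·)).prod :=
        hsplit.eq_prod_roots_of_monic (hm.map _)
    _ = ∏ x ∈ (p.aroots L).toFinset, (X - C x) := by
        rw [Finset.prod, Multiset.toFinset_val, Multiset.dedup_eq_self.2 (nodup_roots hsep.map)]
    _ = ∏ x : p.rootSet L, (X - C (x : L)) := (Finset.prod_coe_sort _ _).symm
    _ = ∏ i, (X - C (e i : L)) := (e.prod_comp fun x => X - C (x : L)).symm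

theorem galActionHom_bijective_of_mulEquiv_perm [Fact (p.map (algebraMap F L)).Splits] {n : ℕ}
    (e : Fin n ≃ p.rootSet L) (hgal : Nonempty (p.Gal ≃* Equiv.Perm (Fin n))) :
    Function.Bijective (Gal.galActionHom p L) := by
  obtain ⟨m⟩ := hgal
  have : Finite p.Gal := Finite.of_equiv _ m.symm.toEquiv
  refine (Nat.bijective_iff_injective_and_card _).2 ⟨Gal.galActionHom_injective p L, ?_⟩
  rw [Nat.card_congr m.toEquiv, Nat.card_congr e.permCongr]

theorem galTowerRestrict_surjective {E : Type*} [Field E] [Algebra F E] [Algebra E L]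
    [IsScalarTower F E L] [Normal F E] [IsSplittingField E L (p.map (algebraMap F E))]
    [Fact ((p.map (algebraMap F L)).Splits)] {n : ℕ} (hm : p.Monic)
    (hdeg : p.natDegree = n) (hgal : Nonempty (p.Gal ≃* Equiv.Perm (Fin n)))
    (hdisc : ¬ IsSquare (algebraMap F E (discOf p n))) :
    Function.Surjective (galTowerRestrict p E L) := by
  have hdisc0 : discOf p n ≠ 0 := by
    intro h
    rw [h, map_zero] at hdisc
    exact hdisc IsSquare.zero
  have hsep : p.Separable := separable_of_isUnit_discOf hm hdeg hdisc0.isUnit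
  have hsplit : (p.map (algebraMap F L)).Splits := Fact.out
  have : IsGalois E L := IsGalois.of_separable_splitting_field (hsep.map (f := algebraMap F E))
  have : FiniteDimensional E L := IsSplittingField.finiteDimensional L (p.map (algebraMap F E))
  have : Normal F L := normal_of_isSplittingField (E := E) p
  have e : Fin n ≃ p.rootSet L := (Fintype.equivFinOfCardEq
    ((card_rootSet_eq_natDegree hsep hsplit).trans hdeg)).symm
  let ρ : p.Gal →* Equiv.Perm (Fin n) :=
    e.symm.permCongrHom.toMonoidHom.comp (Gal.galActionHom p L)
  have hρ : Function.Bijective ρ :=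
    e.symm.permCongrHom.bijective.comp (galActionHom_bijective_of_mulEquiv_perm e hgal)
  have heρ (σ : Gal(L/E)) (i : Fin n) : σ (e i) = e (ρ (galTowerRestrict p E L σ) i) := by
    rw [← coe_galActionHom_galTowerRestrict]
    simp [ρ]
  let N := (galTowerRestrict p E L).range.map ρ
  have : N.Normal := (normal_range_galTowerRestrict p E L).map ρ hρ.surjective
  have hN : ¬ N ≤ alternatingGroup (Fin n) := by
    intro h
    refine hdisc (discOf_map (algebraMap F E) p n ▸ isSquare_discOf_of_forall_even (L := L) ?_
      fun σ => ⟨_, h ⟨_, ⟨σ, rfl⟩, rfl⟩, heρ σ⟩)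
    rw [Polynomial.map_map, ← IsScalarTower.algebraMap_eq, map_eq_prod_X_sub_C hm hsep hsplit e]
  rw [← MonoidHom.range_eq_top]
  exact Subgroup.map_injective hρ.injective ((eq_top_of_normal_of_not_le_alternatingGroup hN).trans
    (Subgroup.map_top_of_surjective ρ hρ.surjective).symm)

theorem nonempty_gal_map_mulEquiv_perm {F E : Type*} [Field F] [Field E] [Algebra F E] [Normal F E]
    {p : F[X]} {n : ℕ} (hm : p.Monic) (hdeg : p.natDegree = n)
    (hgal : Nonempty (p.Gal ≃* Equiv.Perm (Fin n)))
    (hdisc : ¬ IsSquare (algebraMap F E (discOf p n))) :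
    Nonempty ((p.map (algebraMap F E)).Gal ≃* Equiv.Perm (Fin n)) := by
  let L := (p.map (algebraMap F E)).SplittingField
  have := fact_splits_of_isSplittingField p E L
  exact hgal.map (MulEquiv.ofBijective (galTowerRestrict p E L)
    ⟨galTowerRestrict_injective p E L, galTowerRestrict_surjective hm hdeg hgal hdisc⟩).trans

end BaseChange

section RationalFunctions

theorem isSquare_of_isSquare_algebraMap {R K : Type*} [CommRing R] [IsIntegrallyClosed R]
    [Field K] [Algebra R K] [IsFractionRing R K] {a : R}
    (h : IsSquare (algebraMap R K a)) : IsSquare a := by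
  obtain ⟨w, hw⟩ := h
  rw [← sq] at hw
  obtain ⟨b, rfl⟩ := IsIntegrallyClosed.exists_algebraMap_eq_of_isIntegral_pow
    (R := R) two_pos (hw ▸ isIntegral_algebraMap)
  exact ⟨b, IsFractionRing.injective R K (by rw [hw, map_mul, sq])⟩

theorem not_isSquare_map_of_irreducible {k K : Type*} [Field k] [PerfectField k] [Field K]
    [Algebra k K] {D : k[X]} (hD : Irreducible D) : ¬ IsSquare (D.map (algebraMap k K)) := by
  rintro ⟨w, hw⟩
  have hsq : Squarefree (D.map (algebraMap k K)) :=
    ((PerfectField.separable_of_irreducible hD).map).squarefree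
  have hu : IsUnit w := hsq w (Dvd.intro_left 1 (by rw [hw, one_mul]))
  exact hD.not_isUnit ((isUnit_map (algebraMap k K)).1 (hw ▸ hu.mul hu))

theorem normal_of_adjoin_range_eq_top {k K F E : Type*} [Field k] [Field K] [Field F] [Field E]
    [Algebra k K] [Algebra k F] [Algebra K E] [Algebra F E] [Normal k K]
    (hcomm : (algebraMap F E).comp (algebraMap k F) = (algebraMap K E).comp (algebraMap k K))
    (hadjoin : IntermediateField.adjoin F (Set.range (algebraMap K E)) = ⊤) : Normal F E := by
  refine normal_of_adjoin_eq_top hadjoin ?_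
  rintro _ ⟨a, rfl⟩
  have ha : IsIntegral k a := Normal.isIntegral inferInstance a
  refine ⟨(minpoly k a).map (algebraMap k F), Polynomial.map_ne_zero (minpoly.ne_zero ha), ?_, ?_⟩
  · rw [aeval_def, eval₂_map, hcomm, ← hom_eval₂, ← aeval_def, minpoly.aeval, map_zero]
  · rw [Polynomial.map_map, hcomm, ← Polynomial.map_map]
    exact (Normal.splits inferInstance a).map _

variable (k K : Type*) [Field k] [Field K] [Algebra k K]

-- Together these make `RatFunc K` an algebra over `RatFunc k`.
attribute [local instance] Polynomial.algebra
open scoped RatFunc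

theorem ratFunc_algebraMap_algebraMap (f : k[X]) :
    algebraMap (RatFunc k) (RatFunc K) (algebraMap k[X] (RatFunc k) f) =
      algebraMap K[X] (RatFunc K) (f.map (algebraMap k K)) :=
  have := RatFunc.isScalarTower_liftAlgebra k (RatFunc K)
  (IsScalarTower.algebraMap_apply k[X] (RatFunc k) (RatFunc K) f).symm

theorem adjoin_range_algebraMap_ratFunc :
    IntermediateField.adjoin (RatFunc k) (Set.range (algebraMap K (RatFunc K))) = ⊤ := by
  have hpoly (p : K[X]) : algebraMap K[X] (RatFunc K) p ∈
      IntermediateField.adjoin (RatFunc k) (Set.range (algebraMap K (RatFunc K))) := by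
    induction p using Polynomial.induction_on' with
    | add p q hp hq =>
      rw [map_add]
      exact add_mem hp hq
    | monomial n a =>
      rw [← C_mul_X_pow_eq_monomial, map_mul, map_pow]
      refine mul_mem (IntermediateField.subset_adjoin _ _ ⟨a, ?_⟩) (pow_mem ?_ n)
      · exact IsScalarTower.algebraMap_apply K K[X] (RatFunc K) a
      · rw [← Polynomial.map_X (algebraMap k K), ← ratFunc_algebraMap_algebraMap]
        exact IntermediateField.algebraMap_mem _ _
  rw [eq_top_iff]
  rintro x -
  rw [← RatFunc.num_div_denom x]
  exact div_mem (hpoly _) (hpoly _)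

theorem normal_ratFunc [Normal k K] : Normal (RatFunc k) (RatFunc K) := by
  refine normal_of_adjoin_range_eq_top (k := k) (RingHom.ext fun x => ?_)
    (adjoin_range_algebraMap_ratFunc k K)
  rw [RingHom.comp_apply, RingHom.comp_apply, IsScalarTower.algebraMap_apply k k[X] (RatFunc k),
    ratFunc_algebraMap_algebraMap, IsScalarTower.algebraMap_apply K K[X] (RatFunc K),
    algebraMap_eq, algebraMap_eq, map_C]

variable {k K}

theorem stmt10_general [PerfectField k] [Normal k K] {R : Type*} [CommRing R] [Algebra R k]
    [Algebra R K] [IsScalarTower R k K] {n : ℕ} {P : R[X][X]}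
    (hm : P.Monic) (hdeg : P.natDegree = n)
    (hgal : Nonempty ((P.map ((algebraMap k[X] (RatFunc k)).comp
      (mapRingHom (algebraMap R k)))).Gal ≃* Equiv.Perm (Fin n)))
    (hirr : Irreducible ((discOf P n).map (algebraMap R k))) :
    Nonempty ((P.map ((algebraMap K[X] (RatFunc K)).comp
      (mapRingHom (algebraMap R K)))).Gal ≃* Equiv.Perm (Fin n)) := by
  have := normal_ratFunc k K
  have hcomp : (algebraMap K[X] (RatFunc K)).comp (mapRingHom (algebraMap R K)) =
      (algebraMap (RatFunc k) (RatFunc K)).comp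
        ((algebraMap k[X] (RatFunc k)).comp (mapRingHom (algebraMap R k))) := by
    refine RingHom.ext fun f => ?_
    simp only [RingHom.comp_apply, ratFunc_algebraMap_algebraMap, coe_mapRingHom,
      Polynomial.map_map, ← IsScalarTower.algebraMap_eq]
  rw [hcomp, ← Polynomial.map_map]
  refine nonempty_gal_map_mulEquiv_perm (hm.map _) ((hm.natDegree_map _).trans hdeg) hgal ?_
  rw [discOf_map, RingHom.comp_apply, ratFunc_algebraMap_algebraMap]
  exact fun h => not_isSquare_map_of_irreducible hirr (isSquare_of_isSquare_algebraMap h)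

end RationalFunctions

theorem stmt10 (n : ℕ) (hn : 2 ≤ n) (P : Polynomial (Polynomial ℤ))
    (hm : P.Monic) (hdeg : P.natDegree = n)
    (hgal : Nonempty ((toQT P).Gal ≃* Equiv.Perm (Fin n)))
    (hirr : Irreducible ((discOf P n).map (Int.castRingHom ℚ))) :
    Nonempty ((toQbarT P).Gal ≃* Equiv.Perm (Fin n)) := by
  -- `ℚ̄` carries two (equal) `ℚ`-algebra structures; normality is known for this one.
  let := AlgebraicClosure.instAlgebra ℚ (R := ℚ)
  have : Normal ℚ (AlgebraicClosure ℚ) := IsAlgClosure.normal ℚ _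
  exact stmt10_general hm hdeg hgal hirr
end
end

section
/- Let P ∈ ℤ[T] be a nonconstant separable polynomial and suppose there exists an element σ of the Galois group of the splitting field of P over ℚ that fixes no root of P. Then the set of prime numbers that are not prime divisors of P has positive density among the primes: there exist δ > 0 and x₀ such that for all x ≥ x₀, the number of primes p ≤ x for which there is no t₀ ∈ ℚ with P(t₀) ≠ 0 and v_p(P(t₀)) > 0 is at least δ·π(x), where π denotes the prime-counting function and v_p the p-adic valuation on ℚ. -/
/-!
A large prime divisor `p` of `P` gives a root of `P` in `𝔽_p`, hence a root of `P` fixed by the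
Frobenius `φ` at a prime above `p`. So a prime whose Frobenius generates a conjugate of `⟨σ⟩` is not
a prime divisor of `P`: otherwise a conjugate of `φ`, and with it `σ`, would fix a root.

That these primes have positive lower density needs only Frobenius' theorem, not Chebotarev's. For
`L / ℚ` Galois, the number of primes of degree one above `p` in the fixed field of `U` is
`#{x | x⁻¹ φ x ∈ U} / #U`. With `n` the order of `σ`, Möbius inversion over the subgroups `⟨σ ^ d⟩`,
`d ∣ n`, turns these numbers into a weight supported on the primes whose Frobenius generates a
conjugate of `⟨σ⟩`. Mertens' theorem `∑_{N𝔭 ≤ x} log N𝔭 / N𝔭 = log x + O(1)` in each fixed field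
then gives `∑_{p ≤ x} weight(p) log p / p = c log x + O(1)` with
`c = ∑_{d ∣ n} μ(d) / d = φ(n) / n > 0`. Comparing `x` with `x / A` for a large constant `A` and
using Chebyshev's bound on `π(x)`, one sees that the support of the weight has positive lower
density.

Mertens' theorem for a number field is proved as for `ℚ`, with the product of the norms of the
elements of a box in `𝓞 K` in the role of `x!`; this avoids the Dedekind zeta function and the class
number formula.
-/

open Polynomial

/-- `p` is a prime divisor of `P`: some value `P(t₀)`, `t₀ ∈ ℚ`, is nonzero of positive
`p`-adic valuation. -/
def IsPrimeDivisorOf (p : ℕ) (P : Polynomial ℤ) : Prop :=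
  ∃ t₀ : ℚ, Polynomial.aeval t₀ P ≠ 0 ∧ 0 < padicValRat p (Polynomial.aeval t₀ P)

namespace FrobeniusDensity

open scoped NumberField

/-! ### Boxes in lattices -/

lemma abs_pow_sub_pow_le_mul_div {X B e v : ℝ} (hX : 0 < X) (heB : e ≤ B * X) (hv : 0 ≤ v)
    (hve : |v - (2 * X + 1)| ≤ 2 * e) (d : ℕ) :
    |v ^ d - (2 * X + 1) ^ d| ≤ d * (1 + B) ^ (d - 1) * (2 * X + 1) ^ d * (e / X) := by
  obtain rfl | hd := d.eq_zero_or_pos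
  · simp
  have he : 0 ≤ e := by linarith [abs_nonneg (v - (2 * X + 1))]
  have hB : 0 ≤ B := nonneg_of_mul_nonneg_left (he.trans heB) hX
  have hmax : max |v| |2 * X + 1| ≤ (1 + B) * (2 * X + 1) := by
    rw [abs_of_nonneg hv, abs_of_nonneg (by positivity), max_le_iff]
    constructor <;> nlinarith [(abs_le.1 hve).2]
  calc |v ^ d - (2 * X + 1) ^ d|
      ≤ |v - (2 * X + 1)| * d * max |v| |2 * X + 1| ^ (d - 1) := abs_pow_sub_pow_le _ _ _
    _ ≤ 2 * e * d * ((1 + B) * (2 * X + 1)) ^ (d - 1) := by gcongr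
    _ = d * (1 + B) ^ (d - 1) * ((2 * X + 1) ^ (d - 1) * (2 * X)) * (e / X) := by
        rw [mul_pow]
        field_simp
    _ ≤ d * (1 + B) ^ (d - 1) * ((2 * X + 1) ^ (d - 1) * (2 * X + 1)) * (e / X) := by
        gcongr
        linarith
    _ = _ := by rw [pow_sub_one_mul hd.ne']

section Box

variable {A ι : Type*} [AddCommGroup A] [Fintype ι] (b : Module.Basis ι ℤ A)

/-- The maximal absolute value of the coordinates of `a` with respect to the basis `b`; it measures
the size of the elements of the lattice `A`. -/
noncomputable def coordSup (a : A) : ℕ := Finset.univ.sup fun i => (b.repr a i).natAbs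

lemma coordSup_le_iff {a : A} {m : ℕ} : coordSup b a ≤ m ↔ ∀ i, |b.repr a i| ≤ m := by
  simp only [coordSup, Finset.sup_le_iff, Finset.mem_univ, true_imp_iff]
  exact forall_congr' fun i => by rw [Int.abs_eq_natAbs, Nat.cast_le]

lemma abs_repr_le_coordSup (a : A) (i : ι) : |b.repr a i| ≤ coordSup b a :=
  (coordSup_le_iff b).1 le_rfl i

lemma coordSup_add_le (a a' : A) : coordSup b (a + a') ≤ coordSup b a + coordSup b a' := by
  refine (coordSup_le_iff b).2 fun i => ?_
  rw [map_add, Finsupp.add_apply, Nat.cast_add]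
  exact (abs_add_le _ _).trans
    (add_le_add (abs_repr_le_coordSup b a i) (abs_repr_le_coordSup b a' i))

lemma coordSup_neg (a : A) : coordSup b (-a) = coordSup b a := by
  simp [coordSup]

lemma coordSup_sub_le (a a' : A) : coordSup b (a - a') ≤ coordSup b a + coordSup b a' := by
  simpa only [sub_eq_add_neg, coordSup_neg] using coordSup_add_le b a (-a')

lemma coordSup_zsmul (n : ℤ) (a : A) : coordSup b (n • a) = n.natAbs * coordSup b a := by
  simp only [coordSup, map_zsmul, Finsupp.smul_apply, smul_eq_mul, Int.natAbs_mul]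
  exact (Finset.mul_sup₀ _ _ _).symm

/-- The cube of the elements of the lattice `A` whose coordinates with respect to `b` differ from
those of `z` by at most `X`. -/
noncomputable def box (z : A) (X : ℕ) : Finset A := by
  classical
  exact (Finset.Icc (fun _ : ι => -(X : ℤ)) fun _ => X).map
    (b.equivFun.symm.toEquiv.trans (Equiv.addLeft z)).toEmbedding

variable {b} in
lemma mem_box {z a : A} {X : ℕ} : a ∈ box b z X ↔ coordSup b (a - z) ≤ X := by
  classical
  rw [box, Finset.mem_map_equiv, Finset.mem_Icc, Pi.le_def, Pi.le_def, ← forall_and,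
    coordSup_le_iff]
  refine forall_congr' fun i => ?_
  rw [abs_le, sub_eq_neg_add]
  rfl

lemma card_box (z : A) (X : ℕ) : (box b z X).card = (2 * X + 1) ^ Fintype.card ι := by
  classical
  simp only [box, Finset.card_map, Pi.card_Icc, Int.card_Icc, Finset.prod_const, Finset.card_univ]
  congr 1
  omega

lemma exists_mem_ne_zero_coordSup_le (H : AddSubgroup A) [H.FiniteIndex] {k : ℕ}
    (hk : H.index < (k + 1) ^ Fintype.card ι) : ∃ a ∈ H, a ≠ 0 ∧ coordSup b a ≤ k := by
  classical
  have := Fintype.ofFinite (A ⧸ H)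
  have hcard : (Finset.univ : Finset (A ⧸ H)).card <
      (Finset.Icc (fun _ : ι => (0 : ℤ)) fun _ => k).card := by
    simpa [Pi.card_Icc, ← Nat.card_eq_fintype_card, AddSubgroup.index] using hk
  obtain ⟨f, hf, g, hg, hne, heq⟩ := Finset.exists_ne_map_eq_of_card_lt_of_maps_to hcard
    (f := fun f => (b.equivFun.symm f : A ⧸ H)) (fun _ _ => Finset.mem_univ _)
  refine ⟨-b.equivFun.symm f + b.equivFun.symm g, QuotientAddGroup.eq.1 heq, ?_,
    (coordSup_le_iff b).2 fun i => ?_⟩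
  · rw [Ne, neg_add_eq_zero]
    exact fun h => hne (b.equivFun.symm.injective h)
  · rw [← map_neg, ← map_add, ← b.equivFun_apply, LinearEquiv.apply_symm_apply, abs_le]
    obtain ⟨hf0, hfk⟩ := Finset.mem_Icc.1 hf
    obtain ⟨hg0, hgk⟩ := Finset.mem_Icc.1 hg
    have := hf0 i; have := hfk i; have := hg0 i; have := hgk i
    simp only [Pi.add_apply, Pi.neg_apply] at *
    omega

section CosetRepresentatives

open Classical in
lemma card_box_mem_mul_index_le {H : AddSubgroup A} [H.FiniteIndex] {c : ℕ}
    (hc : ∀ a : A, ∃ r, a - r ∈ H ∧ coordSup b r ≤ c) (z : A) (X : ℕ) :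
    ((box b z X).filter (· ∈ H)).card * H.index ≤ (2 * (X + c) + 1) ^ Fintype.card ι := by
  have := Fintype.ofFinite (A ⧸ H)
  choose r hrH hrc using hc
  rw [AddSubgroup.index, Nat.card_eq_fintype_card, ← Finset.card_univ, ← Finset.card_product,
    ← card_box b z]
  refine Finset.card_le_card_of_injOn (fun v => v.1 + r v.2.out) ?_ ?_
  · rintro ⟨a, q⟩ h
    simp only [Finset.coe_product, Set.mem_prod, Finset.mem_coe, Finset.mem_filter, mem_box] at h ⊢
    rw [add_sub_right_comm]
    exact (coordSup_add_le b _ _).trans (add_le_add h.1.1 (hrc _))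
  · rintro ⟨a, q⟩ h ⟨a', q'⟩ h' heq
    simp only [Finset.coe_product, Set.mem_prod, Finset.mem_coe, Finset.mem_filter] at h h' heq
    have hq : q = q' := by
      rw [← q.out_eq', ← q'.out_eq', QuotientAddGroup.eq]
      have := H.add_mem (H.sub_mem h.1.2 h'.1.2) (H.sub_mem (hrH q'.out) (hrH q.out))
      convert this using 1
      rw [← sub_eq_zero, ← neg_eq_zero.2 (sub_eq_zero.2 heq)]
      abel
    subst hq
    simpa using heq

open Classical in
lemma pow_le_card_box_mem_mul_index {H : AddSubgroup A} [H.FiniteIndex] {c : ℕ}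
    (hc : ∀ a : A, ∃ r, a - r ∈ H ∧ coordSup b r ≤ c) (z : A) {X Y : ℕ} (hXY : Y + c ≤ X) :
    (2 * Y + 1) ^ Fintype.card ι ≤ ((box b z X).filter (· ∈ H)).card * H.index := by
  have := Fintype.ofFinite (A ⧸ H)
  choose r hrH hrc using hc
  have hmem : ∀ a : A, a - r (a : A ⧸ H).out ∈ H := by
    intro a
    have h := QuotientAddGroup.eq.1 (Quotient.out_eq' (a : A ⧸ H))
    have := H.add_mem h (hrH (a : A ⧸ H).out)
    rwa [neg_add_eq_sub, sub_add_sub_cancel] at this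
  rw [AddSubgroup.index, Nat.card_eq_fintype_card, ← card_box b z, ← Finset.card_univ,
    ← Finset.card_product]
  refine Finset.card_le_card_of_injOn (fun a => (a - r (a : A ⧸ H).out, (a : A ⧸ H))) ?_ ?_
  · intro a ha
    simp only [Finset.coe_product, Set.mem_prod, Finset.mem_coe, Finset.mem_filter,
      Finset.mem_univ, and_true, mem_box] at ha ⊢
    refine ⟨?_, hmem a⟩
    rw [sub_right_comm]
    exact (coordSup_sub_le b _ _).trans ((add_le_add ha (hrc _)).trans hXY)
  · intro a _ a' _ heq
    obtain ⟨h1, h2⟩ := Prod.mk.inj heq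
    rw [h2] at h1
    exact sub_left_injective h1

open Classical in
lemma abs_card_box_mem_mul_index_sub_le [Nonempty ι] {H : AddSubgroup A} [H.FiniteIndex] {c : ℕ}
    (hc : ∀ a : A, ∃ r, a - r ∈ H ∧ coordSup b r ≤ c) (z : A) {X : ℕ} (hX : 1 ≤ X) {B : ℝ}
    (hcB : c ≤ B * X) :
    |((box b z X).filter (· ∈ H)).card * (H.index : ℝ) - (2 * X + 1) ^ Fintype.card ι| ≤
      Fintype.card ι * (1 + B) ^ (Fintype.card ι - 1) * (2 * X + 1) ^ Fintype.card ι *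
        (c / X) := by
  have hX0 : (0 : ℝ) < X := by exact_mod_cast hX
  have hc0 : (0 : ℝ) ≤ c := c.cast_nonneg
  rw [abs_sub_le_iff]
  constructor
  · have hupper : ((box b z X).filter (· ∈ H)).card * (H.index : ℝ) ≤
        (2 * (X + c) + 1) ^ Fintype.card ι := by
      exact_mod_cast card_box_mem_mul_index_le b hc z X
    have hpow := abs_pow_sub_pow_le_mul_div (v := 2 * (X + c) + 1) hX0 hcB (by positivity)
      (by rw [abs_of_nonneg] <;> linarith) (Fintype.card ι)
    linarith [(abs_le.1 hpow).2]
  obtain hcX | hXc := le_or_gt c X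
  · obtain ⟨Y, rfl⟩ := Nat.exists_eq_add_of_le' hcX
    have hlower : (2 * Y + 1 : ℝ) ^ Fintype.card ι ≤
        ((box b z (Y + c)).filter (· ∈ H)).card * (H.index : ℝ) := by
      exact_mod_cast pow_le_card_box_mem_mul_index b hc z le_rfl
    have hpow := abs_pow_sub_pow_le_mul_div (v := 2 * Y + 1) hX0 hcB (by positivity)
      (by push_cast; rw [abs_of_nonpos] <;> linarith) (Fintype.card ι)
    linarith [(abs_le.1 hpow).1]
  · have hB : 0 ≤ B := nonneg_of_mul_nonneg_left (hc0.trans hcB) hX0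
    have hcX1 : 1 ≤ (c : ℝ) / X := (one_le_div hX0).2 (by exact_mod_cast hXc.le)
    have hd : (1 : ℝ) ≤ Fintype.card ι := by exact_mod_cast Fintype.card_pos
    calc _ ≤ (2 * X + 1 : ℝ) ^ Fintype.card ι := sub_le_self _ (by positivity)
      _ = 1 * 1 * (2 * X + 1) ^ Fintype.card ι * 1 := by ring
      _ ≤ _ := by
        gcongr
        exact one_le_pow₀ (by linarith)

end CosetRepresentatives

end Box

section Ring

variable {R ι : Type*} [CommRing R] [Fintype ι] (b : Module.Basis ι ℤ R)

lemma exists_coordSup_mul_le : ∃ M : ℕ, ∀ x y : R,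
    coordSup b (x * y) ≤ M * coordSup b x * coordSup b y := by
  refine ⟨∑ i, ∑ j, coordSup b (b i * b j), fun x y => (coordSup_le_iff b).2 fun k => ?_⟩
  have hxy : x * y = ∑ i, ∑ j, (b.repr x i * b.repr y j) • (b i * b j) := by
    conv_lhs => rw [← b.sum_repr x, ← b.sum_repr y]
    simp only [Finset.sum_mul_sum, smul_mul_smul_comm]
  simp only [hxy, map_sum, map_smul, Finsupp.finsetSum_apply, Finsupp.smul_apply, smul_eq_mul]
  push_cast
  simp only [Finset.sum_mul]
  refine (Finset.abs_sum_le_sum_abs _ _).trans (Finset.sum_le_sum fun i _ => ?_)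
  refine (Finset.abs_sum_le_sum_abs _ _).trans (Finset.sum_le_sum fun j _ => ?_)
  rw [abs_mul, abs_mul, mul_comm, mul_assoc]
  gcongr <;> exact abs_repr_le_coordSup b _ _

lemma exists_coordSup_sub_zsmul_le {n : ℤ} (hn : n ≠ 0) (x : R) :
    ∃ y : R, coordSup b (x - n • y) ≤ n.natAbs := by
  refine ⟨∑ i, (b.repr x i / n) • b i, (coordSup_le_iff b).2 fun j => ?_⟩
  have hmod : b.repr (x - n • ∑ i, (b.repr x i / n) • b i) j = b.repr x j % n := by
    rw [map_sub, map_smul, Finsupp.sub_apply, Finsupp.smul_apply, b.repr_sum_self, Int.emod_def,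
      smul_eq_mul]
  rw [hmod, abs_of_nonneg (Int.emod_nonneg _ hn), Int.natCast_natAbs]
  exact (Int.emod_lt_abs _ hn).le

/-- Euclidean division by `α`, performed on the coordinates of `γ / α = α' γ / n`. -/
lemma exists_coordSup_sub_mul_le : ∃ M : ℕ, ∀ {α α' : R} {n : ℤ}, n ≠ 0 → α * α' = n →
    ∀ γ : R, ∃ β : R, coordSup b (γ - α * β) ≤ M * coordSup b α := by
  obtain ⟨M, hM⟩ := exists_coordSup_mul_le b
  refine ⟨M, fun {α α' n} hn hα γ => ?_⟩
  obtain ⟨β, hβ⟩ := exists_coordSup_sub_zsmul_le b hn (α' * γ)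
  refine ⟨β, Nat.le_of_mul_le_mul_left ?_ (Int.natAbs_pos.2 hn)⟩
  have hmul : n • (γ - α * β) = α * (α' * γ - n • β) := by
    rw [mul_sub, ← mul_assoc, hα, zsmul_eq_mul, zsmul_eq_mul]
    ring
  calc n.natAbs * coordSup b (γ - α * β) = coordSup b (α * (α' * γ - n • β)) := by
        rw [← coordSup_zsmul, hmul]
    _ ≤ M * coordSup b α * coordSup b (α' * γ - n • β) := hM _ _
    _ ≤ M * coordSup b α * n.natAbs := Nat.mul_le_mul_left _ hβ
    _ = n.natAbs * (M * coordSup b α) := mul_comm _ _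

end Ring

/-! ### Elements of ideals in boxes -/

section Count

variable (K : Type*) [Field K] [NumberField K]

/-- The box of size `X` around `z` in `𝓞 K`, for the integral basis chosen by Mathlib. -/
noncomputable abbrev integerBox (z : 𝓞 K) (X : ℕ) : Finset (𝓞 K) :=
  box (NumberField.RingOfIntegers.basis K) z X

lemma card_chooseBasisIndex :
    Fintype.card (Module.Free.ChooseBasisIndex ℤ (𝓞 K)) = Module.finrank ℚ K := by
  rw [← Module.finrank_eq_card_chooseBasisIndex, NumberField.RingOfIntegers.rank]

variable {K} in
lemma absNorm_ne_zero {I : Ideal (𝓞 K)} (hI : I ≠ ⊥) : Ideal.absNorm I ≠ 0 := by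
  rwa [Ne, Ideal.absNorm_eq_zero_iff]

variable {K} in
lemma finiteIndex_toAddSubgroup {I : Ideal (𝓞 K)} (hI : I ≠ ⊥) :
    (Submodule.toAddSubgroup I).FiniteIndex :=
  ⟨absNorm_ne_zero hI⟩

variable {K} in
lemma absNorm_rpow_inv_pow (I : Ideal (𝓞 K)) :
    ((Ideal.absNorm I : ℝ) ^ (Module.finrank ℚ K : ℝ)⁻¹) ^ Module.finrank ℚ K = Ideal.absNorm I :=
  Real.rpow_inv_natCast_pow (by positivity) Module.finrank_pos.ne'

variable {K} in
lemma exists_mem_ne_zero_coordSup_le_absNorm {I : Ideal (𝓞 K)} (hI : I ≠ ⊥) :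
    ∃ α ∈ I, α ≠ 0 ∧ coordSup (NumberField.RingOfIntegers.basis K) α ≤
      (Ideal.absNorm I : ℝ) ^ (Module.finrank ℚ K : ℝ)⁻¹ := by
  have := finiteIndex_toAddSubgroup hI
  set r := (Ideal.absNorm I : ℝ) ^ (Module.finrank ℚ K : ℝ)⁻¹
  have hr0 : 0 ≤ r := by positivity
  have hlt : Ideal.absNorm I < (⌊r⌋₊ + 1) ^ Module.finrank ℚ K := by
    have := pow_lt_pow_left₀ (Nat.lt_floor_add_one r) hr0 (Module.finrank_pos (R := ℚ) (M := K)).ne'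
    rw [absNorm_rpow_inv_pow I] at this
    exact_mod_cast this
  rw [← card_chooseBasisIndex] at hlt
  obtain ⟨α, hαI, hα0, hα⟩ := exists_mem_ne_zero_coordSup_le
    (NumberField.RingOfIntegers.basis K) (Submodule.toAddSubgroup I) hlt
  exact ⟨α, hαI, hα0, (Nat.cast_le.2 hα).trans (Nat.floor_le hr0)⟩

-- Reduce modulo a small element `α` of `I`, which exists by the pigeonhole principle.
lemma exists_small_representatives : ∃ M : ℕ, ∀ I : Ideal (𝓞 K), I ≠ ⊥ →
    ∃ c : ℕ, (c : ℝ) ≤ M * (Ideal.absNorm I : ℝ) ^ (Module.finrank ℚ K : ℝ)⁻¹ ∧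
      ∀ γ : 𝓞 K, ∃ δ, γ - δ ∈ I ∧ coordSup (NumberField.RingOfIntegers.basis K) δ ≤ c := by
  obtain ⟨M, hM⟩ := exists_coordSup_sub_mul_le (NumberField.RingOfIntegers.basis K)
  refine ⟨M, fun I hI => ?_⟩
  obtain ⟨α, hαI, hα0, hα⟩ := exists_mem_ne_zero_coordSup_le_absNorm hI
  obtain ⟨α', hα'⟩ := Ideal.mem_span_singleton.1 (Ideal.absNorm_mem (Ideal.span {α}))
  have hn : (Ideal.absNorm (Ideal.span {α}) : ℤ) ≠ 0 :=
    Nat.cast_ne_zero.2 (absNorm_ne_zero (by simpa using hα0))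
  refine ⟨M * coordSup (NumberField.RingOfIntegers.basis K) α, ?_, fun γ => ?_⟩
  · push_cast
    gcongr
  · obtain ⟨β, hβ⟩ := hM hn (by rw [← hα', Int.cast_natCast]) γ
    exact ⟨γ - α * β, by simpa using I.mul_mem_right β hαI, hβ⟩

open Classical in
lemma exists_abs_card_box_mul_absNorm_sub_le (B : ℝ) : ∃ D : ℝ, 0 ≤ D ∧
    ∀ I : Ideal (𝓞 K), I ≠ ⊥ → ∀ (z : 𝓞 K) (X : ℕ), 1 ≤ X →
      (Ideal.absNorm I : ℝ) ≤ (B * X) ^ Module.finrank ℚ K →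
      |((integerBox K z X).filter (· ∈ I)).card * (Ideal.absNorm I : ℝ)
          - (2 * X + 1) ^ Module.finrank ℚ K| ≤
        D * (2 * X + 1) ^ Module.finrank ℚ K *
          ((Ideal.absNorm I : ℝ) ^ (Module.finrank ℚ K : ℝ)⁻¹ / X) := by
  obtain ⟨M, hM⟩ := exists_small_representatives K
  refine ⟨Module.finrank ℚ K * (1 + M * |B|) ^ (Module.finrank ℚ K - 1) * M, by positivity,
    fun I hI z X hX hIX => ?_⟩
  have := finiteIndex_toAddSubgroup hI
  obtain ⟨c, hcr, hc⟩ := hM I hI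
  have hr : (Ideal.absNorm I : ℝ) ^ (Module.finrank ℚ K : ℝ)⁻¹ ≤ |B| * X := by
    rw [← Nat.abs_cast X, ← abs_mul, ← pow_le_pow_iff_left₀ (by positivity) (by positivity)
      (Module.finrank_pos (R := ℚ) (M := K)).ne', absNorm_rpow_inv_pow, pow_abs]
    exact hIX.trans (le_abs_self _)
  have hcX : (c : ℝ) ≤ M * |B| * X := hcr.trans (by rw [mul_assoc]; gcongr)
  have h := abs_card_box_mem_mul_index_sub_le (H := Submodule.toAddSubgroup I) _ hc z hX hcX
  rw [card_chooseBasisIndex] at h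
  calc _ ≤ _ := h
    _ ≤ Module.finrank ℚ K * (1 + M * |B|) ^ (Module.finrank ℚ K - 1) *
        (2 * X + 1) ^ Module.finrank ℚ K *
          (M * (Ideal.absNorm I : ℝ) ^ (Module.finrank ℚ K : ℝ)⁻¹ / X) := by gcongr
    _ = _ := by ring

end Count

section Norm

variable {K : Type*} [Field K] [NumberField K]

lemma absNorm_span_singleton_eq_prod (α : 𝓞 K) :
    (Ideal.absNorm (Ideal.span {α}) : ℝ) = ∏ σ : K →ₐ[ℚ] ℂ, ‖σ α‖ := by
  rw [Ideal.absNorm_span_singleton, ← norm_prod, ← Algebra.norm_eq_prod_embeddings ℚ ℂ (α : K),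
    ← Algebra.coe_norm_int]
  simp [Nat.cast_natAbs]

variable (K) in
lemma exists_norm_embedding_le : ∃ B : ℝ, 0 ≤ B ∧ ∀ (σ : K →ₐ[ℚ] ℂ) (α : 𝓞 K),
    ‖σ α‖ ≤ B * coordSup (NumberField.RingOfIntegers.basis K) α := by
  set b := NumberField.RingOfIntegers.basis K
  refine ⟨∑ i, ∑ σ : K →ₐ[ℚ] ℂ, ‖σ (b i)‖, by positivity, fun σ α => ?_⟩
  have hα : σ α = ∑ i, ((b.repr α i : ℤ) : ℂ) * σ (b i) := by
    conv_lhs => rw [← b.sum_repr α]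
    simp [zsmul_eq_mul]
  rw [hα, Finset.sum_mul]
  refine (norm_sum_le _ _).trans (Finset.sum_le_sum fun i _ => ?_)
  rw [norm_mul, Complex.norm_intCast, mul_comm]
  gcongr
  · exact Finset.single_le_sum (f := fun σ : K →ₐ[ℚ] ℂ => ‖σ (b i)‖)
      (fun _ _ => norm_nonneg _) (Finset.mem_univ σ)
  · exact_mod_cast abs_repr_le_coordSup b α i

variable (K) in
lemma exists_absNorm_mem_Icc : ∃ W : ℕ, 1 ≤ W ∧ ∀ X : ℕ, ∀ α ∈ integerBox K ((W * X : ℕ) : 𝓞 K) X,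
    Ideal.absNorm (Ideal.span {α}) ∈
      Set.Icc (X ^ Module.finrank ℚ K) ((2 * W * X) ^ Module.finrank ℚ K) := by
  obtain ⟨B, hB0, hB⟩ := exists_norm_embedding_le K
  obtain ⟨W, hW⟩ := exists_nat_ge (B + 1)
  refine ⟨W, by exact_mod_cast (by linarith : (1 : ℝ) ≤ W), fun X α hα => ?_⟩
  have hembed : ∀ σ : K →ₐ[ℚ] ℂ, X ≤ ‖σ α‖ ∧ ‖σ α‖ ≤ 2 * W * X := by
    intro σ
    have hdist : ‖σ α - (W * X : ℕ)‖ ≤ B * X := by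
      have := (hB σ (α - (W * X : ℕ))).trans
        (mul_le_mul_of_nonneg_left (Nat.cast_le.2 (mem_box.1 hα)) hB0)
      simpa using this
    have hcenter : ‖((W * X : ℕ) : ℂ)‖ = W * X := by rw [Complex.norm_natCast, Nat.cast_mul]
    have h1 := abs_le.1 ((abs_norm_sub_norm_le _ _).trans hdist)
    rw [hcenter] at h1
    constructor <;> nlinarith
  have hcard : Finset.card (Finset.univ : Finset (K →ₐ[ℚ] ℂ)) = Module.finrank ℚ K :=
    AlgHom.card ℚ K ℂ
  rw [Set.mem_Icc, ← Nat.cast_le (α := ℝ), ← Nat.cast_le (α := ℝ), absNorm_span_singleton_eq_prod,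
    ← hcard]
  push_cast
  rw [← Finset.prod_const, ← Finset.prod_const]
  exact ⟨Finset.prod_le_prod (fun _ _ => by positivity) fun σ _ => (hembed σ).1,
    Finset.prod_le_prod (fun _ _ => by positivity) fun σ _ => (hembed σ).2⟩

end Norm

/-! ### Norms and prime factorizations -/

section Factor

variable (K : Type*) [Field K] [NumberField K]

open Classical in
/-- The nonzero prime ideals of `𝓞 K` of norm at most `x`. -/
noncomputable def primesLe (x : ℕ) : Finset (Ideal (𝓞 K)) :=
  (Ideal.finite_setOfPred_absNorm_le (S := 𝓞 K) x).toFinset.filter fun 𝔭 => 𝔭.IsPrime ∧ 𝔭 ≠ ⊥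

variable {K}

lemma mem_primesLe {x : ℕ} {𝔭 : Ideal (𝓞 K)} :
    𝔭 ∈ primesLe K x ↔ 𝔭.IsPrime ∧ 𝔭 ≠ ⊥ ∧ Ideal.absNorm 𝔭 ≤ x := by
  simp only [primesLe, Finset.mem_filter, Set.Finite.mem_toFinset]
  exact and_comm.trans and_assoc

lemma two_le_absNorm {𝔭 : Ideal (𝓞 K)} [h𝔭 : 𝔭.IsPrime] (h0 : 𝔭 ≠ ⊥) : 2 ≤ Ideal.absNorm 𝔭 :=
  (Nat.two_le_iff _).2 ⟨absNorm_ne_zero h0, mt Ideal.absNorm_eq_one_iff.1 h𝔭.ne_top⟩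

lemma absNorm_pow_le_of_le_pow {𝔭 J : Ideal (𝓞 K)} {k : ℕ} (hJ : J ≠ ⊥) (h : J ≤ 𝔭 ^ k) :
    Ideal.absNorm 𝔭 ^ k ≤ Ideal.absNorm J := by
  rw [← map_pow]
  exact Nat.le_of_dvd (absNorm_ne_zero hJ).bot_lt (Ideal.absNorm_dvd_absNorm_of_le h)

lemma log_absNorm_nonneg (𝔭 : Ideal (𝓞 K)) : 0 ≤ Real.log (Ideal.absNorm 𝔭) :=
  Real.log_natCast_nonneg _

section NormalizedFactors

open UniqueFactorizationMonoid

lemma isPrime_and_ne_bot_of_mem_normalizedFactors {J 𝔭 : Ideal (𝓞 K)}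
    (h : 𝔭 ∈ normalizedFactors J) : 𝔭.IsPrime ∧ 𝔭 ≠ ⊥ :=
  have h𝔭 := prime_of_normalized_factor 𝔭 h
  ⟨Ideal.isPrime_of_prime h𝔭, h𝔭.ne_zero⟩

lemma le_pow_iff_le_count_normalizedFactors [DecidableEq (Ideal (𝓞 K))] {J 𝔭 : Ideal (𝓞 K)}
    [𝔭.IsPrime] (hJ : J ≠ ⊥) (h0 : 𝔭 ≠ ⊥) (k : ℕ) :
    J ≤ 𝔭 ^ k ↔ k ≤ (normalizedFactors J).count 𝔭 := by
  rw [← Ideal.dvd_iff_le, pow_dvd_iff_le_emultiplicity,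
    emultiplicity_eq_count_normalizedFactors (Ideal.prime_of_isPrime h0 ‹_›).irreducible hJ,
    normalize_eq, Nat.cast_le]

lemma log_absNorm_eq_sum_normalizedFactors {J : Ideal (𝓞 K)} (hJ : J ≠ ⊥) :
    Real.log (Ideal.absNorm J) =
      ((normalizedFactors J).map fun 𝔭 => Real.log (Ideal.absNorm 𝔭)).sum := by
  conv_lhs => rw [← Ideal.prod_normalizedFactors_eq_self hJ]
  rw [map_multiset_prod, Nat.cast_multiset_prod, Multiset.map_map, Real.log_multiset_prod,
    Multiset.map_map]
  · rfl
  · intro r hr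
    obtain ⟨𝔭, h𝔭, rfl⟩ := Multiset.mem_map.1 hr
    exact Nat.cast_ne_zero.2
      (absNorm_ne_zero (isPrime_and_ne_bot_of_mem_normalizedFactors h𝔭).2)

open Classical in
lemma log_absNorm_eq_sum_primesLe {J : Ideal (𝓞 K)} (hJ : J ≠ ⊥) {x : ℕ}
    (hx : Ideal.absNorm J ≤ x) :
    Real.log (Ideal.absNorm J) =
      ∑ 𝔭 ∈ primesLe K x, ∑ k ∈ Finset.Icc 1 (Nat.log (Ideal.absNorm 𝔭) x),
        if J ≤ 𝔭 ^ k then Real.log (Ideal.absNorm 𝔭) else 0 := by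
  have hsub : (normalizedFactors J).toFinset ⊆ primesLe K x := by
    intro 𝔭 h𝔭
    rw [Multiset.mem_toFinset] at h𝔭
    obtain ⟨hprime, h0⟩ := isPrime_and_ne_bot_of_mem_normalizedFactors h𝔭
    have hle := (le_pow_iff_le_count_normalizedFactors hJ h0 1).2
      (Multiset.one_le_count_iff_mem.2 h𝔭)
    exact mem_primesLe.2 ⟨hprime, h0, by simpa using (absNorm_pow_le_of_le_pow hJ hle).trans hx⟩
  rw [log_absNorm_eq_sum_normalizedFactors hJ, Finset.sum_multiset_map_count,
    Finset.sum_subset hsub fun 𝔭 _ h => by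
      rw [Multiset.count_eq_zero_of_notMem (mt Multiset.mem_toFinset.2 h), zero_smul]]
  refine Finset.sum_congr rfl fun 𝔭 h𝔭 => ?_
  obtain ⟨hprime, h0, -⟩ := mem_primesLe.1 h𝔭
  have hcount : (normalizedFactors J).count 𝔭 ≤ Nat.log (Ideal.absNorm 𝔭) x :=
    Nat.le_log_of_pow_le (two_le_absNorm h0) ((absNorm_pow_le_of_le_pow hJ
      ((le_pow_iff_le_count_normalizedFactors hJ h0 _).2 le_rfl)).trans hx)
  have hfilter : (Finset.Icc 1 (Nat.log (Ideal.absNorm 𝔭) x)).filter (J ≤ 𝔭 ^ ·) =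
      Finset.Icc 1 ((normalizedFactors J).count 𝔭) := by
    ext k
    rw [Finset.mem_filter, Finset.mem_Icc, Finset.mem_Icc,
      le_pow_iff_le_count_normalizedFactors hJ h0]
    omega
  rw [← Finset.sum_filter, hfilter, Finset.sum_const, Nat.card_Icc, Nat.add_sub_cancel]

end NormalizedFactors

lemma sum_log_absNorm_le {J : Ideal (𝓞 K)} (hJ : J ≠ ⊥) {S : Finset (Ideal (𝓞 K))}
    (hS : ∀ 𝔭 ∈ S, 𝔭.IsPrime ∧ J ≤ 𝔭) :
    ∑ 𝔭 ∈ S, Real.log (Ideal.absNorm 𝔭) ≤ Real.log (Ideal.absNorm J) := by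
  have h0 : ∀ 𝔭 ∈ S, 𝔭 ≠ ⊥ := fun 𝔭 h h' => hJ (by simpa [h'] using (hS 𝔭 h).2)
  have hprod : ∏ 𝔭 ∈ S, 𝔭 ∣ J := Finset.prod_dvd_of_coprime (fun 𝔭 h𝔭 𝔮 h𝔮 hne => by
    have := (hS 𝔭 h𝔭).1.isMaximal (h0 𝔭 h𝔭)
    have := (hS 𝔮 h𝔮).1.isMaximal (h0 𝔮 h𝔮)
    exact Ideal.isCoprime_iff_sup_eq.2 (Ideal.IsMaximal.coprime_of_ne ‹_› ‹_› hne))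
    fun 𝔭 h𝔭 => Ideal.dvd_iff_le.2 (hS 𝔭 h𝔭).2
  have hnorm : (∏ 𝔭 ∈ S, (Ideal.absNorm 𝔭 : ℝ)) ≤ Ideal.absNorm J := by
    have := Nat.le_of_dvd (absNorm_ne_zero hJ).bot_lt
      (Ideal.absNorm_dvd_absNorm_of_le (Ideal.dvd_iff_le.1 hprod))
    rw [map_prod] at this
    exact_mod_cast this
  have hpos : ∀ 𝔭 ∈ S, (0 : ℝ) < Ideal.absNorm 𝔭 := fun 𝔭 h =>
    Nat.cast_pos.2 (absNorm_ne_zero (h0 𝔭 h)).bot_lt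
  rw [← Real.log_prod fun 𝔭 h => (hpos 𝔭 h).ne']
  exact Real.log_le_log (Finset.prod_pos hpos) hnorm

end Factor

/-! ### Sums over primes -/

lemma sum_Icc_mul_le_of_antitoneOn {a g : ℕ → ℝ} {c : ℝ} (hg0 : ∀ n, 0 ≤ g n)
    (hg : AntitoneOn g (Set.Ici 1)) (ha : ∀ x : ℕ, ∑ n ∈ Finset.Icc 1 x, a n ≤ c * x) (x : ℕ) :
    ∑ n ∈ Finset.Icc 1 x, a n * g n ≤ c * ∑ n ∈ Finset.Icc 1 x, g n := by
  obtain rfl | hx := x.eq_zero_or_pos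
  · simp
  have habel : ∑ n ∈ Finset.Icc 1 x, a n * g n - c * ∑ n ∈ Finset.Icc 1 x, g n ≤
      (∑ n ∈ Finset.Icc 1 x, a n - c * x) * g x := by
    induction x, hx using Nat.le_induction with
    | base => simp [sub_mul]
    | succ m hm ih =>
      simp only [Finset.sum_Icc_succ_top (Nat.le_add_left 1 m)]
      have := hg (Set.mem_Ici.2 hm) (Set.mem_Ici.2 (hm.trans m.le_succ)) m.le_succ
      have := mul_le_mul_of_nonpos_left this (sub_nonpos.2 (ha m))
      push_cast
      linarith
  linarith [mul_nonpos_of_nonpos_of_nonneg (sub_nonpos.2 (ha x)) (hg0 x)]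

lemma sum_Icc_rpow_sub_one_le {a : ℝ} (ha : 0 < a) (ha1 : a ≤ 1) (x : ℕ) :
    ∑ n ∈ Finset.Icc 1 x, (n : ℝ) ^ (a - 1) ≤ (x : ℝ) ^ a / a := by
  induction x with
  | zero => simp [Real.zero_rpow ha.ne']
  | succ m ih =>
    rw [Finset.sum_Icc_succ_top (Nat.le_add_left 1 m)]
    have hy : (0 : ℝ) < (m + 1 : ℕ) := by positivity
    set y : ℝ := ((m + 1 : ℕ) : ℝ) with hym
    have hm : (m : ℝ) = y * (1 + -y⁻¹) := by
      field_simp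
      rw [hym]
      push_cast
      ring
    have hy1 : y⁻¹ ≤ 1 := inv_le_one_of_one_le₀ (Nat.one_le_cast.2 m.succ_pos)
    have hbernoulli : (m : ℝ) ^ a ≤ y ^ a * (1 + a * -y⁻¹) := by
      rw [hm, Real.mul_rpow hy.le (by linarith)]
      gcongr
      exact rpow_one_add_le_one_add_mul_self (by linarith) ha.le ha1
    calc _ ≤ (m : ℝ) ^ a / a + y ^ (a - 1) := by gcongr
      _ ≤ y ^ a * (1 + a * -y⁻¹) / a + y ^ (a - 1) := by gcongr
      _ = y ^ a / a := by
          rw [Real.rpow_sub_one hy.ne']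
          field_simp
          ring

lemma sum_primesLE_eq_sum_Icc (f : ℕ → ℝ) (x : ℕ) :
    ∑ p ∈ Nat.primesLE x, f p = ∑ n ∈ Finset.Icc 1 x, if n.Prime then f n else 0 := by
  rw [← Finset.sum_filter]
  refine Finset.sum_congr (Finset.ext fun p => ?_) fun _ _ => rfl
  rw [Nat.mem_primesLE, Finset.mem_filter, Finset.mem_Icc]
  exact ⟨fun h => ⟨⟨h.2.one_le, h.1⟩, h.2⟩, fun h => ⟨h.1.2, h.2⟩⟩

lemma sum_log_mul_rpow_le {a : ℝ} (ha : 0 < a) (ha1 : a ≤ 1) (x : ℕ) :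
    ∑ p ∈ Nat.primesLE x, Real.log p * (p : ℝ) ^ (a - 1) ≤ Real.log 4 * ((x : ℝ) ^ a / a) := by
  have htheta : ∀ x : ℕ,
      ∑ n ∈ Finset.Icc 1 x, (if n.Prime then Real.log n else 0) ≤ Real.log 4 * x := fun x => by
    rw [← sum_primesLE_eq_sum_Icc (fun n => Real.log n), ← Chebyshev.theta_eq_sum_primesLE_log]
    exact Chebyshev.theta_le_log4_mul_x x.cast_nonneg
  have hanti : AntitoneOn (fun n : ℕ => (n : ℝ) ^ (a - 1)) (Set.Ici 1) := fun m hm n _ hmn =>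
    Real.rpow_le_rpow_of_nonpos (by exact_mod_cast hm) (by exact_mod_cast hmn) (by linarith)
  rw [sum_primesLE_eq_sum_Icc (fun n => Real.log n * (n : ℝ) ^ (a - 1))]
  simp only [← ite_zero_mul]
  refine (sum_Icc_mul_le_of_antitoneOn (fun n => by positivity) hanti htheta x).trans ?_
  gcongr
  exact sum_Icc_rpow_sub_one_le ha ha1 x

lemma exists_sum_log_div_sq_le : ∃ C : ℝ, ∀ x : ℕ,
    ∑ p ∈ Nat.primesLE x, Real.log p * ((p : ℝ) ^ 2)⁻¹ ≤ C := by
  have hsum : Summable fun n : ℕ => 2 * ((n : ℝ) ^ (3 / 2 : ℝ))⁻¹ :=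
    (Real.summable_nat_rpow_inv.2 (by norm_num)).mul_left 2
  refine ⟨_, fun x => le_trans (Finset.sum_le_sum fun p hp => ?_)
    (hsum.sum_le_tsum (Nat.primesLE x) fun n _ => by positivity)⟩
  have hp0 : (0 : ℝ) < p := Nat.cast_pos.2 (Nat.mem_primesLE.1 hp).2.pos
  have hlog : Real.log p ≤ 2 * (p : ℝ) ^ (1 / 2 : ℝ) := by
    linarith [Real.log_le_rpow_div hp0.le (ε := 1 / 2) (by norm_num)]
  have hsplit : (p : ℝ) ^ 2 = (p : ℝ) ^ (3 / 2 : ℝ) * (p : ℝ) ^ (1 / 2 : ℝ) := by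
    rw [← Real.rpow_add hp0]
    norm_num
  calc Real.log p * ((p : ℝ) ^ 2)⁻¹ ≤ 2 * (p : ℝ) ^ (1 / 2 : ℝ) * ((p : ℝ) ^ 2)⁻¹ := by gcongr
    _ = 2 * ((p : ℝ) ^ (3 / 2 : ℝ))⁻¹ := by
        rw [hsplit]
        field_simp

section NumberField

variable {K : Type*} [Field K] [NumberField K]

lemma prime_minFac_absNorm {𝔭 : Ideal (𝓞 K)} [𝔭.IsPrime] : (Ideal.absNorm 𝔭).minFac.Prime :=
  Nat.minFac_prime (mt Ideal.absNorm_eq_one_iff.1 (Ideal.IsPrime.ne_top ‹_›))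

lemma minFac_absNorm_mem {𝔭 : Ideal (𝓞 K)} [𝔭.IsPrime] (h0 : 𝔭 ≠ ⊥) :
    ((Ideal.absNorm 𝔭).minFac : 𝓞 K) ∈ 𝔭 := by
  have := Ideal.IsPrime.isMaximal ‹_› h0
  obtain ⟨p, f, hf0, hmem, hp, hf⟩ := Ideal.exists_prime_and_absNorm_eq_pow 𝔭
  rwa [hf, hp.pow_minFac hf0.ne']

lemma minFac_absNorm_le {I : Ideal (𝓞 K)} (h0 : I ≠ ⊥) :
    (Ideal.absNorm I).minFac ≤ Ideal.absNorm I :=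
  Nat.minFac_le (absNorm_ne_zero h0).bot_lt

open Classical in
lemma sum_log_absNorm_minFac_eq_le {p : ℕ} (hp : p ≠ 0) {x : ℕ} {S : Finset (Ideal (𝓞 K))}
    (hS : S ⊆ primesLe K x) :
    ∑ 𝔭 ∈ S with (Ideal.absNorm 𝔭).minFac = p, Real.log (Ideal.absNorm 𝔭) ≤
      Module.finrank ℚ K * Real.log p := by
  have h := sum_log_absNorm_le (J := Ideal.span {(p : 𝓞 K)})
    (S := S.filter fun 𝔭 => (Ideal.absNorm 𝔭).minFac = p) (by simpa using hp) fun 𝔭 h𝔭 => by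
      obtain ⟨h𝔭S, rfl⟩ := Finset.mem_filter.1 h𝔭
      obtain ⟨hprime, h0, -⟩ := mem_primesLe.1 (hS h𝔭S)
      exact ⟨hprime, (Ideal.span_singleton_le_iff_mem _).2 (minFac_absNorm_mem h0)⟩
  rwa [Ideal.absNorm_span_natCast, NumberField.RingOfIntegers.rank, Nat.cast_pow,
    Real.log_pow] at h

/-- Only the residue characteristic of `𝔭` enters the weight `h`, and `∏_{𝔭 ∣ p} N(𝔭) ≤ p ^ d`. -/
lemma sum_log_absNorm_mul_le {x : ℕ} {S : Finset (Ideal (𝓞 K))} (hS : S ⊆ primesLe K x)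
    {w : Ideal (𝓞 K) → ℝ} {h : ℕ → ℝ} (h0 : ∀ n, 0 ≤ h n)
    (hw : ∀ 𝔭 ∈ S, w 𝔭 ≤ h (Ideal.absNorm 𝔭).minFac) :
    ∑ 𝔭 ∈ S, Real.log (Ideal.absNorm 𝔭) * w 𝔭 ≤
      Module.finrank ℚ K * ∑ p ∈ Nat.primesLE x, Real.log p * h p := by
  classical
  have hmaps : ∀ 𝔭 ∈ S, (Ideal.absNorm 𝔭).minFac ∈ Nat.primesLE x := fun 𝔭 h𝔭 => by
    obtain ⟨hprime, hne, hx⟩ := mem_primesLe.1 (hS h𝔭)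
    exact Nat.mem_primesLE.2 ⟨(minFac_absNorm_le hne).trans hx, prime_minFac_absNorm⟩
  rw [← Finset.sum_fiberwise_of_maps_to hmaps, Finset.mul_sum]
  refine Finset.sum_le_sum fun p hp => ?_
  calc _ ≤ ∑ 𝔭 ∈ S with (Ideal.absNorm 𝔭).minFac = p, Real.log (Ideal.absNorm 𝔭) * h p := by
        refine Finset.sum_le_sum fun 𝔭 h𝔭 => ?_
        obtain ⟨h𝔭S, rfl⟩ := Finset.mem_filter.1 h𝔭
        exact mul_le_mul_of_nonneg_left (hw 𝔭 h𝔭S) (log_absNorm_nonneg _)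
    _ ≤ Module.finrank ℚ K * Real.log p * h p := by
        rw [← Finset.sum_mul]
        exact mul_le_mul_of_nonneg_right
          (sum_log_absNorm_minFac_eq_le (Nat.mem_primesLE.1 hp).2.ne_zero hS) (h0 p)
    _ = _ := mul_assoc _ _ _

variable (K)

lemma exists_sum_log_mul_rpow_absNorm_le : ∃ C : ℝ, 0 ≤ C ∧ ∀ x : ℕ,
    ∑ 𝔭 ∈ primesLe K x, Real.log (Ideal.absNorm 𝔭) *
      (Ideal.absNorm 𝔭 : ℝ) ^ ((Module.finrank ℚ K : ℝ)⁻¹ - 1) ≤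
        C * (x : ℝ) ^ (Module.finrank ℚ K : ℝ)⁻¹ := by
  have hd1 : (1 : ℝ) ≤ Module.finrank ℚ K := by
    exact_mod_cast (Module.finrank_pos : 0 < Module.finrank ℚ K)
  have ha : (0 : ℝ) < (Module.finrank ℚ K : ℝ)⁻¹ := by positivity
  have ha1 : (Module.finrank ℚ K : ℝ)⁻¹ ≤ 1 := inv_le_one_of_one_le₀ hd1
  refine ⟨Module.finrank ℚ K * (Real.log 4 / (Module.finrank ℚ K : ℝ)⁻¹), by positivity,
    fun x => ?_⟩
  calc _ ≤ Module.finrank ℚ K * ∑ p ∈ Nat.primesLE x,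
        Real.log p * (p : ℝ) ^ ((Module.finrank ℚ K : ℝ)⁻¹ - 1) :=
        sum_log_absNorm_mul_le subset_rfl (h := fun n => (n : ℝ) ^ ((Module.finrank ℚ K : ℝ)⁻¹ - 1))
          (fun n => by positivity) fun 𝔭 h𝔭 => by
            obtain ⟨hprime, h0, -⟩ := mem_primesLe.1 h𝔭
            exact Real.rpow_le_rpow_of_nonpos (Nat.cast_pos.2 prime_minFac_absNorm.pos)
              (Nat.cast_le.2 (minFac_absNorm_le h0)) (by linarith)
    _ ≤ Module.finrank ℚ K * (Real.log 4 *
        ((x : ℝ) ^ (Module.finrank ℚ K : ℝ)⁻¹ / (Module.finrank ℚ K : ℝ)⁻¹)) := by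
        gcongr
        exact sum_log_mul_rpow_le ha ha1 x
    _ = _ := by ring

lemma exists_sum_log_mul_le_of_le_minFac_sq_inv : ∃ C : ℝ, 0 ≤ C ∧
    ∀ (x : ℕ) (S : Finset (Ideal (𝓞 K))) (w : Ideal (𝓞 K) → ℝ), S ⊆ primesLe K x →
      (∀ 𝔭 ∈ S, w 𝔭 ≤ (((Ideal.absNorm 𝔭).minFac : ℝ) ^ 2)⁻¹) →
        ∑ 𝔭 ∈ S, Real.log (Ideal.absNorm 𝔭) * w 𝔭 ≤ C := by
  obtain ⟨C, hC⟩ := exists_sum_log_div_sq_le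
  have hC0 : 0 ≤ C := by simpa using hC 0
  exact ⟨Module.finrank ℚ K * C, by positivity, fun x S w hS hw =>
    (sum_log_absNorm_mul_le hS (h := fun n => ((n : ℝ) ^ 2)⁻¹) (fun n => by positivity) hw).trans
      (mul_le_mul_of_nonneg_left (hC x) (by positivity))⟩

lemma exists_sum_log_mul_sq_inv_absNorm_le : ∃ C : ℝ, 0 ≤ C ∧ ∀ x : ℕ,
    ∑ 𝔭 ∈ primesLe K x, Real.log (Ideal.absNorm 𝔭) * ((Ideal.absNorm 𝔭 : ℝ) ^ 2)⁻¹ ≤ C := by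
  obtain ⟨C, hC0, hC⟩ := exists_sum_log_mul_le_of_le_minFac_sq_inv K
  refine ⟨C, hC0, fun x => hC x _ _ subset_rfl fun 𝔭 h𝔭 => ?_⟩
  obtain ⟨hprime, h0, -⟩ := mem_primesLe.1 h𝔭
  have := (prime_minFac_absNorm (𝔭 := 𝔭)).pos
  gcongr
  exact minFac_absNorm_le h0

lemma exists_sum_log_div_absNorm_not_prime_le : ∃ C : ℝ, 0 ≤ C ∧ ∀ x : ℕ,
    ∑ 𝔭 ∈ primesLe K x with ¬ (Ideal.absNorm 𝔭).Prime,
      Real.log (Ideal.absNorm 𝔭) * (Ideal.absNorm 𝔭 : ℝ)⁻¹ ≤ C := by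
  obtain ⟨C, hC0, hC⟩ := exists_sum_log_mul_le_of_le_minFac_sq_inv K
  refine ⟨C, hC0, fun x => hC x _ _ (Finset.filter_subset _ _) fun 𝔭 h𝔭 => ?_⟩
  obtain ⟨h𝔭x, hnot⟩ := Finset.mem_filter.1 h𝔭
  obtain ⟨hprime, h0, -⟩ := mem_primesLe.1 h𝔭x
  have := (prime_minFac_absNorm (𝔭 := 𝔭)).pos
  gcongr
  exact_mod_cast Nat.minFac_sq_le_self (absNorm_ne_zero h0).bot_lt hnot

end NumberField

/-! ### Mertens' theorem for number fields -/

section Mertens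

lemma sum_Icc_two_inv_pow_le {n : ℝ} (hn : 2 ≤ n) (m : ℕ) :
    ∑ k ∈ Finset.Icc 2 m, (n ^ k)⁻¹ ≤ 2 * (n ^ 2)⁻¹ := by
  have hlt : n⁻¹ < 1 := inv_lt_one_of_one_lt₀ (by linarith)
  have hhalf : n⁻¹ ≤ 2⁻¹ := inv_anti₀ two_pos hn
  have h := geom_sum_Ico_le_of_lt_one (m := 2) (n := m + 1) (by positivity) hlt
  rw [Finset.Ico_add_one_right_eq_Icc] at h
  simp only [inv_pow] at h
  refine h.trans ?_
  rw [div_le_iff₀ (by linarith)]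
  nlinarith [inv_nonneg.2 (sq_nonneg n)]

lemma abs_sum_Icc_sub_mul_inv_le {n V E A : ℝ} {m : ℕ} {f : ℕ → ℝ} (hn : 2 ≤ n) (hm : 1 ≤ m)
    (hA : 0 ≤ A) (hf : ∀ k, 0 ≤ f k) (h1 : |f 1 * n - V| ≤ E)
    (h2 : ∀ k ∈ Finset.Icc 2 m, f k * n ^ k ≤ A) :
    |∑ k ∈ Finset.Icc 1 m, f k - V * n⁻¹| ≤ E * n⁻¹ + 2 * A * (n ^ 2)⁻¹ := by
  have hn0 : 0 < n := by linarith
  have htail : ∑ k ∈ Finset.Icc 2 m, f k ≤ 2 * A * (n ^ 2)⁻¹ :=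
    calc ∑ k ∈ Finset.Icc 2 m, f k ≤ ∑ k ∈ Finset.Icc 2 m, A * (n ^ k)⁻¹ :=
          Finset.sum_le_sum fun k hk => by
            rw [← div_eq_mul_inv, le_div_iff₀ (by positivity)]
            exact h2 k hk
      _ = A * ∑ k ∈ Finset.Icc 2 m, (n ^ k)⁻¹ := (Finset.mul_sum _ _ _).symm
      _ ≤ A * (2 * (n ^ 2)⁻¹) := mul_le_mul_of_nonneg_left (sum_Icc_two_inv_pow_le hn m) hA
      _ = 2 * A * (n ^ 2)⁻¹ := by ring
  have hhead : |f 1 - V * n⁻¹| ≤ E * n⁻¹ := by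
    rw [← div_eq_mul_inv E, le_div_iff₀ hn0, ← abs_of_pos hn0, ← abs_mul, abs_of_pos hn0, sub_mul,
      inv_mul_cancel_right₀ hn0.ne']
    exact h1
  rw [← Finset.insert_Icc_succ_left_eq_Icc hm, Finset.sum_insert (by simp), add_sub_right_comm]
  refine (abs_add_le _ _).trans (add_le_add hhead ?_)
  rwa [abs_of_nonneg (Finset.sum_nonneg fun k _ => hf k)]

variable {K : Type*} [Field K] [NumberField K]

lemma primesLe_mono {x y : ℕ} (h : x ≤ y) : primesLe K x ⊆ primesLe K y := fun _ h𝔭 =>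
  have ⟨h𝔭', h0, hx⟩ := mem_primesLe.1 h𝔭
  mem_primesLe.2 ⟨h𝔭', h0, hx.trans h⟩

open Classical in
lemma sum_log_absNorm_span_singleton {Q : Finset (𝓞 K)} {Z : ℕ}
    (hQ : ∀ α ∈ Q, α ≠ 0 ∧ Ideal.absNorm (Ideal.span {α}) ≤ Z) :
    ∑ α ∈ Q, Real.log (Ideal.absNorm (Ideal.span {α})) =
      ∑ 𝔭 ∈ primesLe K Z, Real.log (Ideal.absNorm 𝔭) *
        ∑ k ∈ Finset.Icc 1 (Nat.log (Ideal.absNorm 𝔭) Z), ((Q.filter (· ∈ 𝔭 ^ k)).card : ℝ) := by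
  have hα : ∀ α ∈ Q, Real.log (Ideal.absNorm (Ideal.span {α})) = ∑ 𝔭 ∈ primesLe K Z,
      ∑ k ∈ Finset.Icc 1 (Nat.log (Ideal.absNorm 𝔭) Z),
        if α ∈ 𝔭 ^ k then Real.log (Ideal.absNorm 𝔭) else 0 := fun α hα => by
    rw [log_absNorm_eq_sum_primesLe (mt Ideal.span_singleton_eq_bot.1 (hQ α hα).1) (hQ α hα).2]
    simp only [Ideal.span_singleton_le_iff_mem]
  rw [Finset.sum_congr rfl hα, Finset.sum_comm]
  refine Finset.sum_congr rfl fun 𝔭 _ => ?_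
  rw [Finset.sum_comm, Finset.mul_sum]
  refine Finset.sum_congr rfl fun k _ => ?_
  rw [← Finset.sum_filter, Finset.sum_const, nsmul_eq_mul, mul_comm]

open Classical in
lemma exists_abs_sum_card_box_pow_sub_le (K : Type*) [Field K] [NumberField K] (B : ℕ) :
    ∃ D : ℝ, 0 ≤ D ∧ ∀ X : ℕ, 1 ≤ X → ∀ z : 𝓞 K,
      ∀ 𝔭 ∈ primesLe K ((B * X) ^ Module.finrank ℚ K),
      |∑ k ∈ Finset.Icc 1 (Nat.log (Ideal.absNorm 𝔭) ((B * X) ^ Module.finrank ℚ K)),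
          (((integerBox K z X).filter (· ∈ 𝔭 ^ k)).card : ℝ) -
          (2 * X + 1) ^ Module.finrank ℚ K * (Ideal.absNorm 𝔭 : ℝ)⁻¹| ≤
        (2 * X + 1) ^ Module.finrank ℚ K *
          (D / X * (Ideal.absNorm 𝔭 : ℝ) ^ ((Module.finrank ℚ K : ℝ)⁻¹ - 1) +
            2 * (1 + D * B) * ((Ideal.absNorm 𝔭 : ℝ) ^ 2)⁻¹) := by
  obtain ⟨D, hD0, hD⟩ := exists_abs_card_box_mul_absNorm_sub_le (K := K) B
  refine ⟨D, hD0, fun X hX z 𝔭 h𝔭 => ?_⟩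
  obtain ⟨h𝔭', h0, hx⟩ := mem_primesLe.1 h𝔭
  set d := Module.finrank ℚ K
  have hd : d ≠ 0 := Module.finrank_pos.ne'
  have hX0 : (0 : ℝ) < X := by exact_mod_cast hX
  have hn : 2 ≤ Ideal.absNorm 𝔭 := two_le_absNorm h0
  have hcount : ∀ k, 1 ≤ k → k ≤ Nat.log (Ideal.absNorm 𝔭) ((B * X) ^ d) →
      (Ideal.absNorm (𝔭 ^ k) : ℝ) ≤ (B * X) ^ d := fun k _ hk => by
    rw [map_pow]
    exact_mod_cast Nat.pow_le_of_le_log (by omega) hk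
  have hm : 1 ≤ Nat.log (Ideal.absNorm 𝔭) ((B * X) ^ d) := Nat.log_pos hn hx
  have h := abs_sum_Icc_sub_mul_inv_le (n := Ideal.absNorm 𝔭)
    (f := fun k => (((integerBox K z X).filter (· ∈ 𝔭 ^ k)).card : ℝ))
    (A := (1 + D * B) * (2 * X + 1) ^ d) (by exact_mod_cast hn) hm (by positivity)
    (fun k => by positivity)
    (by simpa only [pow_one] using hD (𝔭 ^ 1) (pow_ne_zero 1 h0) z X hX (hcount 1 le_rfl hm))
    fun k hk => ?_
  · refine h.trans_eq ?_
    rw [Real.rpow_sub_one (by positivity)]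
    ring
  · obtain ⟨hk2, hkm⟩ := Finset.mem_Icc.1 hk
    have hN := hcount k (by omega) hkm
    have hroot : (Ideal.absNorm (𝔭 ^ k) : ℝ) ^ (d : ℝ)⁻¹ / X ≤ B := by
      rw [div_le_iff₀ hX0, ← pow_le_pow_iff_left₀ (by positivity) (by positivity) hd,
        absNorm_rpow_inv_pow]
      exact hN
    have hcard := (abs_le.1 (hD (𝔭 ^ k) (pow_ne_zero k h0) z X hX hN)).2
    have hE := mul_le_mul_of_nonneg_left hroot (show 0 ≤ D * (2 * (X : ℝ) + 1) ^ d by positivity)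
    rw [map_pow, Nat.cast_pow] at hcard hE
    linarith

lemma exists_abs_sum_log_absNorm_box_sub_le (K : Type*) [Field K] [NumberField K] (B : ℕ) :
    ∃ C : ℝ, ∀ X : ℕ, 1 ≤ X → ∀ z : 𝓞 K,
      (∀ α ∈ integerBox K z X,
        α ≠ 0 ∧ Ideal.absNorm (Ideal.span {α}) ≤ (B * X) ^ Module.finrank ℚ K) →
      |∑ α ∈ integerBox K z X, Real.log (Ideal.absNorm (Ideal.span {α})) -
        (2 * X + 1) ^ Module.finrank ℚ K * ∑ 𝔭 ∈ primesLe K ((B * X) ^ Module.finrank ℚ K),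
          Real.log (Ideal.absNorm 𝔭) * (Ideal.absNorm 𝔭 : ℝ)⁻¹| ≤
        (2 * X + 1) ^ Module.finrank ℚ K * C := by
  classical
  obtain ⟨D, hD0, hD⟩ := exists_abs_sum_card_box_pow_sub_le K B
  obtain ⟨C₁, -, hC₁⟩ := exists_sum_log_mul_rpow_absNorm_le K
  obtain ⟨C₂, -, hC₂⟩ := exists_sum_log_mul_sq_inv_absNorm_le K
  refine ⟨D * C₁ * B + 2 * (1 + D * B) * C₂, fun X hX z hbox => ?_⟩
  set d := Module.finrank ℚ K
  set Z := (B * X) ^ d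
  have hroot : (Z : ℝ) ^ (d : ℝ)⁻¹ = B * X := by
    rw [Nat.cast_pow, Real.pow_rpow_inv_natCast (by positivity) Module.finrank_pos.ne',
      Nat.cast_mul]
  have hX0 : (X : ℝ) ≠ 0 := by positivity
  rw [sum_log_absNorm_span_singleton hbox, Finset.mul_sum, ← Finset.sum_sub_distrib]
  calc _ ≤ ∑ 𝔭 ∈ primesLe K Z, Real.log (Ideal.absNorm 𝔭) * ((2 * X + 1) ^ d *
          (D / X * (Ideal.absNorm 𝔭 : ℝ) ^ ((d : ℝ)⁻¹ - 1) +
            2 * (1 + D * B) * ((Ideal.absNorm 𝔭 : ℝ) ^ 2)⁻¹)) := by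
        refine (Finset.abs_sum_le_sum_abs _ _).trans (Finset.sum_le_sum fun 𝔭 h𝔭 => ?_)
        rw [mul_left_comm, ← mul_sub, abs_mul, abs_of_nonneg (log_absNorm_nonneg 𝔭)]
        exact mul_le_mul_of_nonneg_left (hD X hX z 𝔭 h𝔭) (log_absNorm_nonneg 𝔭)
    _ = (2 * X + 1) ^ d * (D / X * ∑ 𝔭 ∈ primesLe K Z,
          Real.log (Ideal.absNorm 𝔭) * (Ideal.absNorm 𝔭 : ℝ) ^ ((d : ℝ)⁻¹ - 1) +
          2 * (1 + D * B) * ∑ 𝔭 ∈ primesLe K Z,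
            Real.log (Ideal.absNorm 𝔭) * ((Ideal.absNorm 𝔭 : ℝ) ^ 2)⁻¹) := by
        simp only [Finset.mul_sum, ← Finset.sum_add_distrib]
        exact Finset.sum_congr rfl fun 𝔭 _ => by ring
    _ ≤ (2 * X + 1) ^ d * (D / X * (C₁ * (Z : ℝ) ^ (d : ℝ)⁻¹) + 2 * (1 + D * B) * C₂) := by
        gcongr
        exacts [hC₁ Z, hC₂ Z]
    _ = _ := by
        rw [hroot]
        field_simp

lemma abs_sum_sub_card_mul_log_le {ι : Type*} {s : Finset ι} {f : ι → ℕ} {a b : ℕ} (ha : 0 < a)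
    (hf : ∀ i ∈ s, f i ∈ Set.Icc a b) :
    |∑ i ∈ s, Real.log (f i) - s.card * Real.log a| ≤ s.card * (Real.log b - Real.log a) := by
  rw [← nsmul_eq_mul, ← Finset.sum_const, ← Finset.sum_sub_distrib, ← nsmul_eq_mul]
  refine (Finset.abs_sum_le_sum_abs _ _).trans (Finset.sum_le_card_nsmul _ _ _ fun i hi => ?_)
  have ⟨hai, hib⟩ := hf i hi
  have hlow : Real.log a ≤ Real.log (f i) := Real.log_le_log (by positivity) (by exact_mod_cast hai)
  rw [abs_of_nonneg (sub_nonneg.2 hlow)]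
  gcongr
  exact_mod_cast ha.trans_le hai

lemma exists_abs_sum_log_div_absNorm_pow_sub_le (K : Type*) [Field K] [NumberField K] :
    ∃ M : ℕ, 1 ≤ M ∧ ∃ C : ℝ, ∀ X : ℕ, 1 ≤ X →
      |∑ 𝔭 ∈ primesLe K ((M * X) ^ Module.finrank ℚ K),
        Real.log (Ideal.absNorm 𝔭) * (Ideal.absNorm 𝔭 : ℝ)⁻¹ -
          Module.finrank ℚ K * Real.log X| ≤ C := by
  obtain ⟨W, hW, hWbox⟩ := exists_absNorm_mem_Icc K
  obtain ⟨C, hC⟩ := exists_abs_sum_log_absNorm_box_sub_le K (2 * W)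
  refine ⟨2 * W, by omega, Module.finrank ℚ K * Real.log (2 * W) + C, fun X hX => ?_⟩
  have hnorm := hWbox X
  generalize ((W * X : ℕ) : 𝓞 K) = z at hnorm
  set d := Module.finrank ℚ K with hd
  have hV : (0 : ℝ) < (2 * X + 1) ^ d := by positivity
  have hlower : 0 < X ^ d := by positivity
  have hbox := hC X hX z fun α hα => by
    refine ⟨?_, (hnorm α hα).2⟩
    rintro rfl
    exact absurd (hlower.trans_le (hnorm 0 hα).1) (by simp)
  have hlog := abs_sum_sub_card_mul_log_le hlower hnorm
  have hW0 : (0 : ℝ) < W := by exact_mod_cast hW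
  have hX0 : (0 : ℝ) < X := by exact_mod_cast hX
  rw [card_box, card_chooseBasisIndex, ← hd] at hlog
  push_cast [Real.log_pow, Real.log_mul (mul_pos two_pos hW0).ne' hX0.ne'] at hlog
  have h := (abs_sub_le _ _ _).trans (add_le_add ((abs_sub_comm _ _).trans_le hbox) hlog)
  rw [← mul_sub, abs_mul, abs_of_pos hV] at h
  refine le_of_mul_le_mul_left (h.trans_eq ?_) hV
  ring

lemma exists_abs_sub_log_le_of_pow {f : ℕ → ℝ} (hf : Monotone f) {d M : ℕ} {C : ℝ} (hd : d ≠ 0)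
    (hM : 1 ≤ M) (h : ∀ X : ℕ, 1 ≤ X → |f ((M * X) ^ d) - d * Real.log X| ≤ C) :
    ∃ C' : ℝ, ∀ x : ℕ, 1 ≤ x → |f x - Real.log x| ≤ C' := by
  have hM0 : (0 : ℝ) < M := by exact_mod_cast hM
  have hC : 0 ≤ C := (abs_nonneg _).trans (h 1 le_rfl)
  have hlogM : 0 ≤ Real.log M := Real.log_natCast_nonneg M
  have hlog2 : 0 < Real.log 2 := Real.log_pos one_lt_two
  refine ⟨|f 0| + d * (Real.log 2 + Real.log M) + C, fun x hx => ?_⟩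
  set X := Nat.nthRoot d x / M
  have hlow : (M * X) ^ d ≤ x :=
    (Nat.pow_le_pow_left (Nat.mul_div_le _ _) d).trans (Nat.pow_nthRoot_le (Or.inl hd))
  have hup : x ≤ (M * (X + 1)) ^ d :=
    ((Nat.lt_pow_nthRoot_add_one hd x).trans_le
      (Nat.pow_le_pow_left (Nat.lt_mul_div_succ _ hM) d)).le
  have hfup := (abs_le.1 (h (X + 1) (Nat.le_add_left 1 X))).2
  have hfx := hf hup
  have hlogx : Real.log x ≤ d * (Real.log M + Real.log ↑(X + 1)) := by
    rw [← Real.log_mul hM0.ne' (by positivity), ← Real.log_pow]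
    exact Real.log_le_log (by positivity) (by exact_mod_cast hup)
  have habs := neg_abs_le (f 0)
  obtain hX | hX := Nat.eq_zero_or_pos X
  · have hx0 := Real.log_natCast_nonneg x
    have hf0 := hf (Nat.zero_le x)
    simp only [hX, zero_add, Nat.cast_one, Real.log_one, mul_zero, add_zero] at hfup hfx hlogx
    rw [abs_le]
    constructor <;> nlinarith [abs_nonneg (f 0)]
  · have hX0 : (0 : ℝ) < X := by exact_mod_cast hX
    have hlogX : d * (Real.log M + Real.log X) ≤ Real.log x := by
      rw [← Real.log_mul hM0.ne' hX0.ne', ← Real.log_pow]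
      exact Real.log_le_log (by positivity) (by exact_mod_cast hlow)
    have hsucc : d * Real.log ↑(X + 1) ≤ d * (Real.log 2 + Real.log X) := by
      rw [← Real.log_mul two_ne_zero hX0.ne']
      gcongr
      exact_mod_cast (by omega : X + 1 ≤ 2 * X)
    have hflow := (abs_le.1 (h X hX)).1
    have hf0 := hf hlow
    rw [abs_le]
    constructor <;> nlinarith [abs_nonneg (f 0), mul_nonneg d.cast_nonneg hlogM]

theorem exists_abs_sum_log_div_absNorm_sub_log_le (K : Type*) [Field K] [NumberField K] :
    ∃ C : ℝ, ∀ x : ℕ, 1 ≤ x →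
      |∑ 𝔭 ∈ primesLe K x, Real.log (Ideal.absNorm 𝔭) * (Ideal.absNorm 𝔭 : ℝ)⁻¹ -
        Real.log x| ≤ C := by
  obtain ⟨M, hM, C, hC⟩ := exists_abs_sum_log_div_absNorm_pow_sub_le K
  refine exists_abs_sub_log_le_of_pow
    (f := fun x => ∑ 𝔭 ∈ primesLe K x, Real.log (Ideal.absNorm 𝔭) * (Ideal.absNorm 𝔭 : ℝ)⁻¹)
    (fun x y hxy => ?_) Module.finrank_pos.ne' hM hC
  exact Finset.sum_le_sum_of_subset_of_nonneg (primesLe_mono hxy) fun 𝔭 _ _ =>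
    mul_nonneg (log_absNorm_nonneg 𝔭) (by positivity)

variable (K) in
/-- The number of ideals of norm `p`; for `p` prime, these are the primes of degree one
above `p`. -/
noncomputable def degOne (p : ℕ) : ℕ := Nat.card {𝔭 : Ideal (𝓞 K) // Ideal.absNorm 𝔭 = p}

open Classical in
lemma card_filter_absNorm_eq {p x : ℕ} (hp : p.Prime) (hpx : p ≤ x) :
    ((primesLe K x).filter (Ideal.absNorm · = p)).card = degOne K p := by
  refine (Nat.subtype_card _ fun 𝔭 => ?_).symm
  rw [Finset.mem_filter, mem_primesLe]
  refine ⟨fun h => h.2, fun h => ⟨⟨?_, ?_, h.le.trans hpx⟩, h⟩⟩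
  · exact Ideal.isPrime_of_irreducible_absNorm (h ▸ hp)
  · rintro rfl
    exact hp.ne_zero (by rw [← h, Ideal.absNorm_bot])

open Classical in
lemma sum_degOne_mul (x : ℕ) (f : ℕ → ℝ) :
    ∑ p ∈ Nat.primesLE x, degOne K p * f p =
      ∑ 𝔭 ∈ primesLe K x with (Ideal.absNorm 𝔭).Prime, f (Ideal.absNorm 𝔭) := by
  have hmaps : ∀ 𝔭 ∈ (primesLe K x).filter fun 𝔭 => (Ideal.absNorm 𝔭).Prime,
      Ideal.absNorm 𝔭 ∈ Nat.primesLE x := fun 𝔭 h𝔭 =>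
    have ⟨hx, hp⟩ := Finset.mem_filter.1 h𝔭
    Nat.mem_primesLE.2 ⟨(mem_primesLe.1 hx).2.2, hp⟩
  rw [← Finset.sum_fiberwise_of_maps_to hmaps]
  refine Finset.sum_congr rfl fun p hp => ?_
  obtain ⟨hpx, hp⟩ := Nat.mem_primesLE.1 hp
  rw [Finset.filter_filter, Finset.sum_congr rfl fun 𝔭 h𝔭 => by
    rw [(Finset.mem_filter.1 h𝔭).2.2], Finset.sum_const, nsmul_eq_mul,
    ← card_filter_absNorm_eq hp hpx]
  congr 3
  exact Finset.filter_congr fun 𝔭 _ => ⟨fun h => ⟨h ▸ hp, h⟩, And.right⟩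

theorem exists_abs_sum_degOne_mul_log_div_sub_log_le (K : Type*) [Field K] [NumberField K] :
    ∃ C : ℝ, ∀ x : ℕ, 1 ≤ x →
      |∑ p ∈ Nat.primesLE x, degOne K p * (Real.log p * (p : ℝ)⁻¹) - Real.log x| ≤ C := by
  classical
  obtain ⟨C₁, hC₁⟩ := exists_abs_sum_log_div_absNorm_sub_log_le K
  obtain ⟨C₂, -, hC₂⟩ := exists_sum_log_div_absNorm_not_prime_le K
  refine ⟨C₁ + C₂, fun x hx => ?_⟩
  have hsplit := Finset.sum_filter_add_sum_filter_not (primesLe K x)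
    (fun 𝔭 => (Ideal.absNorm 𝔭).Prime)
    (fun 𝔭 => Real.log (Ideal.absNorm 𝔭) * (Ideal.absNorm 𝔭 : ℝ)⁻¹)
  have hnonneg : 0 ≤ ∑ 𝔭 ∈ primesLe K x with ¬ (Ideal.absNorm 𝔭).Prime,
      Real.log (Ideal.absNorm 𝔭) * (Ideal.absNorm 𝔭 : ℝ)⁻¹ :=
    Finset.sum_nonneg fun 𝔭 _ => mul_nonneg (log_absNorm_nonneg 𝔭) (by positivity)
  have hall := abs_le.1 (hC₁ x hx)
  have hnot := hC₂ x
  rw [sum_degOne_mul x fun p => Real.log p * (p : ℝ)⁻¹, abs_le]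
  constructor <;> linarith

end Mertens

/-! ### Frobenius elements and primes of degree one -/

section ResidueField

open scoped Pointwise

lemma exists_int_sub_mem {R : Type*} [CommRing R] {Q : Ideal R} [Q.IsMaximal] {p : ℕ}
    (hp : p.Prime) (hpQ : (p : R) ∈ Q) {y : R} (hy : y ^ p - y ∈ Q) : ∃ m : ℤ, y - m ∈ Q := by
  let _ : Field (R ⧸ Q) := Ideal.Quotient.field Q
  have : Fact p.Prime := ⟨hp⟩
  have : CharP (R ⧸ Q) p := (CharP.charP_iff_prime_eq_zero hp).2 <| by
    rwa [← map_natCast (Ideal.Quotient.mk Q), Ideal.Quotient.eq_zero_iff_mem]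
  have hfixed : (Ideal.Quotient.mk Q y) ^ p = Ideal.Quotient.mk Q y := by
    rwa [← map_pow, Ideal.Quotient.eq]
  rw [← Subfield.mem_bot_iff_pow_eq_self, mem_bot_iff_intCast p] at hfixed
  obtain ⟨m, hm⟩ := hfixed
  exact ⟨m, by rw [← Ideal.Quotient.eq, ← hm, map_intCast]⟩

variable {K : Type*} [Field K] [NumberField K]

lemma ne_bot_of_natCast_mem {Q : Ideal (𝓞 K)} {p : ℕ} (hp : p.Prime) (hpQ : (p : 𝓞 K) ∈ Q) :
    Q ≠ ⊥ := by
  rintro rfl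
  exact hp.ne_zero (Nat.cast_eq_zero.1 (Ideal.mem_bot.1 hpQ))

lemma isMaximal_of_natCast_mem {Q : Ideal (𝓞 K)} [hQ : Q.IsPrime] {p : ℕ} (hp : p.Prime)
    (hpQ : (p : 𝓞 K) ∈ Q) : Q.IsMaximal :=
  hQ.isMaximal (ne_bot_of_natCast_mem hp hpQ)

lemma absNorm_eq_iff_forall_pow_sub_mem {𝔭 : Ideal (𝓞 K)} [𝔭.IsPrime] {p : ℕ} (hp : p.Prime)
    (hp𝔭 : (p : 𝓞 K) ∈ 𝔭) : Ideal.absNorm 𝔭 = p ↔ ∀ y, y ^ p - y ∈ 𝔭 := by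
  have := isMaximal_of_natCast_mem hp hp𝔭
  let _ : Field (𝓞 K ⧸ 𝔭) := Ideal.Quotient.field 𝔭
  have : Finite (𝓞 K ⧸ 𝔭) := Ideal.finiteQuotientOfFreeOfNeBot 𝔭 (ne_bot_of_natCast_mem hp hp𝔭)
  have := Fintype.ofFinite (𝓞 K ⧸ 𝔭)
  rw [Ideal.absNorm_apply, Submodule.cardQuot_apply]
  constructor
  · intro h y
    rw [← Ideal.Quotient.eq, map_pow, ← h, Nat.card_eq_fintype_card]
    exact FiniteField.pow_card _
  · intro h
    have : Fact p.Prime := ⟨hp⟩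
    have : CharP (𝓞 K ⧸ 𝔭) p := (CharP.charP_iff_prime_eq_zero hp).2 <| by
      rwa [← map_natCast (Ideal.Quotient.mk 𝔭), Ideal.Quotient.eq_zero_iff_mem]
    have hbij : Function.Bijective (ZMod.castHom (dvd_refl p) (𝓞 K ⧸ 𝔭)) := by
      refine ⟨RingHom.injective _, fun y => ?_⟩
      obtain ⟨y, rfl⟩ := Ideal.Quotient.mk_surjective y
      obtain ⟨m, hm⟩ := exists_int_sub_mem hp hp𝔭 (h y)
      exact ⟨m, by rw [map_intCast, Ideal.Quotient.eq.2 hm, map_intCast]⟩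
    rw [← Nat.card_eq_of_bijective _ hbij, Nat.card_zmod]

lemma natCast_mem_of_absNorm_eq {𝔭 : Ideal (𝓞 K)} {p : ℕ} (h : Ideal.absNorm 𝔭 = p) :
    (p : 𝓞 K) ∈ 𝔭 :=
  h ▸ Ideal.absNorm_mem 𝔭

lemma eventually_notMem {a : 𝓞 K} (ha : a ≠ 0) : ∀ᶠ p : ℕ in Filter.atTop, p.Prime →
    ∀ Q : Ideal (𝓞 K), Q.IsPrime → (p : 𝓞 K) ∈ Q → a ∉ Q := by
  have hN : Ideal.absNorm (Ideal.span {a}) ≠ 0 :=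
    absNorm_ne_zero (mt Ideal.span_singleton_eq_bot.1 ha)
  filter_upwards [Filter.eventually_gt_atTop (Ideal.absNorm (Ideal.span {a}))] with p hpN hp Q
    hQ hpQ haQ
  have hmem : ((Ideal.absNorm (Ideal.span {a}) : ℕ) : 𝓞 K) ∈ Q :=
    (Ideal.span_singleton_le_iff_mem Q).2 haQ (Ideal.absNorm_mem _)
  have hcop : IsCoprime (p : 𝓞 K) (Ideal.absNorm (Ideal.span {a}) : ℕ) :=
    ((Nat.Prime.coprime_iff_not_dvd hp).2 (Nat.not_dvd_of_pos_of_lt hN.bot_lt hpN)).cast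
  obtain ⟨u, v, huv⟩ := hcop
  exact hQ.ne_top ((Ideal.eq_top_iff_one Q).2
    (huv ▸ Q.add_mem (Q.mul_mem_left u hpQ) (Q.mul_mem_left v hmem)))

lemma under_int_eq_span {R : Type*} [CommRing R] {Q : Ideal R} [hQ : Q.IsPrime] {p : ℕ}
    (hp : p.Prime) (hpQ : (p : R) ∈ Q) : Q.under ℤ = Ideal.span {(p : ℤ)} := by
  have hmax : (Ideal.span {(p : ℤ)}).IsMaximal :=
    PrincipalIdealRing.isMaximal_of_irreducible (Nat.prime_iff_prime_int.1 hp).irreducible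
  refine (hmax.eq_of_le (hQ.under ℤ).ne_top ?_).symm
  rw [Ideal.span_singleton_le_iff_mem, Ideal.under_def, Ideal.mem_comap, map_natCast]
  exact hpQ

end ResidueField

section Frobenius

variable {L : Type*} [Field L] [NumberField L]

lemma smul_sub_pow_mem {Q : Ideal (𝓞 L)} [Q.IsPrime] {φ : L ≃ₐ[ℚ] L} {p : ℕ} (hp : p.Prime)
    (hpQ : (p : 𝓞 L) ∈ Q) (hφ : IsArithFrobAt ℤ φ Q) (x : 𝓞 L) : φ • x - x ^ p ∈ Q := by
  have h := hφ x
  rwa [under_int_eq_span hp hpQ, Int.card_ideal_quot] at h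

variable (L) in
lemma exists_isArithFrobAt [IsGalois ℚ L] {p : ℕ} (hp : p.Prime) :
    ∃ Q : Ideal (𝓞 L), Q.IsPrime ∧ (p : 𝓞 L) ∈ Q ∧ ∃ φ : L ≃ₐ[ℚ] L, IsArithFrobAt ℤ φ Q := by
  have hmax : (Ideal.span {(p : ℤ)}).IsMaximal :=
    PrincipalIdealRing.isMaximal_of_irreducible (Nat.prime_iff_prime_int.1 hp).irreducible
  obtain ⟨Q, hQ, hQp⟩ := Ideal.exists_maximal_ideal_liesOver_of_isIntegral (S := 𝓞 L)
    (Ideal.span {(p : ℤ)})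
  have hpQ : (p : 𝓞 L) ∈ Q := by
    have : (p : ℤ) ∈ Q.under ℤ := hQp.over ▸ Ideal.mem_span_singleton_self _
    simpa only [Ideal.under_def, Ideal.mem_comap, map_natCast] using this
  have := Ideal.finiteQuotientOfFreeOfNeBot Q (ne_bot_of_natCast_mem hp hpQ)
  exact ⟨Q, hQ.isPrime, hpQ, IsArithFrobAt.exists_of_isInvariant ℤ (L ≃ₐ[ℚ] L) Q⟩

/-- Distinct Galois conjugates of `θ` stay distinct modulo `Q`, so that a Frobenius element at `Q`
is determined on them by its action modulo `Q`. -/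
def SeparatesConjugates (Q : Ideal (𝓞 L)) (θ : 𝓞 L) : Prop :=
  ∀ g h : L ≃ₐ[ℚ] L, g • θ - h • θ ∈ Q → g • θ = h • θ

lemma eventually_separatesConjugates (θ : 𝓞 L) : ∀ᶠ p : ℕ in Filter.atTop, p.Prime →
    ∀ Q : Ideal (𝓞 L), Q.IsPrime → (p : 𝓞 L) ∈ Q → SeparatesConjugates Q θ := by
  have hpair : ∀ g h : L ≃ₐ[ℚ] L, ∀ᶠ p : ℕ in Filter.atTop, p.Prime →
      ∀ Q : Ideal (𝓞 L), Q.IsPrime → (p : 𝓞 L) ∈ Q → g • θ - h • θ ∈ Q → g • θ = h • θ := by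
    intro g h
    by_cases hgh : g • θ = h • θ
    · exact Filter.Eventually.of_forall fun _ _ _ _ _ _ => hgh
    · filter_upwards [eventually_notMem (sub_ne_zero.2 hgh)] with p hsep hp Q hQ hpQ hmem
      exact absurd hmem (hsep hp Q hQ hpQ)
  filter_upwards [Filter.eventually_all.2 fun g => Filter.eventually_all.2 (hpair g)]
    with p hsep hp Q hQ hpQ g h
  exact hsep g h hp Q hQ hpQ

variable (U : Subgroup (L ≃ₐ[ℚ] L))

lemma smul_algebraMap_fixedField {u : L ≃ₐ[ℚ] L} (hu : u ∈ U)
    (y : 𝓞 (IntermediateField.fixedField U)) :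
    u • algebraMap (𝓞 (IntermediateField.fixedField U)) (𝓞 L) y = algebraMap _ _ y :=
  NumberField.RingOfIntegers.ext <|
    (IntermediateField.mem_fixedField_iff U _).1 (y : IntermediateField.fixedField U).2 u hu

lemma exists_integral_generator_fixedField :
    ∃ θ : 𝓞 (IntermediateField.fixedField U), ∀ g : L ≃ₐ[ℚ] L,
      g • algebraMap (𝓞 (IntermediateField.fixedField U)) (𝓞 L) θ = algebraMap _ _ θ → g ∈ U := by
  obtain ⟨α, hα⟩ := Field.exists_primitive_element ℚ (IntermediateField.fixedField U)
  have halg : IsAlgebraic ℤ α :=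
    (IsFractionRing.isAlgebraic_iff ℤ ℚ _).2 (Algebra.IsAlgebraic.isAlgebraic α)
  obtain ⟨c, hc, hcα⟩ := halg.exists_integral_multiple
  refine ⟨⟨c • α, hcα⟩, fun g hg => ?_⟩
  have hgα : g (α : L) = α := by
    have h : g (c • (α : L)) = c • (α : L) := congrArg (fun z : 𝓞 L => (z : L)) hg
    rw [map_zsmul] at h
    exact smul_right_injective L hc h
  have hgen : IntermediateField.adjoin ℚ {(α : L)} = IntermediateField.fixedField U := by
    rw [← IntermediateField.lift_adjoin_simple]
    exact (congrArg IntermediateField.lift hα).trans (IntermediateField.lift_top _ _)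
  have hle : IntermediateField.fixedField U ≤
      IntermediateField.fixedField (Subgroup.zpowers g) := by
    rw [← hgen, IntermediateField.adjoin_simple_le_iff, IntermediateField.mem_fixedField_iff]
    intro f hf
    have hstab : Subgroup.zpowers g ≤ MulAction.stabilizer (L ≃ₐ[ℚ] L) (α : L) :=
      Subgroup.zpowers_le.2 hgα
    exact hstab hf
  rw [IntermediateField.le_iff_le, IntermediateField.fixingSubgroup_fixedField] at hle
  exact hle (Subgroup.mem_zpowers g)

/-- The prime of the fixed field of `U` lying below the conjugate `x⁻¹ • Q`, described without
conjugating `Q`. -/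
noncomputable def conjUnder (Q : Ideal (𝓞 L)) (x : L ≃ₐ[ℚ] L) :
    Ideal (𝓞 (IntermediateField.fixedField U)) :=
  Q.comap ((MulSemiringAction.toRingHom (L ≃ₐ[ℚ] L) (𝓞 L) x).comp (algebraMap _ (𝓞 L)))

variable {U} {Q : Ideal (𝓞 L)}

lemma mem_conjUnder {x : L ≃ₐ[ℚ] L} {y : 𝓞 (IntermediateField.fixedField U)} :
    y ∈ conjUnder U Q x ↔ x • algebraMap (𝓞 (IntermediateField.fixedField U)) (𝓞 L) y ∈ Q :=
  Iff.rfl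

lemma smul_sub_intCast_mem {x : L ≃ₐ[ℚ] L} {y : 𝓞 (IntermediateField.fixedField U)} {m : ℤ}
    (h : y - m ∈ conjUnder U Q x) : x • algebraMap _ (𝓞 L) y - m ∈ Q := by
  rw [conjUnder, Ideal.mem_comap, map_sub, map_intCast] at h
  exact h

lemma natCast_mem_conjUnder {p : ℕ} (hpQ : (p : 𝓞 L) ∈ Q) (x : L ≃ₐ[ℚ] L) :
    (p : 𝓞 (IntermediateField.fixedField U)) ∈ conjUnder U Q x := by
  rwa [conjUnder, Ideal.mem_comap, map_natCast]

variable [Q.IsPrime] {p : ℕ}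

instance isPrime_conjUnder (x : L ≃ₐ[ℚ] L) : (conjUnder U Q x).IsPrime :=
  Ideal.comap_isPrime _ _

lemma exists_conjUnder_eq [IsGalois ℚ L] (hp : p.Prime) (hpQ : (p : 𝓞 L) ∈ Q)
    {𝔭 : Ideal (𝓞 (IntermediateField.fixedField U))} (h𝔭 : Ideal.absNorm 𝔭 = p) :
    ∃ x, conjUnder U Q x = 𝔭 := by
  have hprime : 𝔭.IsPrime := Ideal.isPrime_of_irreducible_absNorm (h𝔭 ▸ hp)
  have hmax := isMaximal_of_natCast_mem hp (natCast_mem_of_absNorm_eq h𝔭)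
  obtain ⟨Q', hQ', hQ'𝔭⟩ := Ideal.exists_maximal_ideal_liesOver_of_isIntegral (S := 𝓞 L) 𝔭
  have hpQ' : (p : 𝓞 L) ∈ Q' := by
    have h := hQ'𝔭.over ▸ natCast_mem_of_absNorm_eq h𝔭
    rwa [Ideal.under_def, Ideal.mem_comap, map_natCast] at h
  have := hQ'.isPrime
  obtain ⟨g, rfl⟩ := Algebra.IsInvariant.exists_smul_of_under_eq ℤ (𝓞 L) (L ≃ₐ[ℚ] L) Q Q'
    (by rw [under_int_eq_span hp hpQ, under_int_eq_span hp hpQ'])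
  refine ⟨g⁻¹, ?_⟩
  ext y
  rw [hQ'𝔭.over, Ideal.under_def, Ideal.mem_comap, Ideal.mem_pointwise_smul_iff_inv_smul_mem,
    mem_conjUnder]

variable {θ : 𝓞 (IntermediateField.fixedField U)}

lemma absNorm_conjUnder_eq_iff (hp : p.Prime) (hpQ : (p : 𝓞 L) ∈ Q)
    (hsep : SeparatesConjugates Q (algebraMap _ (𝓞 L) θ))
    (hθ : ∀ g : L ≃ₐ[ℚ] L, g • algebraMap _ (𝓞 L) θ = algebraMap _ _ θ → g ∈ U)
    {φ : L ≃ₐ[ℚ] L} (hφ : IsArithFrobAt ℤ φ Q) (x : L ≃ₐ[ℚ] L) :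
    Ideal.absNorm (conjUnder U Q x) = p ↔ x⁻¹ * φ * x ∈ U := by
  rw [absNorm_eq_iff_forall_pow_sub_mem hp (natCast_mem_conjUnder hpQ x)]
  simp only [mem_conjUnder, map_sub, map_pow, smul_sub, smul_pow']
  constructor
  · intro h
    have hmem := Q.add_mem (smul_sub_pow_mem hp hpQ hφ (x • algebraMap _ (𝓞 L) θ)) (h θ)
    rw [sub_add_sub_cancel, ← mul_smul] at hmem
    apply hθ
    rw [mul_assoc, mul_smul, hsep _ _ hmem, inv_smul_smul]
  · intro hx y
    have hfix : φ • x • algebraMap _ (𝓞 L) y = x • algebraMap _ (𝓞 L) y := by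
      rw [← inv_smul_eq_iff, ← mul_smul, ← mul_smul, smul_algebraMap_fixedField U hx]
    have hmem := smul_sub_pow_mem hp hpQ hφ (x • algebraMap _ (𝓞 L) y)
    rw [hfix] at hmem
    rwa [← neg_mem_iff, neg_sub]

lemma conjUnder_eq_iff (hp : p.Prime) (hpQ : (p : 𝓞 L) ∈ Q)
    (hsep : SeparatesConjugates Q (algebraMap _ (𝓞 L) θ))
    (hθ : ∀ g : L ≃ₐ[ℚ] L, g • algebraMap _ (𝓞 L) θ = algebraMap _ _ θ → g ∈ U)
    {x y : L ≃ₐ[ℚ] L} (hx : Ideal.absNorm (conjUnder U Q x) = p) :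
    conjUnder U Q x = conjUnder U Q y ↔ x⁻¹ * y ∈ U := by
  have hpx := natCast_mem_conjUnder (U := U) hpQ x
  constructor
  · intro hxy
    have := isMaximal_of_natCast_mem hp hpx
    obtain ⟨m, hm⟩ := exists_int_sub_mem hp hpx
      ((absNorm_eq_iff_forall_pow_sub_mem hp hpx).1 hx θ)
    have hmem := Q.sub_mem (smul_sub_intCast_mem (hxy ▸ hm)) (smul_sub_intCast_mem hm)
    rw [sub_sub_sub_cancel_right] at hmem
    apply hθ
    rw [mul_smul, hsep _ _ hmem, inv_smul_smul]
  · intro hxy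
    ext z
    rw [mem_conjUnder, mem_conjUnder, ← mul_inv_cancel_left x y, mul_smul x,
      smul_algebraMap_fixedField U hxy]

lemma card_mul_card_eq_card_preimage {G α : Type*} [Group G] (U : Subgroup G) {f : G → α}
    {T : Set α} (hT : T ⊆ Set.range f) (hf : ∀ x y, f x ∈ T → (f x = f y ↔ x⁻¹ * y ∈ U)) :
    Nat.card T * Nat.card U = Nat.card (f ⁻¹' T) := by
  choose s hs using fun t : T => hT t.2
  have hsT : ∀ t, f (s t) ∈ T := fun t => (hs t).symm ▸ t.2
  have hmul : ∀ (t : T) (u : U), f (s t * u) = t := fun t u =>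
    ((hf _ _ (hsT t)).2 (by rw [inv_mul_cancel_left]; exact u.2)).symm.trans (hs t)
  have hmem : ∀ x : f ⁻¹' T, (s ⟨f x, x.2⟩)⁻¹ * x ∈ U := fun x =>
    (hf _ _ (hsT _)).1 (hs ⟨f x, x.2⟩)
  rw [← Nat.card_prod]
  refine Nat.card_congr
    { toFun a := ⟨s a.1 * a.2, by rw [Set.mem_preimage, hmul]; exact a.1.2⟩
      invFun x := ⟨⟨f x, x.2⟩, ⟨_, hmem x⟩⟩
      left_inv := fun ⟨t, u⟩ => ?_
      right_inv := fun x => Subtype.ext (mul_inv_cancel_left _ _) }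
  have ht : (⟨f (s t * u), by rw [hmul]; exact t.2⟩ : T) = t := Subtype.ext (hmul t u)
  refine Prod.ext ht (Subtype.ext ?_)
  simp only [ht, inv_mul_cancel_left]

theorem eventually_degOne_mul_card [IsGalois ℚ L] (U : Subgroup (L ≃ₐ[ℚ] L)) :
    ∀ᶠ p : ℕ in Filter.atTop, p.Prime → ∀ (Q : Ideal (𝓞 L)) (φ : L ≃ₐ[ℚ] L), Q.IsPrime →
      (p : 𝓞 L) ∈ Q → IsArithFrobAt ℤ φ Q →
      degOne (IntermediateField.fixedField U) p * Nat.card U =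
        Nat.card {x : L ≃ₐ[ℚ] L // x⁻¹ * φ * x ∈ U} := by
  obtain ⟨θ, hθ⟩ := exists_integral_generator_fixedField U
  filter_upwards [eventually_separatesConjugates (algebraMap _ (𝓞 L) θ)] with p hsep hp Q φ hQ
    hpQ hφ
  have hsep := hsep hp Q hQ hpQ
  refine (card_mul_card_eq_card_preimage U (f := conjUnder U Q) (T := {𝔭 | Ideal.absNorm 𝔭 = p})
    (fun 𝔭 h𝔭 => exists_conjUnder_eq hp hpQ h𝔭)
    fun x y hx => conjUnder_eq_iff hp hpQ hsep hθ hx).trans ?_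
  exact Nat.card_congr (Equiv.subtypeEquivRight (absNorm_conjUnder_eq_iff hp hpQ hsep hθ hφ))

end Frobenius

/-! ### Prime divisors of a polynomial -/

section PrimeDivisors

lemma dvd_eval_scaleRoots_of_padicValRat_pos {P : ℤ[X]} {p : ℕ} (hp : p.Prime) {t : ℚ}
    (ht : 0 < padicValRat p (aeval t P)) : (p : ℤ) ∣ (P.scaleRoots t.den).eval t.num := by
  have : Fact p.Prime := ⟨hp⟩
  have hnum : (p : ℤ) ∣ (aeval t P).num := by
    by_contra hndvd
    rw [padicValRat, padicValInt.eq_zero_of_not_dvd hndvd] at ht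
    lia
  have hden : ¬ (p : ℤ) ∣ (aeval t P).den := fun hd =>
    hp.not_dvd_one <| (aeval t P).reduced ▸
      Nat.dvd_gcd (Int.natCast_dvd.1 hnum) (Int.natCast_dvd_natCast.1 hd)
  have hscale := scaleRoots_eval₂_mul (Int.castRingHom ℚ) t (t.den : ℤ) (p := P)
  rw [eq_intCast, Int.cast_natCast, Rat.den_mul_eq_num, ← eq_intCast (Int.castRingHom ℚ),
    eval₂_hom, ← algebraMap_int_eq, ← aeval_def] at hscale
  have hmul : (P.scaleRoots t.den).eval t.num * (aeval t P).den =
      t.den ^ P.natDegree * (aeval t P).num := by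
    have h := congrArg (· * ((aeval t P).den : ℚ)) hscale
    simp only [mul_assoc, Rat.mul_den_eq_num, eq_intCast] at h
    exact_mod_cast h
  exact ((Nat.prime_iff_prime_int.1 hp).dvd_or_dvd
    (hmul ▸ hnum.mul_left _)).resolve_right hden

lemma exists_dvd_eval_of_dvd_eval_scaleRoots {P : ℤ[X]} {p : ℕ} (hp : p.Prime)
    (hc : ¬ (p : ℤ) ∣ P.leadingCoeff) {a b : ℤ} (hab : IsCoprime a b)
    (h : (p : ℤ) ∣ (P.scaleRoots b).eval a) : ∃ m : ℤ, (p : ℤ) ∣ P.eval m := by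
  have : Fact p.Prime := ⟨hp⟩
  let f := Int.castRingHom (ZMod p)
  have hf : ∀ k : ℤ, f k = 0 ↔ (p : ℤ) ∣ k := fun k => ZMod.intCast_zmod_eq_zero_iff_dvd k p
  have hfc : f P.leadingCoeff ≠ 0 := mt (hf _).1 hc
  have hscale : ((P.map f).scaleRoots (f b)).eval (f a) = 0 := by
    rw [← map_scaleRoots _ _ _ hfc, eval_map, eval₂_hom, (hf _).2 h]
  have hb : f b ≠ 0 := by
    intro hb
    rw [hb, scaleRoots_zero, eval_smul, eval_pow, eval_X, smul_eq_mul,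
      leadingCoeff_map_of_leadingCoeff_ne_zero f hfc] at hscale
    have ha : f a = 0 := eq_zero_of_pow_eq_zero ((mul_eq_zero.1 hscale).resolve_left hfc)
    obtain ⟨u, v, huv⟩ := hab.map f
    rw [ha, hb, mul_zero, mul_zero, add_zero] at huv
    exact zero_ne_one huv
  obtain ⟨m, hm⟩ := ZMod.intCast_surjective (f a / f b)
  refine ⟨m, (hf _).1 ?_⟩
  rw [← mul_div_cancel₀ (f a) hb, scaleRoots_eval_mul, ← hm, ← eq_intCast f m, eval_map,
    eval₂_hom] at hscale
  exact (mul_eq_zero.1 hscale).resolve_left (pow_ne_zero _ hb)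

lemma exists_int_dvd_eval_of_isPrimeDivisorOf {P : ℤ[X]} {p : ℕ} (hp : p.Prime)
    (hc : ¬ (p : ℤ) ∣ P.leadingCoeff) (h : IsPrimeDivisorOf p P) :
    ∃ m : ℤ, (p : ℤ) ∣ P.eval m := by
  obtain ⟨t, -, ht⟩ := h
  exact exists_dvd_eval_of_dvd_eval_scaleRoots hp hc
    t.isCoprime_num_den (dvd_eval_scaleRoots_of_padicValRat_pos hp ht)

lemma leadingCoeff_mul_eval₂_integralNormalization {R S : Type*} [CommRing R] [CommRing S]
    (f : R →+* S) (P : R[X]) (x : S) :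
    f P.leadingCoeff * P.integralNormalization.eval₂ f (f P.leadingCoeff * x) =
      f P.leadingCoeff ^ P.natDegree * P.eval₂ f x := by
  rw [← scaleRoots_eval₂_mul, ← integralNormalization_mul_C_leadingCoeff, eval₂_mul, eval₂_C,
    mul_comm]

lemma splits_map_integralNormalization {R F : Type*} [CommRing R] [Field F] {f : R →+* F}
    {P : R[X]} (hc : f P.leadingCoeff ≠ 0) (h : (P.map f).Splits) :
    (P.integralNormalization.map f).Splits := by
  have hscale := h.scaleRoots (f P.leadingCoeff)
  rw [← map_scaleRoots _ _ _ hc, ← integralNormalization_mul_C_leadingCoeff,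
    Polynomial.map_mul, map_C] at hscale
  refine hscale.of_dvd ?_ (Dvd.intro _ rfl)
  rw [← map_C, ← Polynomial.map_mul, integralNormalization_mul_C_leadingCoeff,
    map_scaleRoots _ _ _ hc]
  refine scaleRoots_ne_zero (fun h0 => hc ?_) _
  rw [← coeff_natDegree, ← coeff_map, h0, coeff_zero]

lemma splits_map_ringOfIntegers {L : Type*} [Field L] {N : ℤ[X]} (hN : N.Monic)
    (h : (N.map (algebraMap ℤ L)).Splits) : (N.map (algebraMap ℤ (𝓞 L))).Splits := by
  rw [IsScalarTower.algebraMap_eq ℤ (𝓞 L) L, ← Polynomial.map_map] at h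
  refine h.of_splits_map_of_injective (FaithfulSMul.algebraMap_injective (𝓞 L) L) fun a ha => ?_
  rw [Polynomial.map_map, ← IsScalarTower.algebraMap_eq] at ha
  exact ⟨⟨a, N, hN, (mem_aroots'.1 ha).2⟩, rfl⟩

lemma exists_aeval_eq_zero_sub_mem {R : Type*} [CommRing R] [IsDomain R] {N : ℤ[X]}
    (hN : N.Monic) (h : (N.map (algebraMap ℤ R)).Splits) {Q : Ideal R} [hQ : Q.IsPrime] {m : ℤ}
    (hm : ((N.eval m : ℤ) : R) ∈ Q) : ∃ b : R, aeval b N = 0 ∧ (m : R) - b ∈ Q := by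
  have heval := h.eval_eq_prod_roots_of_monic (hN.map _) (m : R)
  rw [eval_map, ← eq_intCast (algebraMap ℤ R), eval₂_hom, eq_intCast] at heval
  rw [heval, hQ.multiset_prod_mem_iff_exists_mem] at hm
  obtain ⟨_, hmem, hbQ⟩ := hm
  obtain ⟨b, hb, rfl⟩ := Multiset.mem_map.1 hmem
  exact ⟨b, (mem_aroots'.1 hb).2, by simpa only [eq_intCast] using hbQ⟩

variable {L : Type*} [Field L] [NumberField L]

lemma smul_sub_self_mem {Q : Ideal (𝓞 L)} [Q.IsPrime] {φ : L ≃ₐ[ℚ] L} {p : ℕ} (hp : p.Prime)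
    (hpQ : (p : 𝓞 L) ∈ Q) (hφ : IsArithFrobAt ℤ φ Q) {m : ℤ} {b : 𝓞 L} (h : (m : 𝓞 L) - b ∈ Q) :
    φ • b - b ∈ Q := by
  have hpow := Q.add_mem (smul_sub_pow_mem hp hpQ hφ (m - b)) (Ideal.pow_mem_of_mem Q h p hp.pos)
  have hm : φ • (m : 𝓞 L) = m :=
    map_intCast (MulSemiringAction.toRingHom (L ≃ₐ[ℚ] L) (𝓞 L) φ) m
  rw [sub_add_cancel, smul_sub, hm] at hpow
  simpa only [sub_sub_sub_cancel_left] using Q.sub_mem h hpow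

lemma eventually_exists_fixed_root_of_monic {N : ℤ[X]} (hN : N.Monic)
    (hsplit : (N.map (algebraMap ℤ L)).Splits) : ∀ᶠ p : ℕ in Filter.atTop, p.Prime →
      ∀ (Q : Ideal (𝓞 L)) (φ : L ≃ₐ[ℚ] L), Q.IsPrime → (p : 𝓞 L) ∈ Q → IsArithFrobAt ℤ φ Q →
      ∀ m : ℤ, (p : ℤ) ∣ N.eval m → ∃ b : L, aeval b N = 0 ∧ φ b = b := by
  have hfinite : {b : 𝓞 L | aeval b N = 0}.Finite :=
    (rootSet_finite N (𝓞 L)).subset fun b hb => mem_rootSet.2 ⟨hN.ne_zero, hb⟩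
  filter_upwards [(Filter.eventually_all_finite hfinite).2
    fun b _ => eventually_separatesConjugates b] with p hsep hp Q φ hQ hpQ hφ m hm
  have hmQ : ((N.eval m : ℤ) : 𝓞 L) ∈ Q := by
    obtain ⟨k, hk⟩ := hm
    rw [hk, Int.cast_mul, Int.cast_natCast]
    exact Q.mul_mem_right _ hpQ
  obtain ⟨b, hb, hmb⟩ :=
    exists_aeval_eq_zero_sub_mem hN (splits_map_ringOfIntegers hN hsplit) hmQ
  have hfix : φ • b = b := by
    simpa only [one_smul] using hsep b hb hp Q hQ hpQ φ 1
      (by simpa only [one_smul] using smul_sub_self_mem hp hpQ hφ hmb)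
  exact ⟨b, by rw [aeval_algebraMap_apply, hb, map_zero], congrArg (fun z : 𝓞 L => (z : L)) hfix⟩

theorem eventually_exists_fixed_root {P : ℤ[X]} (hP : P ≠ 0)
    (hsplit : (P.map (algebraMap ℤ L)).Splits) : ∀ᶠ p : ℕ in Filter.atTop, p.Prime →
      IsPrimeDivisorOf p P → ∀ (Q : Ideal (𝓞 L)) (φ : L ≃ₐ[ℚ] L), Q.IsPrime → (p : 𝓞 L) ∈ Q →
      IsArithFrobAt ℤ φ Q → ∃ z : L, aeval z P = 0 ∧ φ z = z := by
  have hc : P.leadingCoeff ≠ 0 := leadingCoeff_ne_zero.2 hP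
  have hcL : algebraMap ℤ L P.leadingCoeff ≠ 0 := by
    rwa [eq_intCast, Int.cast_ne_zero]
  filter_upwards [eventually_exists_fixed_root_of_monic (monic_integralNormalization hP)
    (splits_map_integralNormalization hcL hsplit),
    Filter.eventually_gt_atTop P.leadingCoeff.natAbs] with p hfixed hpc hp hdiv Q φ hQ hpQ hφ
  have hpc : ¬ (p : ℤ) ∣ P.leadingCoeff := fun h =>
    hpc.not_ge (Nat.le_of_dvd (Int.natAbs_pos.2 hc) (Int.natCast_dvd.1 h))
  obtain ⟨m, hm⟩ := exists_int_dvd_eval_of_isPrimeDivisorOf hp hpc hdiv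
  have hN := leadingCoeff_mul_eval₂_integralNormalization (RingHom.id ℤ) P m
  have hdvd : (p : ℤ) ∣ P.integralNormalization.eval (P.leadingCoeff * m) :=
    ((Nat.prime_iff_prime_int.1 hp).dvd_or_dvd (hN ▸ hm.mul_left _)).resolve_left hpc
  obtain ⟨b, hb, hφb⟩ := hfixed hp Q φ hQ hpQ hφ _ hdvd
  refine ⟨b / algebraMap ℤ L P.leadingCoeff, ?_, ?_⟩
  · have hz := leadingCoeff_mul_eval₂_integralNormalization (algebraMap ℤ L) P
      (b / algebraMap ℤ L P.leadingCoeff)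
    rw [mul_div_cancel₀ _ hcL, ← aeval_def, hb, mul_zero] at hz
    exact (mul_eq_zero.1 hz.symm).resolve_left (pow_ne_zero _ hcL)
  · rw [map_div₀, hφb, eq_intCast, map_intCast]

end PrimeDivisors

/-! ### Möbius inversion over a cyclic group -/

section Moebius

open scoped ArithmeticFunction.Moebius

lemma sum_moebius_divisors (n : ℕ) :
    ∑ d ∈ n.divisors, (μ d : ℝ) = if n = 1 then 1 else 0 := by
  rw [← ArithmeticFunction.one_apply, ← ArithmeticFunction.coe_moebius_mul_coe_zeta,
    ArithmeticFunction.coe_mul_zeta_apply]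
  simp only [ArithmeticFunction.intCoe_apply]

lemma sum_moebius_div_divisors {n : ℕ} (hn : 0 < n) :
    ∑ d ∈ n.divisors, (μ d : ℝ) / d = n.totient / n := by
  have hinv := (ArithmeticFunction.sum_eq_iff_sum_mul_moebius_eq (R := ℝ)
    (f := fun k => (k.totient : ℝ)) (g := fun k => (k : ℝ))).1
    (fun k _ => by exact_mod_cast Nat.sum_totient k) n hn
  rw [Nat.sum_divisorsAntidiagonal (fun a b => (μ a : ℝ) * (b : ℝ))] at hinv
  rw [← hinv, Finset.sum_div]
  refine Finset.sum_congr rfl fun d hd => ?_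
  have hdn := Nat.dvd_of_mem_divisors hd
  have hd0 : (d : ℝ) ≠ 0 := Nat.cast_ne_zero.2 (Nat.pos_of_dvd_of_pos hdn hn).ne'
  have hn0 : (n : ℝ) ≠ 0 := Nat.cast_ne_zero.2 hn.ne'
  rw [Nat.cast_div hdn hd0]
  field_simp

variable {G : Type*} [Group G]

lemma pow_mem_zpowers_pow_iff {σ : G} {d k : ℕ} (hd : d ∣ orderOf σ) :
    σ ^ k ∈ Subgroup.zpowers (σ ^ d) ↔ d ∣ k := by
  constructor
  · intro h
    obtain ⟨j, hj⟩ := Subgroup.mem_zpowers_iff.1 h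
    rw [← zpow_natCast, ← zpow_natCast, ← zpow_mul, zpow_eq_zpow_iff_modEq] at hj
    have hmod := (hj.of_dvd (Int.natCast_dvd_natCast.2 hd)).dvd
    exact Int.natCast_dvd_natCast.1 ((dvd_sub_left (dvd_mul_right _ j)).1 hmod)
  · rintro ⟨j, rfl⟩
    rw [pow_mul]
    exact Subgroup.npow_mem_zpowers _ _

lemma zpowers_pow_eq_zpowers_iff {σ : G} {k : ℕ} :
    Subgroup.zpowers (σ ^ k) = Subgroup.zpowers σ ↔ (orderOf σ).gcd k = 1 := by
  rw [Nat.gcd_comm, ← mem_zpowers_pow_iff]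
  constructor
  · intro h
    exact h ▸ Subgroup.mem_zpowers σ
  · intro h
    exact le_antisymm (Subgroup.zpowers_le.2 (Subgroup.npow_mem_zpowers σ k))
      (Subgroup.zpowers_le.2 h)

open Classical in
lemma sum_moebius_indicator_zpowers_pow [Finite G] (σ h : G) :
    ∑ d ∈ (orderOf σ).divisors, (μ d : ℝ) * (if h ∈ Subgroup.zpowers (σ ^ d) then 1 else 0) =
      if Subgroup.zpowers h = Subgroup.zpowers σ then 1 else 0 := by
  by_cases hh : h ∈ Subgroup.zpowers σ
  · obtain ⟨k, rfl⟩ := mem_powers_iff_mem_zpowers.2 hh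
    have hdiv : ((orderOf σ).gcd k).divisors = {d ∈ (orderOf σ).divisors | d ∣ k} := by
      ext d
      simp only [Nat.mem_divisors, Finset.mem_filter, Nat.dvd_gcd_iff, ne_eq,
        Nat.gcd_eq_zero_iff, (orderOf_pos σ).ne', false_and, not_false_eq_true, and_true]
    simp only [zpowers_pow_eq_zpowers_iff]
    rw [← sum_moebius_divisors, hdiv, Finset.sum_filter]
    refine Finset.sum_congr rfl fun d hd => ?_
    simp only [pow_mem_zpowers_pow_iff (Nat.dvd_of_mem_divisors hd), mul_ite, mul_one, mul_zero]
  · have hne : Subgroup.zpowers h ≠ Subgroup.zpowers σ := fun heq =>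
      hh (heq ▸ Subgroup.mem_zpowers h)
    rw [if_neg hne]
    refine Finset.sum_eq_zero fun d _ => ?_
    rw [if_neg, mul_zero]
    exact fun hd => hh (Subgroup.zpowers_le.2 (Subgroup.npow_mem_zpowers σ d) hd)

end Moebius

section Weight

open scoped ArithmeticFunction.Moebius

variable {L : Type*} [Field L] [NumberField L]

/-- The Möbius combination, over the subgroups `⟨σ ^ d⟩` of `⟨σ⟩`, of the numbers of degree one
primes above `p` in their fixed fields. For large `p` it counts, up to the factor `orderOf σ`, the
conjugates of a Frobenius element at `p` that generate `⟨σ⟩`. -/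
noncomputable def frobeniusWeight (σ : L ≃ₐ[ℚ] L) (p : ℕ) : ℝ :=
  ∑ d ∈ (orderOf σ).divisors, (μ d : ℝ) / d *
    degOne (IntermediateField.fixedField (Subgroup.zpowers (σ ^ d))) p

lemma eventually_frobeniusWeight_mul_orderOf [IsGalois ℚ L] (σ : L ≃ₐ[ℚ] L) :
    ∀ᶠ p : ℕ in Filter.atTop, p.Prime → ∀ (Q : Ideal (𝓞 L)) (φ : L ≃ₐ[ℚ] L), Q.IsPrime →
      (p : 𝓞 L) ∈ Q → IsArithFrobAt ℤ φ Q → frobeniusWeight σ p * orderOf σ =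
        Nat.card {x : L ≃ₐ[ℚ] L // Subgroup.zpowers (x⁻¹ * φ * x) = Subgroup.zpowers σ} := by
  classical
  filter_upwards [(Filter.eventually_all_finset (orderOf σ).divisors).2
    fun d _ => eventually_degOne_mul_card (Subgroup.zpowers (σ ^ d))] with p hdeg hp Q φ hQ hpQ hφ
  have := Fintype.ofFinite (L ≃ₐ[ℚ] L)
  have hterm : ∀ d ∈ (orderOf σ).divisors, (μ d : ℝ) / d *
      degOne (IntermediateField.fixedField (Subgroup.zpowers (σ ^ d))) p * orderOf σ =
      ∑ x : L ≃ₐ[ℚ] L,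
        (μ d : ℝ) * (if x⁻¹ * φ * x ∈ Subgroup.zpowers (σ ^ d) then 1 else 0) := by
    intro d hd
    have hdn := Nat.dvd_of_mem_divisors hd
    have hd0 : d ≠ 0 := (Nat.pos_of_mem_divisors hd).ne'
    have hcard := hdeg d hd hp Q φ hQ hpQ hφ
    rw [Nat.card_zpowers, orderOf_pow_of_dvd hd0 hdn, Nat.card_eq_fintype_card,
      Fintype.card_subtype] at hcard
    rw [← Finset.mul_sum, Finset.sum_boole, ← hcard, Nat.cast_mul,
      Nat.cast_div hdn (Nat.cast_ne_zero.2 hd0)]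
    ring
  rw [frobeniusWeight, Finset.sum_mul, Finset.sum_congr rfl hterm, Finset.sum_comm]
  simp only [sum_moebius_indicator_zpowers_pow]
  rw [Finset.sum_boole, Nat.card_eq_fintype_card, Fintype.card_subtype]

lemma exists_abs_sum_frobeniusWeight_sub_le (σ : L ≃ₐ[ℚ] L) : ∃ c > (0 : ℝ), ∃ C : ℝ,
    ∀ x : ℕ, 1 ≤ x → |∑ p ∈ Nat.primesLE x, frobeniusWeight σ p * (Real.log p * (p : ℝ)⁻¹) -
      c * Real.log x| ≤ C := by
  choose C hC using fun d : ℕ => exists_abs_sum_degOne_mul_log_div_sub_log_le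
    (IntermediateField.fixedField (Subgroup.zpowers (σ ^ d)))
  have hpos := orderOf_pos σ
  refine ⟨(orderOf σ).totient / orderOf σ,
    div_pos (Nat.cast_pos.2 (Nat.totient_pos.2 hpos)) (Nat.cast_pos.2 hpos),
    ∑ d ∈ (orderOf σ).divisors, |(μ d : ℝ) / d| * C d, fun x hx => ?_⟩
  have hcomb : ∑ p ∈ Nat.primesLE x, frobeniusWeight σ p * (Real.log p * (p : ℝ)⁻¹) -
      (∑ d ∈ (orderOf σ).divisors, (μ d : ℝ) / d) * Real.log x =
      ∑ d ∈ (orderOf σ).divisors, (μ d : ℝ) / d * (∑ p ∈ Nat.primesLE x,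
        (degOne (IntermediateField.fixedField (Subgroup.zpowers (σ ^ d))) p : ℝ) *
          (Real.log p * (p : ℝ)⁻¹) - Real.log x) := by
    simp only [frobeniusWeight, Finset.sum_mul, mul_sub, Finset.sum_sub_distrib, Finset.mul_sum]
    rw [Finset.sum_comm]
    simp only [mul_assoc]
  rw [← sum_moebius_div_divisors hpos, hcomb]
  refine (Finset.abs_sum_le_sum_abs _ _).trans (Finset.sum_le_sum fun d _ => ?_)
  rw [abs_mul]
  exact mul_le_mul_of_nonneg_left (hC d x hx) (abs_nonneg _)

end Weight

/-! ### From Mertens' theorem to positive density -/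

section Density

variable {c C : ℝ}

lemma exists_one_le_sum_window {f : ℕ → ℝ} (hc : 0 < c)
    (hf : ∀ x : ℕ, 1 ≤ x → |∑ p ∈ Nat.primesLE x, f p - c * Real.log x| ≤ C) :
    ∃ A : ℕ, 0 < A ∧
      ∀ x : ℕ, A ≤ x → 1 ≤ ∑ p ∈ Nat.primesLE x \ Nat.primesLE (x / A), f p := by
  have htendsto : Filter.Tendsto (fun A : ℕ => c * Real.log A) Filter.atTop Filter.atTop :=
    (Real.tendsto_log_atTop.comp tendsto_natCast_atTop_atTop).const_mul_atTop hc
  obtain ⟨A, hA, hA0⟩ := ((htendsto.eventually_ge_atTop (2 * C + 1)).and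
    (Filter.eventually_gt_atTop 0)).exists
  refine ⟨A, hA0, fun x hx => ?_⟩
  have hy : 0 < x / A := Nat.div_pos hx hA0
  have hyx : x / A ≤ x := Nat.div_le_self x A
  have hlog : Real.log (x / A : ℕ) + Real.log A ≤ Real.log x := by
    rw [← Real.log_mul (Nat.cast_ne_zero.2 hy.ne') (Nat.cast_ne_zero.2 hA0.ne')]
    exact Real.log_le_log (by positivity) (by exact_mod_cast Nat.div_mul_le_self x A)
  have hsub : Nat.primesLE (x / A) ⊆ Nat.primesLE x := fun p hp =>
    have ⟨hpy, hp⟩ := Nat.mem_primesLE.1 hp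
    Nat.mem_primesLE.2 ⟨hpy.trans hyx, hp⟩
  have hsplit := Finset.sum_sdiff hsub (f := f)
  have hx := (abs_le.1 (hf x (hy.trans_le hyx))).1
  have hy := (abs_le.1 (hf (x / A) hy)).2
  have hclog := mul_le_mul_of_nonneg_left hlog hc.le
  linarith

lemma log_mul_inv_le_of_div_lt {A p x : ℕ} (hA : 0 < A) (hpx : p ≤ x) (hp : x / A < p) :
    Real.log p * (p : ℝ)⁻¹ ≤ A * Real.log x / x := by
  have hp0 : 0 < p := Nat.zero_lt_of_lt hp
  have hx0 : 0 < x := hp0.trans_le hpx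
  have hxp : (x : ℝ) ≤ A * p := by
    exact_mod_cast ((Nat.div_lt_iff_lt_mul hA).1 hp).le.trans_eq (mul_comm p A)
  rw [← div_eq_mul_inv, div_le_div_iff₀ (by positivity) (by positivity)]
  calc Real.log p * x ≤ Real.log x * (A * p) :=
        mul_le_mul (Real.log_le_log (by positivity) (by exact_mod_cast hpx)) hxp (by positivity)
          (Real.log_natCast_nonneg x)
    _ = A * Real.log x * p := by ring

open Classical in
lemma sum_window_le {S : Set ℕ} {w : ℕ → ℝ} {M : ℝ} (hM : 0 ≤ M) {A x : ℕ} (hA : 0 < A)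
    (hwM : ∀ p > x / A, p.Prime → w p ≤ M) (hwS : ∀ p > x / A, p.Prime → p ∉ S → w p = 0) :
    ∑ p ∈ Nat.primesLE x \ Nat.primesLE (x / A), w p * (Real.log p * (p : ℝ)⁻¹) ≤
      {p ∈ Nat.primesLE x | p ∈ S}.card * (M * (A * Real.log x / x)) := by
  have hbound : 0 ≤ M * (A * Real.log x / x) := by
    have := Real.log_natCast_nonneg x
    positivity
  calc _ ≤ ∑ p ∈ Nat.primesLE x \ Nat.primesLE (x / A),
        if p ∈ S then M * (A * Real.log x / x) else 0 := by
        refine Finset.sum_le_sum fun p hp => ?_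
        simp only [Finset.mem_sdiff, Nat.mem_primesLE, not_and'] at hp
        obtain ⟨⟨hpx, hp⟩, hpy⟩ := hp
        have hpy := not_le.1 (hpy hp)
        split_ifs with hpS
        · exact mul_le_mul (hwM p hpy hp) (log_mul_inv_le_of_div_lt hA hpx hpy)
            (mul_nonneg (Real.log_natCast_nonneg p) (by positivity)) hM
        · rw [hwS p hpy hp hpS, zero_mul]
    _ ≤ ∑ p ∈ Nat.primesLE x, if p ∈ S then M * (A * Real.log x / x) else 0 :=
        Finset.sum_le_sum_of_subset_of_nonneg Finset.sdiff_subset fun p _ _ =>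
          ite_nonneg hbound le_rfl
    _ = _ := by rw [← Finset.sum_filter, Finset.sum_const, nsmul_eq_mul]

lemma exists_primeCounting_le_mul_div_log :
    ∃ B > (0 : ℝ), ∀ᶠ x : ℕ in Filter.atTop, (Nat.primeCounting x : ℝ) ≤ B * (x / Real.log x) := by
  refine ⟨Real.log 4 + 1, by positivity, ?_⟩
  filter_upwards [tendsto_natCast_atTop_atTop.eventually
    (Chebyshev.eventually_primeCounting_le (ε := 1) one_pos)] with x hx
  rwa [Nat.floor_natCast, mul_div_assoc] at hx

-- By Mertens, the primes in `(x / A, x]` carry total mass at least `1`, and each of them carries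
-- at most `M * A * log x / x`.
theorem exists_mul_primeCounting_le_ncard {S : Set ℕ} {w : ℕ → ℝ} {M : ℝ} (hc : 0 < c)
    (hM : 0 < M) (hwM : ∀ᶠ p : ℕ in Filter.atTop, p.Prime → w p ≤ M)
    (hwS : ∀ᶠ p : ℕ in Filter.atTop, p.Prime → p ∉ S → w p = 0)
    (hw : ∀ x : ℕ, 1 ≤ x →
      |∑ p ∈ Nat.primesLE x, w p * (Real.log p * (p : ℝ)⁻¹) - c * Real.log x| ≤ C) :
    ∃ δ : ℝ, 0 < δ ∧ ∃ x₀ : ℕ, ∀ x : ℕ, x₀ ≤ x →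
      δ * (Nat.primeCounting x : ℝ) ≤ ({p : ℕ | p ≤ x ∧ p.Prime ∧ p ∈ S}.ncard : ℝ) := by
  classical
  obtain ⟨A, hA, hwindow⟩ := exists_one_le_sum_window hc hw
  obtain ⟨B, hB, hcheb⟩ := exists_primeCounting_le_mul_div_log
  obtain ⟨N, hN⟩ := Filter.eventually_atTop.1 (hwM.and hwS)
  have hev : ∀ᶠ x : ℕ in Filter.atTop, (B * (M * A))⁻¹ * (Nat.primeCounting x : ℝ) ≤
      ({p : ℕ | p ≤ x ∧ p.Prime ∧ p ∈ S}.ncard : ℝ) := by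
    filter_upwards [hcheb, Filter.eventually_ge_atTop A, Filter.eventually_ge_atTop (A * N),
      Filter.eventually_gt_atTop 1] with x hcheb hAx hNx hx1
    have hNy : N ≤ x / A := (Nat.le_div_iff_mul_le hA).2 (mul_comm A N ▸ hNx)
    have hmass := (hwindow x hAx).trans (sum_window_le hM.le hA
      (fun p hp => (hN p (hNy.trans hp.le)).1) fun p hp => (hN p (hNy.trans hp.le)).2)
    have hcard : {p : ℕ | p ≤ x ∧ p.Prime ∧ p ∈ S}.ncard =
        {p ∈ Nat.primesLE x | p ∈ S}.card := by
      rw [← Set.ncard_coe_finset, Finset.coe_filter]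
      simp only [Nat.mem_primesLE, and_assoc]
    have hx0 : (0 : ℝ) < x := Nat.cast_pos.2 (zero_lt_one.trans hx1)
    have hlog : 0 < Real.log x := Real.log_pos (Nat.one_lt_cast.2 hx1)
    rw [hcard, inv_mul_le_iff₀ (by positivity)]
    refine hcheb.trans ?_
    rw [mul_assoc B]
    refine mul_le_mul_of_nonneg_left ?_ hB.le
    rw [div_le_iff₀ hlog]
    calc (x : ℝ) = 1 * x := (one_mul _).symm
      _ ≤ {p ∈ Nat.primesLE x | p ∈ S}.card * (M * (A * Real.log x / x)) * x :=
        mul_le_mul_of_nonneg_right hmass hx0.le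
      _ = M * A * {p ∈ Nat.primesLE x | p ∈ S}.card * Real.log x := by field_simp
  exact ⟨_, by positivity, Filter.eventually_atTop.1 hev⟩

end Density

section SplittingField

variable {L : Type*} [Field L] [NumberField L]

lemma eventually_frobeniusWeight_le [IsGalois ℚ L] (σ : L ≃ₐ[ℚ] L) :
    ∀ᶠ p : ℕ in Filter.atTop, p.Prime → frobeniusWeight σ p ≤ Nat.card (L ≃ₐ[ℚ] L) := by
  filter_upwards [eventually_frobeniusWeight_mul_orderOf σ] with p hweight hp
  obtain ⟨Q, hQ, hpQ, φ, hφ⟩ := exists_isArithFrobAt L hp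
  have hcard := hweight hp Q φ hQ hpQ hφ
  have hle : frobeniusWeight σ p * orderOf σ ≤ Nat.card (L ≃ₐ[ℚ] L) :=
    hcard.trans_le (Nat.cast_le.2 (Finite.card_subtype_le _))
  have horder : (1 : ℝ) ≤ orderOf σ := Nat.one_le_cast.2 (orderOf_pos σ)
  have hnonneg : 0 ≤ frobeniusWeight σ p :=
    nonneg_of_mul_nonneg_left (hcard ▸ Nat.cast_nonneg _) (zero_lt_one.trans_le horder)
  exact (le_mul_of_one_le_right hnonneg horder).trans hle

-- If `φ` fixes a root `z` and `σ` is a power of `x⁻¹ * φ * x`, then `σ` fixes the root `x⁻¹ z`.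
lemma eventually_frobeniusWeight_eq_zero [IsGalois ℚ L] {P : ℤ[X]} (hP : P ≠ 0)
    (hsplit : (P.map (algebraMap ℤ L)).Splits) {σ : L ≃ₐ[ℚ] L}
    (hσ : ∀ z : L, aeval z P = 0 → σ z ≠ z) :
    ∀ᶠ p : ℕ in Filter.atTop, p.Prime → IsPrimeDivisorOf p P → frobeniusWeight σ p = 0 := by
  filter_upwards [eventually_frobeniusWeight_mul_orderOf σ, eventually_exists_fixed_root hP hsplit]
    with p hweight hroot hp hdiv
  obtain ⟨Q, hQ, hpQ, φ, hφ⟩ := exists_isArithFrobAt L hp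
  obtain ⟨z, hz, hφz⟩ := hroot hp hdiv Q φ hQ hpQ hφ
  have hempty : IsEmpty
      {x : L ≃ₐ[ℚ] L // Subgroup.zpowers (x⁻¹ * φ * x) = Subgroup.zpowers σ} := by
    refine ⟨fun ⟨x, hx⟩ => hσ (x⁻¹ z) ?_ ?_⟩
    · have h := aeval_algHom_apply ((x⁻¹ : L ≃ₐ[ℚ] L).toAlgHom.restrictScalars ℤ) z P
      rwa [hz, map_zero] at h
    · have hstab : x⁻¹ * φ * x ∈ MulAction.stabilizer (L ≃ₐ[ℚ] L) (x⁻¹ • z) := by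
        rw [MulAction.mem_stabilizer_iff, mul_smul, smul_inv_smul, mul_smul,
          AlgEquiv.smul_def φ, hφz]
      exact Subgroup.zpowers_le.2 hstab (hx ▸ Subgroup.mem_zpowers σ)
  have hzero := hweight hp Q φ hQ hpQ hφ
  rw [Nat.card_of_isEmpty, Nat.cast_zero] at hzero
  exact (mul_eq_zero.1 hzero).resolve_right (Nat.cast_ne_zero.2 (orderOf_pos σ).ne')

end SplittingField

section RationalPolynomial

variable (p : ℚ[X])

instance numberField_splittingField : NumberField p.SplittingField := {}

-- The `ℚ`-algebra structures from `SplittingField` and from characteristic zero agree only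
-- propositionally.
instance isGalois_splittingField : IsGalois ℚ p.SplittingField := by
  have : IsSplittingField ℚ p.SplittingField p := by
    convert IsSplittingField.splittingField p
    exact Subsingleton.elim _ _
  exact { to_normal := Normal.of_isSplittingField p }

end RationalPolynomial

lemma splits_map_splittingField (P : ℤ[X]) :
    (P.map (algebraMap ℤ (P.map (Int.castRingHom ℚ)).SplittingField)).Splits := by
  have h := SplittingField.splits (P.map (Int.castRingHom ℚ))
  rwa [Polynomial.map_map, RingHom.ext_int (RingHom.comp _ _) (algebraMap ℤ _)] at h

end FrobeniusDensity

theorem stmt11_general {L : Type*} [Field L] [NumberField L] [IsGalois ℚ L] {P : ℤ[X]}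
    (hsplit : (P.map (algebraMap ℤ L)).Splits) (σ : L ≃ₐ[ℚ] L)
    (hσ : ∀ z : L, aeval z P = 0 → σ z ≠ z) :
    ∃ δ : ℝ, 0 < δ ∧ ∃ x₀ : ℕ, ∀ x : ℕ, x₀ ≤ x →
      δ * (Nat.primeCounting x : ℝ) ≤
        ({p : ℕ | p ≤ x ∧ p.Prime ∧ ¬ IsPrimeDivisorOf p P}.ncard : ℝ) := by
  have hP : P ≠ 0 := fun h => hσ 0 (by rw [h, map_zero]) (map_zero σ)
  obtain ⟨c, hc, C, hC⟩ := FrobeniusDensity.exists_abs_sum_frobeniusWeight_sub_le σ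
  refine FrobeniusDensity.exists_mul_primeCounting_le_ncard
    (S := {p | ¬ IsPrimeDivisorOf p P}) hc (Nat.cast_pos.2 Nat.card_pos)
    (FrobeniusDensity.eventually_frobeniusWeight_le σ) ?_ hC
  filter_upwards [FrobeniusDensity.eventually_frobeniusWeight_eq_zero hP hsplit hσ]
    with p hweight hp hpS
  exact hweight hp (not_not.1 hpS)

theorem stmt11 (P : Polynomial ℤ) (hdeg : 0 < P.natDegree)
    (hsep : (P.map (Int.castRingHom ℚ)).Separable)
    (hσ : ∃ σ : (P.map (Int.castRingHom ℚ)).SplittingField ≃ₐ[ℚ]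
        (P.map (Int.castRingHom ℚ)).SplittingField,
      ∀ z ∈ P.rootSet (P.map (Int.castRingHom ℚ)).SplittingField, σ z ≠ z) :
    ∃ δ : ℝ, 0 < δ ∧ ∃ x₀ : ℕ, ∀ x : ℕ, x₀ ≤ x →
      δ * (Nat.primeCounting x : ℝ) ≤
        ({p : ℕ | p ≤ x ∧ p.Prime ∧ ¬ IsPrimeDivisorOf p P}.ncard : ℝ) := by
  obtain ⟨σ, hσ⟩ := hσ
  exact stmt11_general (FrobeniusDensity.splits_map_splittingField P) σ fun z hz =>
    hσ z (mem_rootSet.2 ⟨ne_zero_of_natDegree_gt hdeg, hz⟩)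
end

section
/- Let n ≥ 2 and N be integers with n dividing N, and let P = a_0 + a_1 T + ⋯ + a_N T^N ∈ ℤ[T] have degree N. Let p be a prime number such that p does not divide a_0, p does not divide a_N, and for every t₀ ∈ ℚ one has P(t₀) ≠ 0 and v_p(P(t₀)) ≤ 0, where v_p is the p-adic valuation on ℚ. Then for every n-free integer d divisible by p, the twisted superelliptic curve y^n = d·P(t) has no non-trivial ℚ-rational point: there exist no t, y ∈ ℚ with y ≠ 0 and y^n = d·P(t), and there exists no y ∈ ℚ with y ≠ 0 and y^n = d·a_N. -/
/-!
Let `v` be a valuation for which the coefficients of `P` are integral and `a_N` is a unit. If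
`v t > 1`, the leading term of `P(t)` dominates and `v (P(t)) = v t ^ N`; if `v t ≤ 1`, then
`v (P(t)) ≤ 1`, with equality by hypothesis. As `n ∣ N`, in both cases `v (P(t))` is the `n`-th
power of a nonzero value of `v`, and so is `v a_N = 1`. Hence `y ^ n = d * P(t)` and
`y ^ n = d * a_N` each force `v d` to be an `n`-th power as well, whereas `0 < v_p(d) < n` when `d`
is `n`-free and divisible by `p`.
-/

open Polynomial

/-- `d` is an `n`-free integer: `d ∉ {0,1}` and no `p^n` divides `d`. -/
def NFree (n : ℕ) (d : ℤ) : Prop :=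
  d ≠ 0 ∧ d ≠ 1 ∧ ∀ p : ℕ, p.Prime → ¬ ((p : ℤ) ^ n ∣ d)

section Valuation

variable {R A Γ₀ : Type*} [CommSemiring R] [Ring A] [Algebra R A]
  [LinearOrderedCommGroupWithZero Γ₀] (v : Valuation A Γ₀) {P : R[X]} {t : A}

theorem valuation_aeval_le_one (hcoeff : ∀ i, v (algebraMap R A (P.coeff i)) ≤ 1) (ht : v t ≤ 1) :
    v (aeval t P) ≤ 1 := by
  rw [aeval_eq_sum_range]
  refine v.map_sum_le fun i _ ↦ ?_
  rw [Algebra.smul_def, map_mul, map_pow]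
  exact mul_le_one' (hcoeff i) (pow_le_one' ht i)

theorem valuation_aeval_eq_pow_natDegree (hcoeff : ∀ i, v (algebraMap R A (P.coeff i)) ≤ 1)
    (hlead : v (algebraMap R A P.leadingCoeff) = 1) (ht : 1 < v t) :
    v (aeval t P) = v t ^ P.natDegree := by
  have hterm (i : ℕ) : v (P.coeff i • t ^ i) = v (algebraMap R A (P.coeff i)) * v t ^ i := by
    rw [Algebra.smul_def, map_mul, map_pow]
  have htop : v (P.coeff P.natDegree • t ^ P.natDegree) = v t ^ P.natDegree := by
    rw [hterm, coeff_natDegree, hlead, one_mul]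
  rw [aeval_eq_sum_range, v.map_sum_eq_of_lt (Finset.self_mem_range_succ P.natDegree), htop]
  intro i hi
  have hi' : i < P.natDegree := by grind
  calc v (P.coeff i • t ^ i) ≤ v t ^ i := by
        rw [hterm]
        exact mul_le_of_le_one_left' (hcoeff i)
    _ < v t ^ P.natDegree := pow_lt_pow_right₀ ht hi'
    _ = v (P.coeff P.natDegree • t ^ P.natDegree) := htop.symm

theorem exists_valuation_aeval_eq_pow {n : ℕ} (hn : n ∣ P.natDegree)
    (hcoeff : ∀ i, v (algebraMap R A (P.coeff i)) ≤ 1)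
    (hlead : v (algebraMap R A P.leadingCoeff) = 1) (ht : v t ≤ 1 → 1 ≤ v (aeval t P)) :
    ∃ x : A, v x ≠ 0 ∧ v (aeval t P) = v x ^ n := by
  rcases le_or_gt (v t) 1 with hle | hlt
  · refine ⟨1, by simp, ?_⟩
    rw [map_one, one_pow]
    exact (valuation_aeval_le_one v hcoeff hle).antisymm (ht hle)
  · obtain ⟨k, hk⟩ := hn
    refine ⟨t ^ k, ?_, ?_⟩
    · rw [map_pow]
      exact pow_ne_zero k (zero_lt_one.trans hlt).ne'
    · rw [valuation_aeval_eq_pow_natDegree v hcoeff hlead hlt, hk, map_pow, ← pow_mul, mul_comm]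

end Valuation

theorem pow_ne_mul_of_valuation_eq_pow {K Γ₀ : Type*} [Field K] [LinearOrderedCommGroupWithZero Γ₀]
    (v : Valuation K Γ₀) {n : ℕ} {d u x : K} (hd : ∀ z, v z ^ n ≠ v d) (hx : v x ≠ 0)
    (hu : v u = v x ^ n) (y : K) : y ^ n ≠ d * u := by
  intro h
  apply hd (y / x)
  rw [map_div₀, div_pow, div_eq_iff (pow_ne_zero n hx), ← map_pow, h, map_mul, hu]

theorem stmt12_general {R K Γ₀ : Type*} [CommSemiring R] [Field K] [Algebra R K]
    [LinearOrderedCommGroupWithZero Γ₀] (v : Valuation K Γ₀) {n : ℕ} {P : R[X]}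
    (hn : n ∣ P.natDegree) (hcoeff : ∀ i, v (algebraMap R K (P.coeff i)) ≤ 1)
    (hlead : v (algebraMap R K P.leadingCoeff) = 1)
    (hP : ∀ t : K, v t ≤ 1 → 1 ≤ v (aeval t P)) {d : K} (hd : ∀ x, v x ^ n ≠ v d) :
    (∀ t y : K, y ^ n ≠ d * aeval t P) ∧
      ∀ y : K, y ^ n ≠ d * algebraMap R K P.leadingCoeff := by
  constructor
  · intro t
    obtain ⟨x, hx, hPx⟩ := exists_valuation_aeval_eq_pow v hn hcoeff hlead (hP t)
    exact pow_ne_mul_of_valuation_eq_pow v hd hx hPx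
  · exact pow_ne_mul_of_valuation_eq_pow v hd (x := 1) (by simp) (by simpa using hlead)

section Padic

open WithZero

variable {p : ℕ} [Fact p.Prime]

theorem padicValuation_eq_exp {x : ℚ} (hx : x ≠ 0) :
    Rat.padicValuation p x = exp (-padicValRat p x) := by
  simp [Rat.padicValuation, hx]

theorem one_le_padicValuation_iff {x : ℚ} (hx : x ≠ 0) :
    1 ≤ Rat.padicValuation p x ↔ padicValRat p x ≤ 0 := by
  rw [padicValuation_eq_exp hx, ← exp_zero, exp_le_exp, neg_nonneg]

theorem padicValuation_pow_ne {n : ℕ} {d : ℚ} (hd : ¬ (n : ℤ) ∣ padicValRat p d) (x : ℚ) :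
    Rat.padicValuation p x ^ n ≠ Rat.padicValuation p d := by
  have hd0 : d ≠ 0 := by
    rintro rfl
    simp at hd
  intro h
  rw [← map_pow] at h
  have hx : x ^ n ≠ 0 := by
    rwa [← (Rat.padicValuation p).ne_zero_iff, h, Valuation.ne_zero_iff]
  rw [padicValuation_eq_exp hx, padicValuation_eq_exp hd0, exp_inj, neg_inj, padicValRat.pow] at h
  exact hd (Dvd.intro _ h)

theorem NFree.not_dvd_padicValRat {n : ℕ} {d : ℤ} (hd : NFree n d) (hpd : (p : ℤ) ∣ d) :
    ¬ (n : ℤ) ∣ padicValRat p d := by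
  obtain ⟨hd0, -, hfree⟩ := hd
  have hpos : 0 < padicValInt p d :=
    ((padicValInt_dvd_iff 1 d).1 (by simpa using hpd)).resolve_left hd0
  have hlt : padicValInt p d < n := by
    by_contra! hle
    exact hfree p Fact.out ((padicValInt_dvd_iff n d).2 (Or.inr hle))
  rw [padicValRat.of_int, Int.natCast_dvd_natCast]
  exact Nat.not_dvd_of_pos_of_lt hpos hlt

end Padic

theorem stmt12 (n N : ℕ) (hn : 2 ≤ n) (hdvd : n ∣ N)
    (P : Polynomial ℤ) (hdeg : P.natDegree = N) (hP0 : P ≠ 0)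
    (p : ℕ) (hp : p.Prime)
    (h0 : ¬ (p : ℤ) ∣ P.coeff 0) (hlead : ¬ (p : ℤ) ∣ P.leadingCoeff)
    (hval : ∀ t₀ : ℚ, Polynomial.aeval t₀ P ≠ 0 ∧
      padicValRat p (Polynomial.aeval t₀ P) ≤ 0)
    (d : ℤ) (hd : NFree n d) (hpd : (p : ℤ) ∣ d) :
    (¬ ∃ t y : ℚ, y ≠ 0 ∧ y ^ n = (d : ℚ) * Polynomial.aeval t P) ∧
    (¬ ∃ y : ℚ, y ≠ 0 ∧ y ^ n = (d : ℚ) * (P.leadingCoeff : ℚ)) := by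
  have := Fact.mk hp
  obtain ⟨haff, hinf⟩ := stmt12_general (Rat.padicValuation p) (hdeg ▸ hdvd)
    (fun i ↦ Int.padicValuation_le_one p (P.coeff i)) (Int.padicValuation_eq_one_iff.2 hlead)
    (fun t _ ↦ (one_le_padicValuation_iff (hval t).1).2 (hval t).2)
    (padicValuation_pow_ne (hd.not_dvd_padicValRat hpd))
  exact ⟨fun ⟨t, y, _, h⟩ ↦ haff t y h, fun ⟨y, _, h⟩ ↦ hinf y h⟩
end
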